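/- Let k be an algebraically closed field, S a polynomial ring over k, and I ⊆ S a homogeneous ideal of height 3 generated by n quadrics. If I has an associated prime p with height(p) = 3 and Hilbert–Samuel multiplicity e(S/p) = 3, then pd_S(S/I) ≤ n+7. -/

import Mathlib

open CategoryTheory Opposite

universe u

/-- The height of an ideal: the infimum of the heights (in the prime spectrum,
ordered by inclusion) of the primes containing it. -/
noncomputable def Ideal.heightENat {R : Type u} [CommRing R] (I : Ideal R) : ℕ∞ :=
  ⨅ (p : PrimeSpectrum R) (_ : I ≤ p.asIdeal), Order.height p

/-- The projective dimension of an `R`-module `M`: the least `n` such that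
`Ext^i(M, N) = 0` for all `i > n` and all modules `N` (and `⊤` if no such `n` exists). -/
noncomputable def projDim (R : Type u) [CommRing R] (M : Type u) [AddCommGroup M]
    [Module R M] : ℕ∞ :=
  sInf ((↑) '' {n : ℕ | ∀ i : ℕ, n < i → ∀ N : ModuleCat.{u} R,
    Subsingleton (((Ext R (ModuleCat.{u} R) i).obj (op (ModuleCat.of R M))).obj N)})

/-- The Hilbert function of the standard graded ring `S/J`, where
`S = k[x_1, ..., x_N]`: the `k`-dimension of the degree-`d` graded piece of `S/J`. -/
noncomputable def hilbertFunction (k : Type u) [Field k] {N : ℕ}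
    (J : Ideal (MvPolynomial (Fin N) k)) (d : ℕ) : ℕ :=
  Module.finrank k (Submodule.map (Ideal.Quotient.mkₐ k J).toLinearMap
    (MvPolynomial.homogeneousSubmodule (Fin N) k d))

open scoped Classical in
/-- The Hilbert–Samuel multiplicity `e(S/J)` of the graded ring `S/J`:
`(deg P)!` times the leading coefficient of the Hilbert polynomial `P` of `S/J`,
i.e. of the polynomial agreeing with the Hilbert function in all large degrees
(the degree of the Hilbert polynomial being `dim(S/J) - 1`). -/
noncomputable def hilbertSamuelMultiplicity (k : Type u) [Field k] {N : ℕ}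
    (J : Ideal (MvPolynomial (Fin N) k)) : ℚ :=
  if h : ∃ P : Polynomial ℚ, ∀ᶠ d : ℕ in Filter.atTop,
      (hilbertFunction k J d : ℚ) = P.eval (d : ℚ)
  then (h.choose.natDegree).factorial * h.choose.leadingCoeff
  else 0

set_option linter.all false
namespace PD3

section PD
open Polynomial TensorProduct

theorem ext_subsingleton {R : Type u} [CommRing R] (M : ModuleCat.{u} R) (d : ℕ)
    [HasProjectiveDimensionLE M d] (i : ℕ) (hi : d < i) (Y : ModuleCat.{u} R) :
    Subsingleton (((Ext R (ModuleCat.{u} R) i).obj (op M)).obj Y) := by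
  obtain ⟨j, rfl⟩ : ∃ j, i = j + 1 := ⟨i - 1, by omega⟩
  let P := projectiveResolution M
  suffices h : Limits.IsZero (((Ext R (ModuleCat.{u} R) (j+1)).obj (op M)).obj Y) from
    ModuleCat.subsingleton_of_isZero h
  refine Limits.IsZero.of_iso ?_ (P.isoExt (j+1) Y)
  rw [← HomologicalComplex.exactAt_iff_isZero_homology,
    HomologicalComplex.exactAt_iff' _ j (j+1) (j+2) (by simp) (by simp)]
  rw [ShortComplex.moduleCat_exact_iff]
  intro x hx
  have hx' : P.complex.d (j+2) (j+1) ≫ (show P.complex.X (j+1) ⟶ Y from x) = 0 := hx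
  have h0 : P.extMk (Y := Y) x (j+2) rfl hx' = 0 :=
    Abelian.Ext.eq_zero_of_hasProjectiveDimensionLT _ (d+1) (by omega)
  rw [P.extMk_eq_zero_iff x (j+2) rfl hx' j rfl] at h0
  obtain ⟨g, hg⟩ := h0
  exact ⟨g, hg⟩

theorem projDim_le {R : Type u} [CommRing R] (M : Type u) [AddCommGroup M] [Module R M] (d : ℕ)
    [HasProjectiveDimensionLE (ModuleCat.of R M) d] : projDim R M ≤ d := by
  apply sInf_le
  exact ⟨d, fun i hi N => ext_subsingleton _ d i hi N, rfl⟩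

theorem pd_baseChange {R S : Type u} [CommRing R] [CommRing S] [Algebra R S] [Module.Flat R S]
    (d : ℕ) (M : Type u) [AddCommGroup M] [Module R M]
    [h : HasProjectiveDimensionLE (ModuleCat.of R M) d] :
    HasProjectiveDimensionLE (ModuleCat.of S (S ⊗[R] M)) d := by
  induction d generalizing M with
  | zero =>
    rw [← projective_iff_hasProjectiveDimensionLE_zero, ← IsProjective.iff_projective] at h ⊢
    infer_instance
  | succ d ih =>
    obtain ⟨L, _, _, _, f, hf⟩ : ∃ (L : Type u) (_ : AddCommGroup L) (_ : Module R L)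
        (_ : Module.Free R L) (f : L →ₗ[R] M), Function.Surjective f :=
      ⟨M →₀ R, inferInstance, inferInstance, inferInstance, Finsupp.linearCombination R id,
        fun m => ⟨Finsupp.single m 1, by simp⟩⟩
    have e1 := LinearMap.shortExact_shortComplexKer hf
    have : HasProjectiveDimensionLE (ModuleCat.of R (LinearMap.ker f)) d :=
      (e1.hasProjectiveDimensionLT_X₃_iff d
        ((IsProjective.iff_projective (P := L)).1 inferInstance)).1 h
    have ih' := ih (LinearMap.ker f)
    let F := f.baseChange S
    have hF : Function.Surjective F := LinearMap.lTensor_surjective S hf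
    let G := (LinearMap.ker f).subtype.baseChange S
    have hG : Function.Injective G :=
      Module.Flat.lTensor_preserves_injective_linearMap (M := S) _ (Subtype.val_injective)
    have hex : Function.Exact G F := by
      have : Function.Exact (LinearMap.ker f).subtype f := LinearMap.exact_subtype_ker_map f
      have := lTensor_exact S this hf
      exact this
    let SC : ShortComplex (ModuleCat S) := ShortComplex.mk (ModuleCat.ofHom G) (ModuleCat.ofHom F)
      (ModuleCat.hom_ext (LinearMap.ext fun x => hex.apply_apply_eq_zero x))
    have hSC : SC.ShortExact := {
      exact := (ShortComplex.ShortExact.moduleCat_exact_iff_function_exact SC).2 hex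
      mono_f := (ModuleCat.mono_iff_injective _).2 hG
      epi_g := (ModuleCat.epi_iff_surjective _).2 hF }
    have h2 : Projective SC.X₂ := (IsProjective.iff_projective (P := S ⊗[R] L)).1 inferInstance
    exact (hSC.hasProjectiveDimensionLT_X₃_iff d h2).2 ih'

theorem charseq_inj {R : Type u} [CommRing R] (M : Type u) [AddCommGroup M] [Module R M]
    (φ : M →ₗ[R] M) :
    Function.Injective ((LinearMap.lsmul R[X] (R[X] ⊗[R] M) X) - (φ.baseChange R[X])) := by
  rw [← LinearMap.ker_eq_bot, LinearMap.ker_eq_bot']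
  intro z hz
  let e := PolynomialModule.polynomialTensorProductLEquivPolynomialModule R M
  have hsucc : ∀ (z : R[X] ⊗[R] M) (n : ℕ),
      (e ((LinearMap.lsmul R[X] (R[X] ⊗[R] M) X - φ.baseChange R[X]) z)).coeff (n+1)
        = (e z).coeff n - φ ((e z).coeff (n+1)) := by
    intro z n
    induction z with
    | zero => simp
    | add x y hx hy =>
      simp only [map_add, PolynomialModule.coeff_add, Finsupp.add_apply] at hx hy ⊢
      rw [hx, hy]; abel
    | tmul p m =>
      induction p using Polynomial.induction_on' with
      | add p q hp hq =>
        simp only [add_tmul, map_add, PolynomialModule.coeff_add, Finsupp.add_apply] at hp hq ⊢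
        rw [hp, hq]; abel
      | monomial j r =>
        have he : ∀ (j : ℕ) (r : R) (m : M),
            e (monomial j r ⊗ₜ m) = PolynomialModule.single R j (r • m) := by
          intro j r m
          simp [e, PolynomialModule.polynomialTensorProductLEquivPolynomialModule]
          rw [← map_smul]; rfl
        rw [LinearMap.sub_apply, LinearMap.lsmul_apply, LinearMap.baseChange_tmul, smul_tmul',
          smul_eq_mul, X_mul_monomial, map_sub, he, he, he]
        have hsub : ∀ (a b : PolynomialModule R M) (n : ℕ),
          (a - b).coeff n = a.coeff n - b.coeff n := fun _ _ _ => rfl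
        rw [hsub]
        simp [Finsupp.single_apply]
        split_ifs <;> simp
  have key : ∀ n, (e z).coeff n = φ ((e z).coeff (n+1)) := by
    intro n
    have := hsucc z n
    rw [hz] at this
    simp only [map_zero, PolynomialModule.coeff_zero, Finsupp.coe_zero, Pi.zero_apply] at this
    exact (sub_eq_zero.1 this.symm)
  have key2 : ∀ k n, (e z).coeff n = (φ ^ k) ((e z).coeff (n+k)) := by
    intro k
    induction k with
    | zero => intro n; simp
    | succ k ih => intro n; rw [ih n, key (n+k), pow_succ]; rfl
  have hez : e z = 0 := by
    rw [← PolynomialModule.coeff_eq_zero]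
    ext n
    obtain ⟨b, hb⟩ := (e z).coeff.support.bddAbove
    have : (e z).coeff (n + (b+1)) = 0 := by
      by_contra h
      have := hb (Finsupp.mem_support_iff.2 h)
      omega
    rw [key2 (b+1) n, this]; simp
  simpa using hez


theorem pd_polynomial {R : Type u} [CommRing R] (d : ℕ)
    (hR : ∀ (M : Type u) [AddCommGroup M] [Module R M],
      HasProjectiveDimensionLE (ModuleCat.of R M) d)
    (M : Type u) [AddCommGroup M] [Module R[X] M] :
    HasProjectiveDimensionLE (ModuleCat.of R[X] M) (d+1) := by
  letI : Module R M := Module.compHom M (algebraMap R R[X])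
  haveI : IsScalarTower R R[X] M := IsScalarTower.of_algebraMap_smul fun _ _ => rfl
  haveI : Module.Free R R[X] := inferInstance
  have h1 : HasProjectiveDimensionLE (ModuleCat.of R[X] (R[X] ⊗[R] M)) d :=
    have := hR M
    pd_baseChange (R := R) (S := R[X]) d M
  let φ : M →ₗ[R] M := (LinearMap.lsmul R[X] M X).restrictScalars R
  let G := (LinearMap.lsmul R[X] (R[X] ⊗[R] M) X) - (φ.baseChange R[X])
  let F : R[X] ⊗[R] M →ₗ[R[X]] M := LinearMap.liftBaseChange R[X] (LinearMap.id : M →ₗ[R] M)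
  have hG : Function.Injective G := charseq_inj M φ
  have hF : Function.Surjective F := fun m => ⟨1 ⊗ₜ m, by simp [F]⟩
  have hFG : ∀ z, F (G z) = 0 := by
    intro z
    induction z with
    | zero => simp
    | add x y hx hy => rw [map_add, map_add, hx, hy, add_zero]
    | tmul p m =>
      simp only [G, F, φ, LinearMap.sub_apply, LinearMap.lsmul_apply, LinearMap.baseChange_tmul,
        smul_tmul', map_sub, LinearMap.liftBaseChange_tmul, LinearMap.id_apply,
        LinearMap.restrictScalars_apply, smul_eq_mul, mul_smul]
      rw [smul_comm, sub_self]
  have hmod : ∀ z, ∃ w, z - 1 ⊗ₜ (F z) = G w := by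
    intro z
    induction z with
    | zero => exact ⟨0, by simp⟩
    | add x y hx hy =>
      obtain ⟨a, ha⟩ := hx
      obtain ⟨b, hb⟩ := hy
      refine ⟨a + b, ?_⟩
      rw [map_add, map_add, tmul_add, ← ha, ← hb]; abel
    | tmul p m =>
      induction p using Polynomial.induction_on generalizing m with
      | C r => exact ⟨0, by
          rw [map_zero, sub_eq_zero]
          simp only [F, LinearMap.liftBaseChange_tmul, LinearMap.id_apply]
          rw [C_eq_algebraMap, algebraMap_smul, tmul_smul, smul_tmul', Algebra.algebraMap_eq_smul_one]⟩
      | add p q hp hq =>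
        obtain ⟨a, ha⟩ := hp m
        obtain ⟨b, hb⟩ := hq m
        refine ⟨a + b, ?_⟩
        rw [add_tmul, map_add, map_add, tmul_add, ← ha, ← hb]; abel
      | monomial n r ih =>
        obtain ⟨a, ha⟩ := ih ((X : R[X]) • m)
        refine ⟨a + (C r * X ^ n) ⊗ₜ[R] m, ?_⟩
        rw [map_add, ← ha]
        simp only [G, F, φ, LinearMap.sub_apply, LinearMap.lsmul_apply, LinearMap.baseChange_tmul,
          smul_tmul', LinearMap.liftBaseChange_tmul, LinearMap.id_apply,
          LinearMap.restrictScalars_apply, smul_eq_mul]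
        rw [smul_smul, pow_succ, mul_assoc, show (X : R[X]) * (C r * X ^ n) = C r * (X ^ n * X) by ring]
        abel
  have hex : Function.Exact G F := by
    intro z
    constructor
    · intro hz
      obtain ⟨w, hw⟩ := hmod z
      rw [hz, tmul_zero, sub_zero] at hw
      exact ⟨w, hw.symm⟩
    · rintro ⟨w, rfl⟩
      exact hFG w
  let SC : ShortComplex (ModuleCat R[X]) := ShortComplex.mk (ModuleCat.ofHom G) (ModuleCat.ofHom F)
    (ModuleCat.hom_ext (LinearMap.ext fun x => hex.apply_apply_eq_zero x))
  have hSC : SC.ShortExact := {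
    exact := (ShortComplex.ShortExact.moduleCat_exact_iff_function_exact SC).2 hex
    mono_f := (ModuleCat.mono_iff_injective _).2 hG
    epi_g := (ModuleCat.epi_iff_surjective _).2 hF }
  exact hSC.hasProjectiveDimensionLT_X₃ (d+1) h1 (hasProjectiveDimensionLT_of_ge _ (d+1) _ (by omega))

theorem pd_ringEquiv {R S : Type u} [CommRing R] [CommRing S] (e : R ≃+* S) (d : ℕ)
    (hR : ∀ (M : Type u) [AddCommGroup M] [Module R M],
      HasProjectiveDimensionLE (ModuleCat.of R M) d)
    (M : Type u) [AddCommGroup M] [Module S M] :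
    HasProjectiveDimensionLE (ModuleCat.of S M) d := by
  letI : Module R M := Module.compHom M e.toRingHom
  letI := RingHomInvPair.of_ringEquiv e
  letI := RingHomInvPair.of_ringEquiv e.symm
  have := hR M
  let e' : (ModuleCat.of R M) ≃ₛₗ[RingHomClass.toRingHom e] (ModuleCat.of S M) :=
    { toFun := fun m => m
      invFun := fun m => m
      map_add' := fun _ _ => rfl
      map_smul' := fun _ _ => rfl
      left_inv := fun _ => rfl
      right_inv := fun _ => rfl }
  exact ModuleCat.hasProjectiveDimensionLE_of_semiLinearEquiv e e' d

theorem pd_field (k : Type u) [Field k] (m : ℕ) : ∀ (M : Type u) [AddCommGroup M]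
    [Module (MvPolynomial (Fin m) k) M],
      HasProjectiveDimensionLE (ModuleCat.of (MvPolynomial (Fin m) k) M) m := by
  induction m with
  | zero =>
    refine pd_ringEquiv (R := k) (MvPolynomial.isEmptyRingEquiv k (Fin 0)).symm 0 ?_
    intro M _ _
    rw [← projective_iff_hasProjectiveDimensionLE_zero, ← IsProjective.iff_projective]
    infer_instance
  | succ m ih =>
    exact pd_ringEquiv (MvPolynomial.finSuccEquiv k m).symm.toRingEquiv (m+1)
      (fun M _ _ => pd_polynomial m ih M)

/-- If the ideal `I` is extended from a polynomial ring in `m` variables along a flat map,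
then the projective dimension is at most `m`. -/
theorem projDim_map_le (k : Type u) [Field k] (m : ℕ) {S : Type u} [CommRing S]
    (g : MvPolynomial (Fin m) k →+* S) (hg : g.Flat) (J : Ideal (MvPolynomial (Fin m) k)) :
    projDim S (S ⧸ J.map g) ≤ m := by
  letI := g.toAlgebra
  haveI : Module.Flat (MvPolynomial (Fin m) k) S := hg
  have := pd_field k m (MvPolynomial (Fin m) k ⧸ J)
  have h1 := pd_baseChange (R := MvPolynomial (Fin m) k) (S := S) m (MvPolynomial (Fin m) k ⧸ J)
  have e : (S ⊗[MvPolynomial (Fin m) k] (MvPolynomial (Fin m) k ⧸ J)) ≃ₗ[S] (S ⧸ J.map g) :=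
    (Algebra.TensorProduct.quotIdealMapEquivTensorQuot S J).symm.toLinearEquiv
  have h2 : HasProjectiveDimensionLE (ModuleCat.of S (S ⧸ J.map g)) m :=
    ModuleCat.hasProjectiveDimensionLE_of_linearEquiv (M := ModuleCat.of S (S ⊗[MvPolynomial (Fin m) k] (MvPolynomial (Fin m) k ⧸ J)))
      (N := ModuleCat.of S (S ⧸ J.map g)) e m
  exact projDim_le _ m

end PD
end PD3


namespace PD3

section Coords
open MvPolynomial

theorem finrank_homog (k : Type u) [Field k] (σ : Type) [Fintype σ] [DecidableEq σ] (d : ℕ) :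
    Module.finrank k (homogeneousSubmodule σ k d) = (Fintype.card σ + d - 1).choose d := by
  have hs : {e : σ →₀ ℕ | e.degree = d} = ((Finset.univ : Finset σ).finsuppAntidiag d : Set (σ →₀ ℕ)) := by
    ext e
    simp [Finset.mem_finsuppAntidiag, Finsupp.degree_eq_sum]
  have h1 : Module.finrank k (homogeneousSubmodule σ k d) =
      Module.finrank k ({e : σ →₀ ℕ | e.degree = d} →₀ k) := by
    rw [homogeneousSubmodule_eq_finsupp_supported]
    exact LinearEquiv.finrank_eq (AddMonoidAlgebra.supportedEquivFinsupp {e : σ →₀ ℕ | e.degree = d})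
  rw [h1, hs]
  have := Finset.card_finsuppAntidiag_nat_eq_choose (s := (Finset.univ : Finset σ)) d
  simp only [Finset.coe_sort_coe, Module.finrank_finsupp_self, Fintype.card_coe]
  rw [this, Finset.card_univ]

instance homog_finite (k : Type u) [Field k] (σ : Type) [Finite σ] (d : ℕ) :
    FiniteDimensional k (homogeneousSubmodule σ k d) :=
  (Submodule.fg_iff_finiteDimensional _).1 (homogeneousSubmodule_fg σ k d)

/-- linear change of coordinates -/
theorem basis_coords (k : Type u) [Field k] (σ τ : Type)
    (b : Module.Basis τ k (homogeneousSubmodule σ k 1)) :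
    ∃ e : MvPolynomial τ k ≃ₐ[k] MvPolynomial σ k,
      (∀ j, e (X j) = (b j : MvPolynomial σ k)) ∧
      (∀ d f, (e f).IsHomogeneous d ↔ f.IsHomogeneous d) := by
  let ψ : MvPolynomial τ k →ₐ[k] MvPolynomial σ k := aeval fun j => (b j : MvPolynomial σ k)
  let ℓ : homogeneousSubmodule σ k 1 →ₗ[k] MvPolynomial τ k := b.constr k (fun j => X j)
  let χ : MvPolynomial σ k →ₐ[k] MvPolynomial τ k := aeval fun i => ℓ ⟨X i, isHomogeneous_X k i⟩
  have hχ : ∀ v : homogeneousSubmodule σ k 1, χ v = ℓ v := by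
    rintro ⟨v, hv⟩
    have hv' := hv
    rw [homogeneousSubmodule_one_eq_span_X] at hv'
    induction hv' using Submodule.span_induction with
    | mem x hx => obtain ⟨i, rfl⟩ := hx; simp [χ]
    | zero =>
      rw [map_zero]
      exact (map_zero ℓ).symm
    | add x y hx hy h1 h2 =>
      rw [← homogeneousSubmodule_one_eq_span_X] at hx hy
      have h1 := h1 hx
      have h2 := h2 hy
      simp only at h1 h2 ⊢
      rw [map_add, h1, h2, ← map_add]; rfl
    | smul a x hx h1 =>
      rw [← homogeneousSubmodule_one_eq_span_X] at hx
      have h1 := h1 hx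
      simp only at h1 ⊢
      rw [map_smul, h1, ← map_smul]; rfl
  have hψ : ∀ v : homogeneousSubmodule σ k 1, ψ (ℓ v) = v := by
    intro v
    have : ψ.toLinearMap ∘ₗ ℓ = (homogeneousSubmodule σ k 1).subtype := by
      apply b.ext
      intro j
      simp [ℓ, ψ]
    exact LinearMap.congr_fun this v
  have hℓ : ∀ v, (ℓ v).IsHomogeneous 1 := by
    intro v
    have : ℓ v ∈ homogeneousSubmodule τ k 1 := by
      have h2 : LinearMap.range ℓ ≤ homogeneousSubmodule τ k 1 := by
        rw [Module.Basis.constr_range, Submodule.span_le]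
        rintro _ ⟨j, rfl⟩
        exact isHomogeneous_X k j
      exact h2 ⟨v, rfl⟩
    exact this
  let e : MvPolynomial τ k ≃ₐ[k] MvPolynomial σ k := AlgEquiv.ofAlgHom ψ χ
    (by ext i : 1; simp only [χ, AlgHom.comp_apply, aeval_X, AlgHom.id_apply]; exact hψ _)
    (by
      ext j : 1
      simp only [AlgHom.comp_apply, AlgHom.id_apply]
      have : ψ (X j) = b j := by simp [ψ]
      rw [this, hχ]
      simp [ℓ])
  have hom1 : ∀ d f, f.IsHomogeneous d → (e f).IsHomogeneous d := by
    intro d f hf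
    have := hf.aeval (fun j => (b j : MvPolynomial σ k)) (n := 1) (fun j => (b j).2)
    rwa [one_mul] at this
  have hom2 : ∀ d f, f.IsHomogeneous d → (e.symm f).IsHomogeneous d := by
    intro d f hf
    have := hf.aeval (fun i => ℓ ⟨X i, isHomogeneous_X k i⟩) (n := 1) (fun j => hℓ _)
    rwa [one_mul] at this
  refine ⟨e, fun j => by simp [e, ψ], fun d f => ⟨fun h => ?_, hom1 d f⟩⟩
  simpa using hom2 d _ h

theorem exists_adapted_basis (k : Type u) [Field k] {V : Type*} [AddCommGroup V] [Module k V]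
    [FiniteDimensional k V] (L : Submodule k V) :
    ∃ (s M : ℕ) (b : Module.Basis (Fin s ⊕ Fin M) k V), s = Module.finrank k L ∧
      s + M = Module.finrank k V ∧ L = Submodule.span k (Set.range fun i => b (Sum.inl i)) := by
  obtain ⟨C, hC⟩ := Submodule.exists_isCompl L
  let bL := Module.finBasis k L
  let bC := Module.finBasis k C
  let b := (bL.prod bC).map (Submodule.prodEquivOfIsCompl L C hC)
  refine ⟨Module.finrank k L, Module.finrank k C, b, rfl,
    Submodule.finrank_add_eq_of_isCompl hC, ?_⟩
  have h1 : ∀ i, b (Sum.inl i) = bL i := by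
    intro i
    simp [b]
  simp_rw [h1]
  have h3 : (⊤ : Submodule k L).map L.subtype = L := by simp
  conv_lhs => rw [← h3, ← bL.span_eq, Submodule.map_span]
  congr 1
  ext x
  simp

theorem subspace_coords (k : Type u) [Field k] (N : ℕ)
    (L : Submodule k (MvPolynomial (Fin N) k)) (hL : L ≤ homogeneousSubmodule (Fin N) k 1) :
    ∃ (s M : ℕ) (e : MvPolynomial (Fin s ⊕ Fin M) k ≃ₐ[k] MvPolynomial (Fin N) k),
      s = Module.finrank k L ∧ s + M = N ∧
      (∀ d f, (e f).IsHomogeneous d ↔ f.IsHomogeneous d) ∧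
      L = Submodule.span k (Set.range fun i : Fin s => e (X (Sum.inl i))) := by
  let L' : Submodule k (homogeneousSubmodule (Fin N) k 1) := L.comap (homogeneousSubmodule (Fin N) k 1).subtype
  obtain ⟨s, M, b, hs, hM, hb⟩ := exists_adapted_basis k L'
  obtain ⟨e, he1, he2⟩ := basis_coords k (Fin N) _ b
  have hLe : Module.finrank k L = Module.finrank k L' :=
    (Submodule.comapSubtypeEquivOfLe hL).finrank_eq.symm
  refine ⟨s, M, e, hs.trans hLe.symm, ?_, he2, ?_⟩
  · rw [hM, finrank_homog]
    simp
  · have h2 : L = L'.map (homogeneousSubmodule (Fin N) k 1).subtype := by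
      rw [Submodule.map_comap_subtype, inf_eq_right.2 hL]
    simp_rw [he1]
    conv_lhs => rw [h2, hb, Submodule.map_span]
    congr 1
    ext x
    simp

/-- killing a space of linear forms -/
theorem kill_linear (k : Type u) [Field k] (N : ℕ)
    (L : Submodule k (MvPolynomial (Fin N) k)) (hL : L ≤ homogeneousSubmodule (Fin N) k 1) :
    ∃ (M : ℕ) (π : MvPolynomial (Fin N) k →ₐ[k] MvPolynomial (Fin M) k),
      Module.finrank k L + M = N ∧ Function.Surjective π ∧
      RingHom.ker π = Ideal.span (L : Set (MvPolynomial (Fin N) k)) ∧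
      (∀ d f, f.IsHomogeneous d → (π f).IsHomogeneous d) ∧
      (∀ d, ∀ g : MvPolynomial (Fin M) k, g.IsHomogeneous d → ∃ f, f.IsHomogeneous d ∧ π f = g) := by
  obtain ⟨s, M, e, hs, hM, he, hLs⟩ := subspace_coords k N L hL
  let π0 : MvPolynomial (Fin s ⊕ Fin M) k →ₐ[k] MvPolynomial (Fin M) k :=
    aeval (Sum.elim (fun _ => 0) X)
  let σ : MvPolynomial (Fin M) k →ₐ[k] MvPolynomial (Fin s ⊕ Fin M) k := rename Sum.inr
  have hπσ : ∀ g, π0 (σ g) = g := by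
    intro g
    simp only [π0, σ, aeval_rename]
    have : (Sum.elim (fun _ => (0 : MvPolynomial (Fin M) k)) X : Fin s ⊕ Fin M → _) ∘ Sum.inr = X := by
      ext1 i; simp
    rw [this, aeval_X_left_apply]
  let π : MvPolynomial (Fin N) k →ₐ[k] MvPolynomial (Fin M) k := π0.comp e.symm.toAlgHom
  have hlift : ∀ d, ∀ g : MvPolynomial (Fin M) k, g.IsHomogeneous d → ∃ f, f.IsHomogeneous d ∧ π f = g := by
    intro d g hg
    refine ⟨e (σ g), (he _ _).2 hg.rename_isHomogeneous, ?_⟩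
    simp [π, hπσ]
  refine ⟨M, π, by omega, ?_, ?_, ?_, hlift⟩
  · intro g
    exact ⟨e (σ g), by simp [π, hπσ]⟩
  · apply le_antisymm
    · intro f hf
      have h0 : ∀ g : MvPolynomial (Fin s ⊕ Fin M) k,
          g - σ (π0 g) ∈ Ideal.span (Set.range fun i : Fin s => (X (Sum.inl i) : MvPolynomial (Fin s ⊕ Fin M) k)) := by
        intro g
        induction g using MvPolynomial.induction_on with
        | C a => simp [π0, σ]
        | add p q hp hq =>
          have := Ideal.add_mem _ hp hq
          rw [map_add, map_add]
          convert this using 1; ring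
        | mul_X p i hp =>
          rw [map_mul, map_mul]
          rcases i with i | i
          · have : σ (π0 (X (Sum.inl i))) = 0 := by simp [π0]
            rw [this, mul_zero, sub_zero]
            exact Ideal.mul_mem_left _ _ (Ideal.subset_span ⟨i, rfl⟩)
          · have : σ (π0 (X (Sum.inr i))) = X (Sum.inr i) := by simp [π0, σ]
            rw [this, ← sub_mul]
            exact Ideal.mul_mem_right _ _ hp
      have h1 := h0 (e.symm f)
      have h2 : π0 (e.symm f) = 0 := hf
      rw [h2, map_zero, sub_zero] at h1
      have h3 := Ideal.mem_map_of_mem e.toRingEquiv.toRingHom h1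
      rw [Ideal.map_span] at h3
      have h4 : e.toRingEquiv.toRingHom (e.symm f) = f := by simp
      rw [h4] at h3
      refine Ideal.span_mono ?_ h3
      rintro _ ⟨_, ⟨i, rfl⟩, rfl⟩
      rw [hLs]
      exact Submodule.subset_span ⟨i, rfl⟩
    · rw [Ideal.span_le, hLs]
      intro f hf
      induction hf using Submodule.span_induction with
      | mem x hx => obtain ⟨i, rfl⟩ := hx; simp [π, π0, RingHom.mem_ker]
      | zero => exact Ideal.zero_mem _
      | add x y _ _ h1 h2 => exact Ideal.add_mem _ h1 h2
      | smul a x _ h => rw [MvPolynomial.smul_eq_C_mul]; exact Ideal.mul_mem_left _ _ h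
  · intro d f hf
    have h1 : (e.symm f).IsHomogeneous d := by rw [← he]; simpa using hf
    have := h1.aeval (Sum.elim (fun _ => 0) X : Fin s ⊕ Fin M → MvPolynomial (Fin M) k) (n := 1) (by
      rintro (i | i)
      · exact isHomogeneous_zero _ _ _
      · exact isHomogeneous_X _ _)
    rwa [one_mul] at this

/-- projective dimension bound from few linear forms -/
theorem projDim_le_of_adjoin (k : Type u) [Field k] (N : ℕ)
    (L : Submodule k (MvPolynomial (Fin N) k)) (hL : L ≤ homogeneousSubmodule (Fin N) k 1)
    {ι : Type} (f : ι → MvPolynomial (Fin N) k)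
    (hf : ∀ i, f i ∈ Algebra.adjoin k (L : Set (MvPolynomial (Fin N) k))) :
    projDim (MvPolynomial (Fin N) k) (MvPolynomial (Fin N) k ⧸ Ideal.span (Set.range f))
      ≤ (Module.finrank k L : ℕ) := by
  obtain ⟨s, M, e, hs, hM, he, hLs⟩ := subspace_coords k N L hL
  let ρ : MvPolynomial (Fin s) k →ₐ[k] MvPolynomial (Fin N) k :=
    e.toAlgHom.comp (rename Sum.inl)
  have hadj : Algebra.adjoin k (L : Set (MvPolynomial (Fin N) k)) ≤ ρ.range := by
    rw [Algebra.adjoin_le_iff, hLs]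
    intro x hx
    have : Submodule.span k (Set.range fun i : Fin s => e (X (Sum.inl i))) ≤ Subalgebra.toSubmodule ρ.range := by
      rw [Submodule.span_le]
      rintro _ ⟨i, rfl⟩
      exact ⟨X i, by simp [ρ]⟩
    exact this hx
  choose g hg using fun i => hadj (hf i)
  have hI : Ideal.span (Set.range f) = (Ideal.span (Set.range g)).map ρ.toRingHom := by
    rw [Ideal.map_span, ← Set.range_comp]
    congr 2
    ext1 i
    exact (hg i).symm
  rw [hI, ← hs]
  apply projDim_map_le
  have h1 : (algebraMap (MvPolynomial (Fin s) k) (MvPolynomial (Fin M) (MvPolynomial (Fin s) k))).Flat := by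
    rw [RingHom.flat_algebraMap_iff]
    infer_instance
  let E : MvPolynomial (Fin M) (MvPolynomial (Fin s) k) ≃+* MvPolynomial (Fin N) k :=
    ((sumAlgEquiv k (Fin M) (Fin s)).symm.trans ((renameEquiv k (Equiv.sumComm _ _)).trans e)).toRingEquiv
  have h2 : (E : MvPolynomial (Fin M) (MvPolynomial (Fin s) k) →+* MvPolynomial (Fin N) k).Flat :=
    RingHom.Flat.of_bijective E.bijective
  have h3 : ρ.toRingHom = (E : MvPolynomial (Fin M) (MvPolynomial (Fin s) k) →+* MvPolynomial (Fin N) k).comp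
    (algebraMap (MvPolynomial (Fin s) k) (MvPolynomial (Fin M) (MvPolynomial (Fin s) k))) := by
    apply MvPolynomial.ringHom_ext
    · intro a
      simp [ρ, E, MvPolynomial.algebraMap_eq]
      exact (e.commutes a).symm
    · intro i
      simp [ρ, E, MvPolynomial.algebraMap_eq]
  rw [h3]
  exact RingHom.Flat.comp h1 h2

end Coords
end PD3


namespace PD3
section Smooth
open MvPolynomial

theorem trunc_linInd (k : Type u) [Field k] (δ t : ℕ) :
    ((Nat.choose (t + δ) δ : ℕ) : Cardinal.{u}) ≤ Module.rank k
      (MvPolynomial (Fin δ) k ⧸ (idealOfVars (Fin δ) k)^(t+1)) := by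
  classical
  let T : Finset (Fin δ →₀ ℕ) := (Finset.range (t+1)).biUnion
    (fun j => (Finset.univ : Finset (Fin δ)).finsuppAntidiag j)
  have hT : T.card = Nat.choose (t + δ) δ := by
    rw [Finset.card_biUnion]
    · simp only [Finset.card_finsuppAntidiag_nat_eq_choose, Finset.card_univ, Fintype.card_fin]
      rcases δ with _ | m
      · simp only [Nat.choose_zero_right]
        rw [Finset.sum_range_succ']
        simp
      · have h2 : ∀ j, (m + 1 + j - 1).choose j = (j + m).choose m := by
          intro j
          rw [show m + 1 + j - 1 = j + m by omega, Nat.choose_symm_add]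
        simp only [h2]
        rw [Nat.sum_range_add_choose]
        ring_nf
    · intro i _ j _ hij
      rw [Function.onFun, Finset.disjoint_left]
      intro e he he'
      simp only [Finset.mem_finsuppAntidiag] at he he'
      exact hij (he.1.symm.trans he'.1)
  have hmem : ∀ e ∈ T, e.degree < t + 1 := by
    intro e he
    simp only [T, Finset.mem_biUnion, Finset.mem_range, Finset.mem_finsuppAntidiag] at he
    obtain ⟨j, hj, h1, _⟩ := he
    rw [Finsupp.degree_eq_sum, h1]; exact hj
  have hli : LinearIndependent k (fun e : T =>
      (Ideal.Quotient.mkₐ k ((idealOfVars (Fin δ) k)^(t+1))) (monomial (e : Fin δ →₀ ℕ) (1:k))) := by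
    have h0 : LinearIndependent k (fun e : T => monomial (e : Fin δ →₀ ℕ) (1:k)) := by
      have := (basisMonomials (Fin δ) k).linearIndependent
      rw [coe_basisMonomials] at this
      exact this.comp _ Subtype.coe_injective
    rw [show (fun e : T =>
      (Ideal.Quotient.mkₐ k ((idealOfVars (Fin δ) k)^(t+1))) (monomial (e : Fin δ →₀ ℕ) (1:k)))
       = (Ideal.Quotient.mkₐ k ((idealOfVars (Fin δ) k)^(t+1))).toLinearMap ∘
       (fun e : T => monomial (e : Fin δ →₀ ℕ) (1:k)) from rfl]
    apply h0.map
    rw [Submodule.disjoint_def]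
    intro x hx hx'
    rw [LinearMap.mem_ker, AlgHom.toLinearMap_apply, Ideal.Quotient.mkₐ_eq_mk,
      Ideal.Quotient.eq_zero_iff_mem, mem_pow_idealOfVars_iff'] at hx'
    ext e
    rw [coeff_zero]
    by_cases he : e.degree < t + 1
    · exact hx' e he
    · have : x ∈ LinearMap.ker (lcoeff k e) := by
        refine Submodule.span_le.2 ?_ hx
        rintro _ ⟨⟨e', he'⟩, rfl⟩
        have := hmem e' he'
        have hne : e' ≠ e := by rintro rfl; exact he this
        simp [lcoeff, coeff_monomial, hne]
      simpa [lcoeff] using this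
  have := hli.cardinal_lift_le_rank
  simpa [hT] using this

theorem smooth_point_aux (k : Type u) [Field k] [IsAlgClosed k] (δ : ℕ) (Y R T : Type u)
    [CommRing Y] [Algebra k Y] [CommRing R] [Algebra k R] [CommRing T] [Algebra k T]
    [Algebra Y T] [IsScalarTower k Y T] (e : MvPolynomial (Fin δ) k ≃ₐ[k] Y)
    [Algebra.FormallySmooth Y T] [Nontrivial T] [Algebra.FiniteType k T]
    (ι : R →ₐ[k] T) (b : R) (hb : IsUnit (ι b))
    (hy : ∀ i, ∃ r, ι r = ι b * algebraMap Y T (e (X i))) :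
    ∃ φ : R →ₐ[k] k, ∀ t : ℕ, ((Nat.choose (t+δ) δ : ℕ) : Cardinal.{u}) ≤
      Module.rank k (R ⧸ (RingHom.ker φ)^(t+1)) := by
  obtain ⟨m, hm⟩ := Ideal.exists_maximal T
  obtain ⟨φ⟩ : Nonempty (T →ₐ[k] k) := by
    letI := Ideal.Quotient.field m
    have : Algebra.FiniteType k (T ⧸ m) :=
      Algebra.FiniteType.of_surjective (Ideal.Quotient.mkₐ k m) (Ideal.Quotient.mkₐ_surjective k m)
    have : Module.Finite k (T ⧸ m) := finite_of_finite_type_of_isJacobsonRing k (T ⧸ m)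
    have h := IsAlgClosed.algebraMap_bijective_of_isIntegral (k := k) (K := T ⧸ m)
    exact ⟨(AlgEquiv.ofBijective (Algebra.ofId k (T ⧸ m)) h).symm.toAlgHom.comp (Ideal.Quotient.mkₐ k m)⟩
  refine ⟨φ.comp ι, fun t => ?_⟩
  let a : Fin δ → k := fun i => φ (algebraMap Y T (e (X i)))
  let J := idealOfVars (Fin δ) k
  refine (trunc_linInd k δ t).trans ?_
  let q := Ideal.Quotient.mkₐ k (J^(t+1))
  let χ : Y →ₐ[k] (MvPolynomial (Fin δ) k ⧸ J^(t+1)) :=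
    (aeval (fun i => q (X i) + algebraMap k _ (a i))).comp e.symm.toAlgHom
  letI : Algebra Y (MvPolynomial (Fin δ) k ⧸ J^(t+1)) := χ.toRingHom.toAlgebra
  haveI : IsScalarTower k Y (MvPolynomial (Fin δ) k ⧸ J^(t+1)) := IsScalarTower.of_algebraMap_eq
    (fun x => (χ.commutes x).symm)
  let φY : Y →ₐ[k] k := φ.comp (IsScalarTower.toAlgHom k Y T)
  letI : Algebra Y k := φY.toRingHom.toAlgebra
  have hX0 : ∀ x ∈ J, aeval (0 : Fin δ → k) x = 0 := by
    intro x hx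
    have : J ≤ RingHom.ker (aeval (R := k) (0 : Fin δ → k)) := by
      refine Ideal.span_le.2 ?_
      rintro _ ⟨i, rfl⟩
      simp [RingHom.mem_ker]
    exact this hx
  let gk : (MvPolynomial (Fin δ) k ⧸ J^(t+1)) →ₐ[k] k :=
    Ideal.Quotient.liftₐ (J^(t+1)) (aeval (0 : Fin δ → k)) (fun x hx => hX0 x (Ideal.pow_le_self (by omega) hx))
  have hgq : ∀ x, gk (q x) = aeval (0 : Fin δ → k) x := fun x => rfl
  have hgχ : gk.comp χ = φY := by
    have : (gk.comp χ).comp e.toAlgHom = φY.comp e.toAlgHom := by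
      apply MvPolynomial.algHom_ext
      intro i
      simp [χ, hgq, φY, a]
    ext y
    have := DFunLike.congr_fun this (e.symm y)
    simpa using this
  let g : (MvPolynomial (Fin δ) k ⧸ J^(t+1)) →ₐ[Y] k :=
    { gk.toRingHom with commutes' := fun y => DFunLike.congr_fun hgχ y }
  have hgg : ∀ x, g x = gk x := fun x => rfl
  let φ' : T →ₐ[Y] k := { φ.toRingHom with commutes' := fun y => rfl }
  have hg : Function.Surjective g := fun x => ⟨algebraMap k _ x, by rw [hgg, AlgHom.commutes]; rfl⟩
  have hker : (RingHom.ker (g : (MvPolynomial (Fin δ) k ⧸ J^(t+1)) →+* k))^(t+1) = ⊥ := by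
    have h1 : RingHom.ker (g : (MvPolynomial (Fin δ) k ⧸ J^(t+1)) →+* k) ≤ J.map (Ideal.Quotient.mk (J^(t+1))) := by
      intro x hx
      obtain ⟨x, rfl⟩ := Ideal.Quotient.mk_surjective x
      apply Ideal.mem_map_of_mem
      have h2 : aeval (0 : Fin δ → k) x = 0 := hx
      have h3 : J = J^1 := (pow_one J).symm
      rw [h3, mem_pow_idealOfVars_iff']
      intro e he
      have he0 : e = 0 := by
        have : e.degree = 0 := by omega
        exact (Finsupp.degree_eq_zero_iff _).1 this
      rw [he0]
      have : aeval (0 : Fin δ → k) x = constantCoeff x := by simp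
      rw [h2] at this
      rw [← constantCoeff_eq]; exact this.symm
    rw [eq_bot_iff]
    refine (Ideal.pow_right_mono h1 (t+1)).trans ?_
    rw [← Ideal.map_pow, Ideal.map_quotient_self]
  let ψ : T →ₐ[Y] (MvPolynomial (Fin δ) k ⧸ J^(t+1)) :=
    Algebra.FormallySmooth.liftOfSurjective φ' g hg ⟨t+1, hker⟩
  have hψ : ∀ x, gk (ψ x) = φ x := fun x =>
    Algebra.FormallySmooth.liftOfSurjective_apply φ' g hg ⟨t+1, hker⟩ x
  let ρ : R →ₐ[k] (MvPolynomial (Fin δ) k ⧸ J^(t+1)) := (ψ.restrictScalars k).comp ι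
  have hρ : ∀ r, ρ r = ψ (ι r) := fun r => rfl
  have hgk : ∀ x, gk x = 0 → x^(t+1) = 0 := by
    intro x hx
    have : x^(t+1) ∈ (RingHom.ker (g : (MvPolynomial (Fin δ) k ⧸ J^(t+1)) →+* k))^(t+1) :=
      Ideal.pow_mem_pow hx _
    rwa [hker] at this
  have hsurj : Function.Surjective ρ := by
    have hβ : φ (ι b) ≠ 0 := (hb.map φ).ne_zero
    have hu : IsUnit (⟨ρ b, ρ.mem_range_self b⟩ : ρ.range) := by
      have hn : IsNilpotent ((⟨ρ b, ρ.mem_range_self b⟩ : ρ.range) - algebraMap k ρ.range (φ (ι b))) := by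
        refine ⟨t+1, Subtype.ext ?_⟩
        have := hgk (ρ b - algebraMap k _ (φ (ι b))) (by
          rw [map_sub, AlgHom.commutes, hρ, hψ]; simp)
        exact this
      have hu1 : IsUnit (algebraMap k ρ.range (φ (ι b))) := (IsUnit.mk0 _ hβ).map _
      have := hn.isUnit_add_left_of_commute hu1 (Commute.all _ _)
      simpa using this
    obtain ⟨⟨c, hc⟩, hc1⟩ := hu.exists_left_inv
    have hc1 : c * ρ b = 1 := congrArg Subtype.val hc1
    have hX : ∀ i, q (X i) ∈ ρ.range := by
      intro i
      obtain ⟨r, hr⟩ := hy i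
      have h1 : ρ r = ρ b * (q (X i) + algebraMap k _ (a i)) := by
        rw [hρ, hr, map_mul, AlgHom.commutes]
        congr 1
        change χ (e (X i)) = _
        simp [χ]
      have h2 : q (X i) = c * ρ r - algebraMap k _ (a i) := by
        rw [h1, ← mul_assoc, hc1]; ring
      rw [h2]
      exact sub_mem (mul_mem hc (ρ.mem_range_self r)) (Subalgebra.algebraMap_mem _ _)
    have htop : (⊤ : Subalgebra k (MvPolynomial (Fin δ) k)) ≤ ρ.range.comap q := by
      rw [← adjoin_range_X]
      refine Algebra.adjoin_le ?_
      rintro _ ⟨i, rfl⟩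
      exact hX i
    intro x
    obtain ⟨x, rfl⟩ := Ideal.Quotient.mk_surjective x
    exact htop (Algebra.mem_top (R := k) (x := x))
  have hle : (RingHom.ker (φ.comp ι))^(t+1) ≤ RingHom.ker ρ := by
    have h1 : RingHom.ker (φ.comp ι) ≤ (RingHom.ker (g : (MvPolynomial (Fin δ) k ⧸ J^(t+1)) →+* k)).comap ρ := by
      intro x hx
      rw [Ideal.mem_comap]
      change gk (ψ (ι x)) = 0
      rw [hψ]; exact hx
    intro x hx
    have := Ideal.le_comap_pow ρ (t+1) (Ideal.pow_right_mono h1 (t+1) hx)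
    rw [hker] at this
    exact this
  let Q := Ideal.Quotient.liftₐ ((RingHom.ker (φ.comp ι))^(t+1)) ρ (fun x hx => hle hx)
  refine LinearMap.rank_le_of_surjective Q.toLinearMap ?_
  intro x
  obtain ⟨r, hr⟩ := hsurj x
  exact ⟨Ideal.Quotient.mk _ r, hr⟩
end Smooth
end PD3


namespace PD3
section Smooth
open MvPolynomial

theorem trdeg_eq_of_isAlgebraic (k R K : Type u) [Field k] [CommRing R] [IsDomain R] [Algebra k R] [CommRing K]
    [IsDomain K]
    [Algebra k K] [Algebra R K] [IsScalarTower k R K] [FaithfulSMul R K] [Algebra.IsAlgebraic R K] :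
    Algebra.trdeg k K = Algebra.trdeg k R := by
  obtain ⟨ι, x, hx⟩ := exists_isTranscendenceBasis' k R
  have h2 := hx.algebraMap_comp (A := K)
  rw [← hx.cardinalMk_eq_trdeg, ← h2.cardinalMk_eq_trdeg]

open scoped IntermediateField.algebraAdjoinAdjoin in
theorem smooth_pointK (k : Type u) [Field k] [IsAlgClosed k] (R : Type u) [CommRing R] [IsDomain R]
    [Algebra k R] [Algebra.FiniteType k R] (K : Type u) [Field K] [Algebra R K]
    [IsFractionRing R K] [Algebra k K] [IsScalarTower k R K] [Algebra.EssFiniteType k K]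
    (δ : ℕ) (hδ : Algebra.trdeg k R = δ) :
    ∃ φ : R →ₐ[k] k, ∀ t : ℕ, ((Nat.choose (t+δ) δ : ℕ) : Cardinal.{u}) ≤
      Module.rank k (R ⧸ (RingHom.ker φ)^(t+1)) := by
  classical
  obtain ⟨s, hs, hsep⟩ := exists_isTranscendenceBasis_and_isSeparable_of_perfectField k K
  have hRK : Algebra.IsAlgebraic R K := IsLocalization.isAlgebraic K (nonZeroDivisors R)
  have hsK : Algebra.trdeg k K = δ := by
    rw [trdeg_eq_of_isAlgebraic k R K, hδ]
  have hcard : Fintype.card s = δ := by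
    have := hs.cardinalMk_eq_trdeg
    rw [hsK] at this
    simpa using this
  let v : Fin δ → K := ((↑) : s → K) ∘ (Fintype.equivFinOfCardEq hcard).symm
  have hv : IsTranscendenceBasis k v := hs.comp_equiv _
  have hrange : Set.range v = (s : Set K) := by
    simp [v, Set.range_comp]
  have hsep : Algebra.IsSeparable (IntermediateField.adjoin k (Set.range v)) K := by
    rw [hrange]; exact hsep
  let Y := Algebra.adjoin k (Set.range v)
  have hfe1 : Algebra.FormallyEtale Y (IntermediateField.adjoin k (Set.range v)) :=
    .of_isLocalization (nonZeroDivisors _)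
  have hfe2 : Algebra.FormallyEtale (IntermediateField.adjoin k (Set.range v)) K :=
    Algebra.FormallyEtale.of_isSeparable _ K
  have hfe : Algebra.FormallyEtale Y K := .comp _ (IntermediateField.adjoin k (Set.range v)) _
  let e : MvPolynomial (Fin δ) k ≃ₐ[k] Y := hv.1.aevalEquiv
  have hYn : IsNoetherianRing Y := isNoetherianRing_of_ringEquiv _ e.toRingEquiv
  have hYft : Algebra.FiniteType k Y := Algebra.FiniteType.equiv inferInstance e
  obtain ⟨g, hg⟩ := Algebra.FiniteType.out (R := k) (A := R)
  let R' : Subalgebra Y K := Algebra.adjoin Y (algebraMap R K '' (g : Set R))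
  have hR'ft : Algebra.FiniteType Y R' := by
    rw [← Subalgebra.fg_iff_finiteType]
    refine ⟨g.image (algebraMap R K), by simp [R']⟩
  have hR'fp : Algebra.FinitePresentation Y R' := (Algebra.FinitePresentation.of_finiteType (R := Y) (A := R')).1 hR'ft
  have hmem : ∀ r : R, algebraMap R K r ∈ R' := by
    have : (⊤ : Subalgebra k R) ≤ (R'.restrictScalars k).comap (IsScalarTower.toAlgHom k R K) := by
      rw [← hg]
      refine Algebra.adjoin_le ?_
      intro x hx
      exact Algebra.subset_adjoin ⟨x, hx, rfl⟩
    intro r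
    exact this (Algebra.mem_top (R := k) (x := r))
  let ι : R →ₐ[k] R' := (IsScalarTower.toAlgHom k R K).codRestrict (R'.restrictScalars k) hmem
  have hι : ∀ r, (ι r : K) = algebraMap R K r := fun r => rfl
  have hfr : IsFractionRing R' K := by
    refine IsFractionRing.of_field R' K fun z => ?_
    obtain ⟨x, y, hy, rfl⟩ := IsFractionRing.div_surjective (A := R) z
    exact ⟨ι x, ι y, rfl⟩
  have het : Algebra.IsEtaleAt Y (⊥ : Ideal R') := by
    have hloc : IsLocalization (⊥ : Ideal R').primeCompl K := by
      have : (⊥ : Ideal R').primeCompl = nonZeroDivisors R' := by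
        ext x
        simp [Ideal.primeCompl]
      rw [this]; exact hfr
    let eq : K ≃ₐ[R'] Localization.AtPrime (⊥ : Ideal R') :=
      IsLocalization.algEquiv (⊥ : Ideal R').primeCompl _ _
    exact Algebra.FormallyEtale.of_equiv (eq.restrictScalars Y)
  obtain ⟨h, hh, hhet⟩ := Algebra.exists_etale_of_isEtaleAt (R := Y) (⊥ : Ideal R')
  obtain ⟨b, hb⟩ := IsLocalization.exist_integer_multiples_of_finite (nonZeroDivisors R) v
  have hιinj : Function.Injective ι := by
    intro x y hxy
    apply IsFractionRing.injective R K
    rw [← hι, ← hι, hxy]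
  have hb0 : ι (b : R) ≠ 0 := by
    rw [Ne, map_eq_zero_iff ι hιinj]
    exact nonZeroDivisors.ne_zero b.2
  have hh0 : h ≠ 0 := hh
  have hT : Algebra.Etale Y (Localization.Away (h * ι (b:R))) := by
    rw [← Algebra.basicOpen_subset_etaleLocus_iff_etale] at hhet ⊢
    exact .trans (PrimeSpectrum.basicOpen_mul_le_left _ _) hhet
  let T := Localization.Away (h * ι (b:R))
  have hTd : IsDomain T := IsLocalization.isDomain_of_le_nonZeroDivisors (M := Submonoid.powers (h * ι (b:R))) T
    (powers_le_nonZeroDivisors_of_noZeroDivisors (mul_ne_zero hh0 hb0))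
  have hTft : Algebra.FiniteType k T := by
    have h1 : Algebra.FiniteType Y T := inferInstance
    exact Algebra.FiniteType.trans hYft h1
  let ιT : R →ₐ[k] T := (IsScalarTower.toAlgHom k R' T).comp ι
  refine smooth_point_aux k δ Y R T e ιT (b : R) ?_ ?_
  · have : IsUnit (algebraMap R' T (h * ι b)) := IsLocalization.Away.algebraMap_isUnit _
    rw [map_mul] at this
    exact isUnit_of_mul_isUnit_right this
  · intro i
    obtain ⟨r, hr⟩ := hb i
    refine ⟨r, ?_⟩
    have h1 : ι r = ι b * algebraMap Y R' (e (X i)) := by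
      apply Subtype.ext
      have h2 : algebraMap Y K (e (X i)) = v i := by
        rw [AlgebraicIndependent.algebraMap_aevalEquiv]; simp
      change algebraMap R K r = algebraMap R K b * algebraMap Y K (e (X i))
      rw [h2, hr, Algebra.smul_def]
    change algebraMap R' T (ι r) = algebraMap R' T (ι b) * _
    rw [h1, map_mul, ← IsScalarTower.algebraMap_apply]

theorem smooth_point (k : Type u) [Field k] [IsAlgClosed k] (R : Type u) [CommRing R] [IsDomain R]
    [Algebra k R] [Algebra.FiniteType k R] (δ : ℕ) (hδ : Algebra.trdeg k R = δ) :
    ∃ φ : R →ₐ[k] k, ∀ t : ℕ, ((Nat.choose (t+δ) δ : ℕ) : Cardinal.{u}) ≤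
      Module.rank k (R ⧸ (RingHom.ker φ)^(t+1)) :=
  smooth_pointK k R (FractionRing R) δ hδ
end Smooth
end PD3


namespace PD3
section Induct

theorem fd_pow {k F : Type u} [Field k] [CommRing F] [Algebra k F] (U : Submodule k F)
    [hU : FiniteDimensional k U] (n : ℕ) : FiniteDimensional k (U^n : Submodule k F) :=
  (Submodule.fg_iff_finiteDimensional _).1 (((Submodule.fg_iff_finiteDimensional U).2 hU).pow n)

theorem map_mulLeft_pow {k F : Type u} [Field k] [CommRing F] [Algebra k F] (U : Submodule k F) (c : F) (n : ℕ) :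
    (U.map (LinearMap.mulLeft k c))^n = (U^n).map (LinearMap.mulLeft k (c^n)) := by
  have h : ∀ (c : F) (U : Submodule k F), U.map (LinearMap.mulLeft k c) = Submodule.span k {c} * U := by
    intro c U
    ext x
    simp [Submodule.mem_span_singleton_mul, Submodule.mem_map]
  rw [h, h, mul_pow, Submodule.span_pow, Set.singleton_pow]

theorem finrank_scale {k F : Type u} [Field k] [CommRing F] [IsDomain F] [Algebra k F] (U : Submodule k F) (c : F)
    (hc : c ≠ 0) (n : ℕ) :
    Module.finrank k ((U.map (LinearMap.mulLeft k c))^n : Submodule k F) = Module.finrank k (U^n : Submodule k F) := by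
  rw [map_mulLeft_pow]
  have hinj : Function.Injective (LinearMap.mulLeft k (c^n)) :=
    fun x y hxy => mul_left_cancel₀ (pow_ne_zero n hc) hxy
  exact (Submodule.equivMapOfInjective _ hinj _).finrank_eq.symm

theorem trdeg_simple_alg (k L F : Type u) [Field k] [Field L] [Field F] [Algebra k L] [Algebra k F]
    [Algebra L F] [IsScalarTower k L F] (u : F) (hu : IsAlgebraic L u) :
    Algebra.trdeg k (IntermediateField.adjoin L {u}) = Algebra.trdeg k L := by
  have : Algebra.IsAlgebraic L (IntermediateField.adjoin L {u}) :=
    IntermediateField.isAlgebraic_adjoin_simple hu.isIntegral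
  exact trdeg_eq_of_isAlgebraic k L _

open scoped IntermediateField.algebraAdjoinAdjoin in
theorem trdeg_simple_trans (k L F : Type u) [Field k] [Field L] [Field F] [Algebra k L] [Algebra k F]
    [Algebra L F] [IsScalarTower k L F] (u : F) (hu : Transcendental L u) :
    Algebra.trdeg k (IntermediateField.adjoin L {u}) = Algebra.trdeg k L + 1 := by
  have h1 := trdeg_add_eq k L (A := IntermediateField.adjoin L {u})
  have h2 : Algebra.trdeg L (IntermediateField.adjoin L {u}) = 1 := by
    have : Algebra.IsAlgebraic (Algebra.adjoin L {u}) (IntermediateField.adjoin L {u}) :=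
      IsLocalization.isAlgebraic _ (nonZeroDivisors _)
    rw [trdeg_eq_of_isAlgebraic L (Algebra.adjoin L {u}) (IntermediateField.adjoin L {u})]
    have hai : AlgebraicIndependent L (fun _ : PUnit.{u+1} => u) := by
      rw [algebraicIndependent_unique_type_iff]; exact hu
    have he := hai.aevalEquiv
    rw [Set.range_const] at he
    rw [← he.trdeg_eq, MvPolynomial.trdeg_of_isDomain]
    simp
  rw [← h1, h2]

theorem dim_step {k R : Type u} [Field k] [CommRing R] [Algebra k R] (U U0 : Submodule k R)
    [FiniteDimensional k U] (φ : R →ₐ[k] k) (hU0 : ∀ x, x ∈ U0 ↔ x ∈ U ∧ φ x = 0) (h1 : (1:R) ∈ U)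
    (hadj : Algebra.adjoin k (U : Set R) = ⊤) (t C : ℕ)
    (hC : (C : Cardinal.{u}) ≤ Module.rank k (R ⧸ (RingHom.ker φ)^(t+1))) :
    Module.finrank k (U0^(t+1) : Submodule k R) + C ≤ Module.finrank k (U^(t+1) : Submodule k R) := by
  have hUU : U = 1 ⊔ U0 := by
    apply le_antisymm
    · intro x hx
      rw [Submodule.mem_sup]
      refine ⟨algebraMap k R (φ x), ?_, x - algebraMap k R (φ x), ?_, by ring⟩
      · exact Submodule.mem_one.2 ⟨_, rfl⟩
      · rw [hU0]
        refine ⟨sub_mem hx ?_, by simp⟩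
        rw [Algebra.algebraMap_eq_smul_one]
        exact U.smul_mem _ h1
    · refine sup_le ?_ (fun x hx => ((hU0 x).1 hx).1)
      rw [Submodule.one_le]; exact h1
  have key : ∀ n : ℕ, U^(n+1) ≤ U^n ⊔ U0^(n+1) := by
    intro n
    induction n with
    | zero => simp only [zero_add, pow_one, pow_zero]; exact hUU.le
    | succ n ih =>
      have h2 : U^(n+1+1) ≤ U^(n+1) ⊔ U^(n+1) * U0 := by
        conv_lhs => rw [pow_succ, hUU, Submodule.mul_sup, mul_one, ← hUU]
      refine h2.trans (sup_le le_sup_left ?_)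
      refine (mul_le_mul_left ih U0).trans ?_
      rw [Submodule.sup_mul, ← pow_succ]
      refine sup_le ?_ le_sup_right
      refine le_trans ?_ le_sup_left
      rw [pow_succ]
      exact mul_le_mul_right (by conv_rhs => rw [hUU]
                                 exact le_sup_right) _
  let m := RingHom.ker φ
  let mk := m.restrictScalars k
  have hU0m : ∀ n, U0^n ≤ (m^n).restrictScalars k := by
    intro n
    have : U0 ≤ m.restrictScalars k := fun x hx => ((hU0 x).1 hx).2
    induction n with
    | zero => simp
    | succ n ih =>
      rw [pow_succ, Submodule.mul_le]
      intro x hx y hy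
      rw [Submodule.restrictScalars_mem, pow_succ]
      exact Ideal.mul_mem_mul (ih hx) (this hy)
  let W : Submodule k R := U^(t+1) ⊔ (m^(t+1)).restrictScalars k
  have h1W : (1:R) ∈ W := by
    have : (1:R) ∈ U^(t+1) := by
      have := Submodule.pow_mem_pow U h1 (t+1)
      simpa using this
    exact Submodule.mem_sup_left this
  have hUW : ∀ u ∈ U, ∀ w ∈ W, u * w ∈ W := by
    intro u hu w hw
    obtain ⟨a, ha, b, hb, rfl⟩ := Submodule.mem_sup.1 hw
    rw [mul_add]
    refine add_mem ?_ (Submodule.mem_sup_right (Ideal.mul_mem_left _ _ hb))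
    have : u * a ∈ U^(t+1+1) := by rw [pow_succ']; exact Submodule.mul_mem_mul hu ha
    refine (?_ : U^(t+1+1) ≤ W) this
    refine (key (t+1)).trans (sup_le le_sup_left ?_)
    refine le_trans ?_ le_sup_right
    refine (hU0m _).trans ?_
    exact (fun x hx => Ideal.pow_le_pow_right (by omega) hx)
  have hWtop : W = ⊤ := by
    rw [eq_top_iff]
    intro x _
    have hx : x ∈ Algebra.adjoin k (U : Set R) := by rw [hadj]; exact Algebra.mem_top
    have : ∀ w ∈ W, x * w ∈ W := by
      clear * - hx hUW
      induction hx using Algebra.adjoin_induction with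
      | mem x hx => exact hUW x hx
      | algebraMap r => intro w hw; rw [← Algebra.smul_def]; exact W.smul_mem _ hw
      | add x y _ _ hx hy => intro w hw; rw [add_mul]; exact add_mem (hx w hw) (hy w hw)
      | mul x y _ _ hx hy => intro w hw; rw [mul_assoc]; exact hx _ (hy w hw)
    simpa using this 1 h1W
  haveI := fd_pow U (t+1)
  let q : (U^(t+1) : Submodule k R) →ₗ[k] (R ⧸ m^(t+1)) :=
    (Ideal.Quotient.mkₐ k (m^(t+1))).toLinearMap ∘ₗ (U^(t+1)).subtype
  have hq : Function.Surjective q := by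
    intro y
    obtain ⟨x, rfl⟩ := Ideal.Quotient.mk_surjective y
    have hx : x ∈ W := by rw [hWtop]; trivial
    obtain ⟨a, ha, b, hb, rfl⟩ := Submodule.mem_sup.1 hx
    refine ⟨⟨a, ha⟩, ?_⟩
    change Ideal.Quotient.mk _ a = _
    rw [map_add, Ideal.Quotient.eq_zero_iff_mem.2 hb, add_zero]
  haveI : Module.Finite k (R ⧸ m^(t+1)) := Module.Finite.of_surjective q hq
  have hC' : C ≤ Module.finrank k (R ⧸ m^(t+1)) := by
    rw [← Module.finrank_eq_rank] at hC
    exact_mod_cast hC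
  have hrn := LinearMap.finrank_range_add_finrank_ker q
  rw [LinearMap.range_eq_top.2 hq, finrank_top] at hrn
  have hle : U0^(t+1) ≤ U^(t+1) := pow_le_pow_left' (fun x hx => ((hU0 x).1 hx).1) _
  have hker : Module.finrank k (U0^(t+1) : Submodule k R) ≤ Module.finrank k (LinearMap.ker q) := by
    have h3 : (U0^(t+1)).comap (U^(t+1)).subtype ≤ LinearMap.ker q := by
      intro x hx
      rw [LinearMap.mem_ker]
      exact Ideal.Quotient.eq_zero_iff_mem.2 (hU0m (t+1) (show (x : R) ∈ U0^(t+1) from hx))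
    rw [← (Submodule.comapSubtypeEquivOfLe hle).finrank_eq]
    exact Submodule.finrank_mono h3
  omega

theorem dim_sum {k F : Type u} [Field k] [Field F] [Algebra k F] (U U' : Submodule k F)
    [FiniteDimensional k U] [FiniteDimensional k U'] (u : F) (h1 : (1:F) ∈ U) (hu : ∀ x ∈ U', u * x ∈ U)
    (htr : Transcendental (IntermediateField.adjoin k (U' : Set F)) u) (n : ℕ) :
    ∑ j ∈ Finset.range (n+1), Module.finrank k (U'^j : Submodule k F) ≤ Module.finrank k (U^n : Submodule k F) := by
  haveI := fun j => fd_pow U' j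
  haveI := fd_pow U n
  let Φ : (Π j : Fin (n+1), (U'^(j:ℕ) : Submodule k F)) →ₗ[k] F :=
    ∑ j : Fin (n+1), (LinearMap.mulLeft k (u^(j:ℕ))) ∘ₗ (U'^(j:ℕ)).subtype ∘ₗ LinearMap.proj j
  have hΦ : ∀ w, Φ w = ∑ j : Fin (n+1), u^(j:ℕ) * (w j : F) := by
    intro w; simp [Φ]
  have hmemL : ∀ j, ∀ x ∈ U'^j, x ∈ IntermediateField.adjoin k (U' : Set F) := by
    intro j
    have hb : U' ≤ Subalgebra.toSubmodule (IntermediateField.adjoin k (U' : Set F)).toSubalgebra :=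
      fun x hx => IntermediateField.subset_adjoin k _ hx
    induction j with
    | zero =>
      intro x hx
      obtain ⟨c, rfl⟩ := Submodule.mem_one.1 (by simpa using hx)
      exact IntermediateField.algebraMap_mem _ c
    | succ j ih =>
      intro x hx
      rw [pow_succ] at hx
      refine Submodule.mul_induction_on hx (fun a ha b hb' => ?_) (fun a b ha hb => add_mem ha hb)
      exact mul_mem (ih a ha) (hb hb')
  have hinj : Function.Injective Φ := by
    rw [injective_iff_map_eq_zero]
    intro w hw
    rw [hΦ] at hw
    let P : Polynomial (IntermediateField.adjoin k (U' : Set F)) :=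
      ∑ j : Fin (n+1), Polynomial.monomial (j:ℕ) ⟨(w j : F), hmemL j _ (w j).2⟩
    have hP : Polynomial.aeval u P = 0 := by
      rw [← hw, map_sum]
      refine Finset.sum_congr rfl fun j _ => ?_
      rw [Polynomial.aeval_monomial, mul_comm]; rfl
    have hP0 : P = 0 := by
      by_contra hne
      exact htr ⟨P, hne, hP⟩
    funext j
    have := congrArg (fun Q => Polynomial.coeff Q j) hP0
    simp only [P, Polynomial.finset_sum_coeff, Polynomial.coeff_monomial, Polynomial.coeff_zero] at this
    rw [Finset.sum_eq_single j] at this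
    · simp only [if_true] at this
      have h9 : ((w j : F)) = 0 := congrArg Subtype.val this
      exact Subtype.ext h9
    · intro i _ hij
      rw [if_neg]
      exact fun h => hij (Fin.ext h)
    · simp
  have hrange : LinearMap.range Φ ≤ U^n := by
    rintro _ ⟨w, rfl⟩
    rw [hΦ]
    refine sum_mem fun j _ => ?_
    have h3 : ∀ j : ℕ, ∀ x ∈ U'^j, u^j * x ∈ U^j := by
      intro j x hx
      have h4 : U'.map (LinearMap.mulLeft k u) ≤ U := by
        rintro _ ⟨y, hy, rfl⟩
        exact hu y hy
      have h5 := pow_le_pow_left' h4 j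
      rw [map_mulLeft_pow] at h5
      exact h5 ⟨x, hx, rfl⟩
    have h6 : U^(j:ℕ) ≤ U^n := pow_le_pow_right₀ (Submodule.one_le.2 h1) (by omega)
    exact h6 (h3 j _ (w j).2)
  have h7 := LinearMap.finrank_range_of_inj hinj
  have h8 := Submodule.finrank_mono hrange
  rw [h7, Module.finrank_pi_fintype] at h8
  rw [Finset.sum_range]
  exact h8
end Induct
end PD3


namespace PD3
section Induct

open scoped IntermediateField.algebraAdjoinAdjoin in
theorem trdeg_adjoin_field (k F : Type u) [Field k] [Field F] [Algebra k F] (S : Set F) :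
    Algebra.trdeg k (IntermediateField.adjoin k S) = Algebra.trdeg k (Algebra.adjoin k S) := by
  have : Algebra.IsAlgebraic (Algebra.adjoin k S) (IntermediateField.adjoin k S) :=
      IsLocalization.isAlgebraic _ (nonZeroDivisors _)
  exact trdeg_eq_of_isAlgebraic k _ _

theorem adjoin_step (k F : Type u) [Field k] [Field F] [Algebra k F] (U U' : Submodule k F) (u : F)
    (hu : u ≠ 0) (huU : u ∈ U) (h1 : (1:F) ∈ U) (h2 : ∀ x ∈ U', u * x ∈ U)
    (h3 : ∀ x ∈ U, ∃ c : k, ∃ y ∈ U', x = algebraMap k F c + u * y) :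
    (IntermediateField.adjoin (IntermediateField.adjoin k (U' : Set F)) {u}).restrictScalars k =
      IntermediateField.adjoin k (U : Set F) := by
  rw [IntermediateField.adjoin_adjoin_left]
  apply le_antisymm
  · rw [IntermediateField.adjoin_le_iff]
    rintro x (hx | hx)
    · have : x = (u * x) * u⁻¹ := by field_simp
      rw [this]
      exact mul_mem (IntermediateField.subset_adjoin k _ (h2 x hx))
        (inv_mem (IntermediateField.subset_adjoin k _ huU))
    · rw [Set.mem_singleton_iff.1 hx]
      exact IntermediateField.subset_adjoin k _ huU
  · rw [IntermediateField.adjoin_le_iff]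
    intro x hx
    obtain ⟨c, y, hy, rfl⟩ := h3 x hx
    exact add_mem (IntermediateField.algebraMap_mem _ c) (mul_mem
      (IntermediateField.subset_adjoin k _ (Or.inr rfl)) (IntermediateField.subset_adjoin k _ (Or.inl hy)))

theorem hf_lower (k F : Type u) [Field k] [IsAlgClosed k] [Field F] [Algebra k F] (d : ℕ) :
    ∀ (U : Submodule k F) [FiniteDimensional k U], (1:F) ∈ U → Module.finrank k U = d → ∀ δ : ℕ,
      Algebra.trdeg k (IntermediateField.adjoin k (U : Set F)) = δ → δ + 1 ≤ d ∧
      ∀ t : ℕ, Nat.choose (t+1+δ) δ + (d - δ - 1) * Nat.choose (t+δ) δ ≤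
        Module.finrank k (U^(t+1) : Submodule k F) := by
  induction d with
  | zero =>
    intro U _ h1 hU
    exfalso
    rw [Submodule.finrank_eq_zero] at hU
    rw [hU] at h1
    exact one_ne_zero ((Submodule.mem_bot k).1 h1)
  | succ d ih =>
    intro U hUfd h1 hU δ hδ
    have hspan : Submodule.span k {(1:F)} ≤ U := by
      rw [Submodule.span_singleton_le_iff_mem]; exact h1
    rcases Nat.eq_zero_or_pos δ with h0 | hpos
    · subst h0
      have halg : Algebra.IsAlgebraic k (IntermediateField.adjoin k (U : Set F)) := by
        rw [← trdeg_eq_zero_iff, hδ]; simp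
      have hUone : U ≤ Submodule.span k {(1:F)} := by
        intro x hx
        obtain ⟨c, hc⟩ := (IsAlgClosed.algebraMap_bijective_of_isIntegral (k := k)
          (K := IntermediateField.adjoin k (U : Set F))).2 ⟨x, IntermediateField.subset_adjoin k _ hx⟩
        rw [Submodule.mem_span_singleton]
        refine ⟨c, ?_⟩
        rw [← Algebra.algebraMap_eq_smul_one]
        exact congrArg Subtype.val hc
      have hd : d = 0 := by
        have := Submodule.finrank_mono hUone
        rw [finrank_span_singleton one_ne_zero] at this
        omega
      subst hd
      refine ⟨le_refl _, fun t => ?_⟩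
      simp only [Nat.choose_zero_right, zero_add, tsub_zero, tsub_self, zero_mul, add_zero]
      haveI := fd_pow U (t+1)
      have h2 : (1:F) ∈ U^(t+1) := by
        have := Submodule.pow_mem_pow U h1 (t+1)
        simpa using this
      rw [Nat.one_le_iff_ne_zero, Ne, Submodule.finrank_eq_zero]
      intro h
      rw [h] at h2
      exact one_ne_zero ((Submodule.mem_bot k).1 h2)
    · -- main case
      let R := Algebra.adjoin k (U : Set F)
      have hRδ : Algebra.trdeg k R = δ := by rw [← trdeg_adjoin_field]; exact hδ
      have hRft : Algebra.FiniteType k R := by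
        rw [← Subalgebra.fg_iff_finiteType]
        obtain ⟨s, hs⟩ := (Submodule.fg_iff_finiteDimensional U).2 hUfd
        refine ⟨s, ?_⟩
        rw [← Algebra.adjoin_span, hs]
      obtain ⟨φ, hφ⟩ := smooth_point k R δ hRδ
      let V : Submodule k R := U.comap R.val.toLinearMap
      have hinj : Function.Injective R.val.toLinearMap := Subtype.val_injective
      have hVU : V.map R.val.toLinearMap = U := by
        rw [Submodule.map_comap_eq, inf_eq_right]
        intro x hx
        exact ⟨⟨x, Algebra.subset_adjoin hx⟩, rfl⟩
      let eV : V ≃ₗ[k] U := (Submodule.equivMapOfInjective _ hinj V).trans (LinearEquiv.ofEq _ _ hVU)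
      haveI hVfd : FiniteDimensional k V := LinearEquiv.finiteDimensional eV.symm
      have hVd : Module.finrank k V = d + 1 := by rw [eV.finrank_eq, hU]
      have h1V : (1:R) ∈ V := h1
      let V0 : Submodule k R := V ⊓ LinearMap.ker φ.toLinearMap
      have hV0 : ∀ x, x ∈ V0 ↔ x ∈ V ∧ φ x = 0 := fun x => Iff.rfl
      have hVadj : Algebra.adjoin k (V : Set R) = ⊤ := Algebra.adjoin_adjoin_coe_preimage
      have hV0d : Module.finrank k V0 = d := by
        have h := LinearMap.finrank_range_add_finrank_ker (φ.toLinearMap.domRestrict V)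
        have hs : LinearMap.range (φ.toLinearMap.domRestrict V) = ⊤ := by
          rw [LinearMap.range_eq_top]
          intro c
          refine ⟨c • ⟨1, h1V⟩, ?_⟩
          rw [map_smul]
          simp
        have hk : LinearMap.ker (φ.toLinearMap.domRestrict V) = V0.comap V.subtype := by
          ext x
          simp [V0]
        rw [hs, finrank_top, Module.finrank_self, hk,
          (Submodule.comapSubtypeEquivOfLe inf_le_left).finrank_eq, hVd] at h
        change 1 + Module.finrank k V0 = d + 1 at h; omega
      haveI hV0fd : FiniteDimensional k V0 :=
        Submodule.finiteDimensional_of_le (S₂ := V) inf_le_left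
      let U0 : Submodule k F := V0.map R.val.toLinearMap
      have hU0d : Module.finrank k U0 = d := by
        rw [← hV0d]; exact (Submodule.equivMapOfInjective _ hinj V0).finrank_eq.symm
      have hd0 : d ≠ 0 := by
        rintro rfl
        have hUU : U = Submodule.span k {(1:F)} := by
          refine (Submodule.eq_of_le_of_finrank_eq hspan ?_).symm
          rw [finrank_span_singleton one_ne_zero, hU]
        have : Algebra.trdeg k (IntermediateField.adjoin k (U : Set F)) = 0 := by
          rw [trdeg_eq_zero_iff]
          have hb : IntermediateField.adjoin k (U : Set F) = ⊥ := by
            rw [IntermediateField.adjoin_eq_bot_iff]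
            intro x hx
            rw [hUU] at hx
            obtain ⟨c, rfl⟩ := Submodule.mem_span_singleton.1 hx
            rw [← Algebra.algebraMap_eq_smul_one]
            exact IntermediateField.algebraMap_mem _ c
          rw [hb]
          exact Algebra.IsAlgebraic.of_finite k _
        rw [hδ] at this
        have : δ = 0 := by exact_mod_cast this
        omega
      obtain ⟨u, huU0, hu0⟩ : ∃ u ∈ U0, u ≠ 0 := by
        apply Submodule.exists_mem_ne_zero_of_ne_bot
        intro h
        rw [h, finrank_bot] at hU0d
        exact hd0 hU0d.symm
      have hU0U : ∀ x ∈ U0, x ∈ U := by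
        rintro _ ⟨y, hy, rfl⟩
        exact hy.1
      let U' : Submodule k F := U0.map (LinearMap.mulLeft k u⁻¹)
      have hU'0 : ∀ x ∈ U', u * x ∈ U0 := by
        rintro _ ⟨y, hy, rfl⟩
        rw [LinearMap.mulLeft_apply, mul_inv_cancel_left₀ hu0]
        exact hy
      have h1U' : (1:F) ∈ U' := ⟨u, huU0, by simp [hu0]⟩
      have hU'pow : ∀ n, Module.finrank k (U'^n : Submodule k F) = Module.finrank k (U0^n : Submodule k F) :=
        fun n => finrank_scale U0 u⁻¹ (inv_ne_zero hu0) n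
      have hU'd : Module.finrank k U' = d := by
        have := hU'pow 1
        rw [pow_one, pow_one] at this
        rw [this, hU0d]
      haveI : FiniteDimensional k U0 := inferInstanceAs (FiniteDimensional k (V0.map _))
      haveI : FiniteDimensional k U' := inferInstanceAs (FiniteDimensional k (U0.map _))
      have hstep := adjoin_step k F U U' u hu0 (hU0U u huU0) h1 (fun x hx => hU0U _ (hU'0 x hx)) (by
        intro x hx
        let y : R := ⟨x, Algebra.subset_adjoin hx⟩
        refine ⟨φ y, u⁻¹ * (x - algebraMap k F (φ y)), ⟨x - algebraMap k F (φ y), ?_, rfl⟩, ?_⟩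
        · refine ⟨y - algebraMap k R (φ y), ⟨?_, ?_⟩, rfl⟩
          · refine sub_mem (show y ∈ V from hx) ?_
            rw [Algebra.algebraMap_eq_smul_one]
            exact V.smul_mem _ h1V
          · simp
        · rw [mul_inv_cancel_left₀ hu0]; ring)
      have htrL : Algebra.trdeg k (IntermediateField.adjoin (IntermediateField.adjoin k (U' : Set F)) {u}) = δ := by
        rw [← hδ, ← hstep]; rfl
      by_cases halg : IsAlgebraic (IntermediateField.adjoin k (U' : Set F)) u
      · rw [trdeg_simple_alg k _ F u halg] at htrL
        obtain ⟨i1, i2⟩ := ih U' h1U' hU'd δ htrL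
        refine ⟨by omega, fun t => ?_⟩
        have h4 := dim_step V V0 φ hV0 h1V hVadj t _ (hφ t)
        have h5 : Module.finrank k (V^(t+1) : Submodule k R) = Module.finrank k (U^(t+1) : Submodule k F) := by
          conv_rhs => rw [← hVU]
          rw [← Submodule.map_pow]
          exact (Submodule.equivMapOfInjective _ hinj _).finrank_eq
        have h6 : Module.finrank k (V0^(t+1) : Submodule k R) = Module.finrank k (U0^(t+1) : Submodule k F) := by
          rw [← Submodule.map_pow]
          exact (Submodule.equivMapOfInjective _ hinj _).finrank_eq
        rw [h5, h6, ← hU'pow] at h4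
        have h7 := i2 t
        obtain ⟨c, rfl⟩ : ∃ c, d = δ + 1 + c := ⟨d - (δ+1), by omega⟩
        rw [show δ + 1 + c - δ - 1 = c by omega] at h7
        rw [show δ + 1 + c + 1 - δ - 1 = c + 1 by omega, add_mul, one_mul]
        omega
      · have htr : Transcendental (IntermediateField.adjoin k (U' : Set F)) u := halg
        rw [trdeg_simple_trans k _ F u htr] at htrL
        obtain ⟨δ', hδ'⟩ : ∃ δ' : ℕ, Algebra.trdeg k (IntermediateField.adjoin k (U' : Set F)) = δ' := by
          apply Cardinal.lt_aleph0.1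
          refine lt_of_le_of_lt ?_ (Cardinal.natCast_lt_aleph0 (n := δ))
          rw [← htrL]
          exact le_self_add
        rw [hδ'] at htrL
        have hδδ : δ = δ' + 1 := by exact_mod_cast htrL.symm
        obtain ⟨i1, i2⟩ := ih U' h1U' hU'd δ' hδ'
        refine ⟨by omega, fun t => ?_⟩
        have h4 := dim_sum U U' u h1 (fun x hx => hU0U _ (hU'0 x hx)) htr (t+1)
        refine le_trans ?_ h4
        rw [Finset.sum_range_succ']
        have h5 : Module.finrank k (U'^0 : Submodule k F) = 1 := by
          rw [pow_zero, Submodule.one_eq_span, finrank_span_singleton one_ne_zero]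
        rw [h5]
        have h6 : ∑ j ∈ Finset.range (t+1), (Nat.choose (j+1+δ') δ' + (d - δ' - 1) * Nat.choose (j+δ') δ') ≤
           ∑ j ∈ Finset.range (t+1), Module.finrank k (U'^(j+1) : Submodule k F) :=
          Finset.sum_le_sum fun j _ => i2 j
        rw [Finset.sum_add_distrib, ← Finset.mul_sum, Nat.sum_range_add_choose] at h6
        have h7 := Nat.sum_range_add_choose (t+1) δ'
        rw [Finset.sum_range_succ'] at h7
        simp only [zero_add, Nat.choose_self] at h7
        subst hδδ
        rw [show d + 1 - (δ'+1) - 1 = d - δ' - 1 by omega, show t + 1 + (δ'+1) = t + 1 + δ' + 1 by ring,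
          show t + (δ'+1) = t + δ' + 1 by ring]
        omega
end Induct
end PD3


namespace PD3
section Upper
open MvPolynomial

theorem finrank_restrict_le (k : Type u) [Field k] (δ n : ℕ) :
    Module.finrank k (restrictTotalDegree (Fin δ) k n) ≤ Nat.choose (n + δ) δ := by
  classical
  let T : Finset (Fin δ →₀ ℕ) := (Finset.range (n+1)).biUnion
    (fun j => (Finset.univ : Finset (Fin δ)).finsuppAntidiag j)
  have hT : T.card ≤ Nat.choose (n + δ) δ := by
    refine Finset.card_biUnion_le.trans ?_
    simp only [Finset.card_finsuppAntidiag_nat_eq_choose, Finset.card_univ, Fintype.card_fin]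
    rcases δ with _ | m
    · simp only [Nat.choose_zero_right]
      rw [Finset.sum_range_succ']
      simp
    · have h2 : ∀ j, (m + 1 + j - 1).choose j = (j + m).choose m := by
        intro j
        rw [show m + 1 + j - 1 = j + m by omega, Nat.choose_symm_add]
      simp only [h2]
      rw [Nat.sum_range_add_choose]
      ring_nf
      exact le_rfl
  have hle : restrictTotalDegree (Fin δ) k n ≤ Submodule.span k
      ((T.image (fun e => monomial e (1:k)) : Finset _) : Set (MvPolynomial (Fin δ) k)) := by
    intro p hp
    rw [mem_restrictTotalDegree] at hp
    rw [p.as_sum]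
    refine sum_mem fun e he => ?_
    have : monomial e (p.coeff e) = (p.coeff e) • monomial e (1:k) := by
      rw [smul_monomial, smul_eq_mul, mul_one]
    rw [this]
    refine Submodule.smul_mem _ _ (Submodule.subset_span ?_)
    rw [Finset.coe_image]
    refine ⟨e, ?_, rfl⟩
    have h2 := (le_totalDegree he).trans hp
    simp only [T, Finset.coe_biUnion, Set.mem_iUnion, Finset.mem_coe, Finset.mem_range,
      Finset.mem_finsuppAntidiag]
    refine ⟨e.degree, ?_, ?_, by simp⟩
    · change e.degree ≤ n at h2
      omega
    · rw [Finsupp.degree_eq_sum]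
  refine (Submodule.finrank_mono hle).trans ((finrank_span_finset_le_card _).trans
    (Finset.card_image_le.trans hT))

theorem finrank_mul_le' {k R : Type u} [Field k] [CommRing R] [Algebra k R] (A B : Submodule k R)
    [FiniteDimensional k A] [FiniteDimensional k B] :
    Module.finrank k (A * B : Submodule k R) ≤ Module.finrank k A * Module.finrank k B := by
  rw [← Submodule.mulMap_range, ← Module.finrank_tensorProduct]
  exact LinearMap.finrank_range_le _

theorem hf_upper (k R : Type u) [Field k] [CommRing R] [IsDomain R] [Algebra k R] [Algebra.FiniteType k R]
    (U : Submodule k R) [FiniteDimensional k U] (δ : ℕ) (hδ : Algebra.trdeg k R = δ) :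
    ∃ C : ℕ, ∀ t : ℕ, Module.finrank k (U^t : Submodule k R) ≤ C * (t+1)^δ := by
  classical
  obtain ⟨m, g, hginj, hgfin⟩ := exists_finite_inj_algHom_of_fg k R
  letI : Algebra (MvPolynomial (Fin m) k) R := g.toRingHom.toAlgebra
  haveI : IsScalarTower k (MvPolynomial (Fin m) k) R := IsScalarTower.of_algebraMap_eq
    fun x => (g.commutes x).symm
  haveI hfin : Module.Finite (MvPolynomial (Fin m) k) R := hgfin
  haveI : FaithfulSMul (MvPolynomial (Fin m) k) R := (faithfulSMul_iff_algebraMap_injective _ _).2 hginj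
  have hm : m = δ := by
    have h1 := trdeg_eq_of_isAlgebraic k (MvPolynomial (Fin m) k) R
    rw [hδ, MvPolynomial.trdeg_of_isDomain] at h1
    have h2 : (δ : Cardinal.{u}) = m := by simpa using h1
    exact_mod_cast h2.symm
  subst hm
  obtain ⟨s, hs⟩ := hfin.fg_top
  let M : Submodule k R := Submodule.span k ((insert 1 s : Finset R) : Set R)
  let G : ℕ → Submodule k R := fun n => (restrictTotalDegree (Fin m) k n).map g.toLinearMap
  have hG1 : ∀ n, (1:R) ∈ G n := fun n => ⟨1, by
    simp only [SetLike.mem_coe, mem_restrictTotalDegree]; simp, by simp⟩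
  have hM1 : (1:R) ∈ M := Submodule.subset_span (by simp)
  have hGmono : ∀ a b, a ≤ b → G a ≤ G b := by
    intro a b hab
    refine Submodule.map_mono ?_
    intro p hp
    rw [mem_restrictTotalDegree] at hp ⊢
    omega
  have hGmul : ∀ a b, G a * G b ≤ G (a + b) := by
    intro a b
    rw [Submodule.mul_le]
    rintro _ ⟨p, hp, rfl⟩ _ ⟨q, hq, rfl⟩
    refine ⟨p * q, ?_, by simp⟩
    simp only [SetLike.mem_coe, mem_restrictTotalDegree] at hp hq ⊢
    exact (totalDegree_mul p q).trans (by omega)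
  have hex : ∀ x : R, ∃ a, x ∈ G a * M := by
    intro x
    have hx : x ∈ Submodule.span (MvPolynomial (Fin m) k) (s : Set R) := by rw [hs]; trivial
    induction hx using Submodule.span_induction with
    | mem x hx =>
      refine ⟨0, ?_⟩
      have : x ∈ M := Submodule.subset_span (by simp [Finset.mem_coe.1 hx])
      have := Submodule.mul_mem_mul (hG1 0) this
      simpa using this
    | zero => exact ⟨0, zero_mem _⟩
    | add x y _ _ hx hy =>
      obtain ⟨a, ha⟩ := hx
      obtain ⟨b, hb⟩ := hy
      exact ⟨max a b, add_mem (mul_le_mul_left (hGmono _ _ (le_max_left a b)) _ ha)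
        (mul_le_mul_left (hGmono _ _ (le_max_right a b)) _ hb)⟩
    | smul y x _ hx =>
      obtain ⟨a, ha⟩ := hx
      refine ⟨y.totalDegree + a, ?_⟩
      have h3 : g y * x ∈ G y.totalDegree * (G a * M) :=
        Submodule.mul_mem_mul ⟨y, by simp [mem_restrictTotalDegree], rfl⟩ ha
      rw [← mul_assoc] at h3
      exact mul_le_mul_left (hGmul _ _) _ h3
  choose a0 ha0 using hex
  haveI hMfd : FiniteDimensional k M := FiniteDimensional.span_finset k _
  haveI hGfd : ∀ n, FiniteDimensional k (G n) := fun n => inferInstanceAs (FiniteDimensional k (Submodule.map _ _))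
  obtain ⟨a, ha⟩ : ∃ a, U * M ≤ G a * M := by
    obtain ⟨T, hT⟩ := ((Submodule.fg_iff_finiteDimensional U).2 inferInstance).mul ((Submodule.fg_iff_finiteDimensional M).2 hMfd)
    refine ⟨T.sup a0, ?_⟩
    rw [← hT, Submodule.span_le]
    intro x hx
    exact mul_le_mul_left (hGmono _ _ (Finset.le_sup (f := a0) hx)) _ (ha0 x)
  have hpow : ∀ t, U^t * M ≤ G (t * a) * M := by
    intro t
    induction t with
    | zero =>
      rw [pow_zero]
      refine mul_le_mul_left ?_ _
      rw [Submodule.one_le]; exact hG1 _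
    | succ t ih =>
      calc U^(t+1) * M = U^t * (U * M) := by rw [pow_succ, mul_assoc]
        _ ≤ U^t * (G a * M) := mul_le_mul_right ha _
        _ = G a * (U^t * M) := by ring
        _ ≤ G a * (G (t * a) * M) := mul_le_mul_right ih _
        _ = G a * G (t * a) * M := by rw [mul_assoc]
        _ ≤ G (a + t * a) * M := mul_le_mul_left (hGmul _ _) _
        _ = G ((t+1) * a) * M := by congr 2; ring
  refine ⟨(a + m)^m * Module.finrank k M, fun t => ?_⟩
  have h1 : U^t ≤ G (t * a) * M := by
    refine le_trans ?_ (hpow t)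
    intro x hx
    have := Submodule.mul_mem_mul hx hM1
    simpa using this
  haveI : FiniteDimensional k (G (t*a) * M : Submodule k R) :=
    (Submodule.fg_iff_finiteDimensional _).1 (((Submodule.fg_iff_finiteDimensional _).2 (hGfd _)).mul
      ((Submodule.fg_iff_finiteDimensional M).2 hMfd))
  have h2 := (Submodule.finrank_mono h1).trans (finrank_mul_le' _ _)
  have h3 : Module.finrank k (G (t*a)) ≤ Nat.choose (t * a + m) m :=
    (Submodule.finrank_map_le _ _).trans (finrank_restrict_le k m _)
  have h4 : Nat.choose (t * a + m) m ≤ ((a + m) * (t+1))^m :=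
    (Nat.choose_le_pow _ _).trans (Nat.pow_le_pow_left (by nlinarith) _)
  rw [mul_pow] at h4
  calc _ ≤ _ := h2
    _ ≤ ((a+m)^m * (t+1)^m) * Module.finrank k M := Nat.mul_le_mul_right _ (h3.trans h4)
    _ = _ := by ring
end Upper
end PD3


namespace PD3
section Cone
open MvPolynomial

theorem mem_pow_of_adjoin {k F : Type u} [Field k] [CommRing F] [Algebra k F] (U : Submodule k F)
    (h1 : (1:F) ∈ U) (x : F) (hx : x ∈ Algebra.adjoin k (U : Set F)) : ∃ D : ℕ, ∀ n, D ≤ n → x ∈ U^n := by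
  have hmono : ∀ a b : ℕ, a ≤ b → U^a ≤ U^b := fun a b hab => pow_le_pow_right₀ (Submodule.one_le.2 h1) hab
  induction hx using Algebra.adjoin_induction with
  | mem x hx => exact ⟨1, fun n hn => hmono 1 n hn (by simpa using hx)⟩
  | algebraMap r =>
    refine ⟨0, fun n hn => hmono 0 n hn ?_⟩
    rw [pow_zero]
    exact Submodule.algebraMap_mem r
  | add x y _ _ hx hy =>
    obtain ⟨a, ha⟩ := hx
    obtain ⟨b, hb⟩ := hy
    exact ⟨max a b, fun n hn => add_mem (ha n (le_trans (le_max_left _ _) hn)) (hb n (le_trans (le_max_right _ _) hn))⟩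
  | mul x y _ _ hx hy =>
    obtain ⟨a, ha⟩ := hx
    obtain ⟨b, hb⟩ := hy
    refine ⟨a + b, fun n hn => hmono (a+b) n hn ?_⟩
    rw [pow_add]
    exact Submodule.mul_mem_mul (ha a le_rfl) (hb b le_rfl)

open scoped IntermediateField.algebraAdjoinAdjoin in
theorem cone_transcendental {k A F : Type u} [Field k] [CommRing A] [IsDomain A] [Algebra k A]
    [Field F] [Algebra k F] [Algebra A F] [IsScalarTower k A F] [IsFractionRing A F]
    (V : Submodule k A)
    (hgr : ∀ (s : Finset ℕ) (D : ℕ) (b : ℕ → A), (∀ j, b j ∈ V^(D+j)) → ∑ j ∈ s, b j = 0 → ∀ j ∈ s, b j = 0)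
    (w : A) (hw : w ∈ V) (hw0 : algebraMap A F w ≠ 0)
    (U : Submodule k F) (hU : U = (V.map (IsScalarTower.toAlgHom k A F).toLinearMap).map (LinearMap.mulLeft k (algebraMap A F w)⁻¹)) :
    Transcendental (IntermediateField.adjoin k (U : Set F)) (algebraMap A F w) := by
  set W := algebraMap A F w with hW
  have h1 : (1:F) ∈ U := by
    rw [hU]
    exact ⟨W, ⟨w, hw, rfl⟩, by simp [hw0]⟩
  intro halg
  haveI : IsScalarTower (Algebra.adjoin k (U : Set F)) (IntermediateField.adjoin k (U : Set F)) F :=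
    IsScalarTower.of_algebraMap_eq fun x => rfl
  rw [← IsFractionRing.isAlgebraic_iff (Algebra.adjoin k (U : Set F))] at halg
  obtain ⟨p, hp0, hp⟩ := halg
  apply hp0
  choose D hD using fun j => mem_pow_of_adjoin U h1 (p.coeff j : F) (p.coeff j).2
  let D0 := p.support.sup D
  have hc : ∀ j, ∃ b ∈ V^(D0 + j), algebraMap A F b = W^(D0+j) * (p.coeff j : F) := by
    intro j
    have hj : (p.coeff j : F) ∈ U^D0 := by
      by_cases hjs : j ∈ p.support
      · exact hD j _ (Finset.le_sup (f := D) hjs)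
      · rw [Polynomial.notMem_support_iff.1 hjs]; exact zero_mem _
    have hUpow : U^D0 = ((V^D0).map (IsScalarTower.toAlgHom k A F).toLinearMap).map
        (LinearMap.mulLeft k (W⁻¹^D0)) := by
      rw [hU, map_mulLeft_pow, ← Submodule.map_pow]
    have hj := hUpow.le hj
    obtain ⟨_, ⟨y, hy, rfl⟩, hy2⟩ := hj
    refine ⟨w^j * y, ?_, ?_⟩
    · rw [add_comm, pow_add]
      exact Submodule.mul_mem_mul (Submodule.pow_mem_pow _ hw _) hy
    · rw [← hy2, map_mul, map_pow, LinearMap.mulLeft_apply]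
      change W^j * algebraMap A F y = W^(D0+j) * (W⁻¹^D0 * algebraMap A F y)
      rw [pow_add, inv_pow]
      field_simp
  choose b hb hb2 using hc
  have hinj : Function.Injective (algebraMap A F) := IsFractionRing.injective A F
  have hsum : ∑ j ∈ p.support, b j = 0 := by
    apply hinj
    rw [map_sum, map_zero]
    rw [Polynomial.aeval_def, Polynomial.eval₂_eq_sum, Polynomial.sum] at hp
    have := congrArg (fun z => W^D0 * z) hp
    simp only [mul_zero, Finset.mul_sum] at this
    rw [← this]
    refine Finset.sum_congr rfl fun j _ => ?_
    rw [hb2 j, pow_add]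
    change _ = W^D0 * ((p.coeff j : F) * W^j)
    ring
  have hz := hgr p.support D0 b hb hsum
  ext j
  by_cases hjs : j ∈ p.support
  · have h3 := hb2 j
    rw [hz j hjs, map_zero] at h3
    have h4 := (mul_eq_zero.1 h3.symm).resolve_left (pow_ne_zero _ hw0)
    rw [h4]; simp
  · rw [Polynomial.notMem_support_iff.1 hjs]; simp

theorem hf_cone {k A F : Type u} [Field k] [IsAlgClosed k] [CommRing A] [IsDomain A] [Algebra k A]
    [Field F] [Algebra k F] [Algebra A F] [IsScalarTower k A F] [IsFractionRing A F]
    (V : Submodule k A) [FiniteDimensional k V] (hadj : Algebra.adjoin k (V : Set A) = ⊤)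
    (hgr : ∀ (s : Finset ℕ) (D : ℕ) (b : ℕ → A), (∀ j, b j ∈ V^(D+j)) → ∑ j ∈ s, b j = 0 → ∀ j ∈ s, b j = 0)
    (δ : ℕ) (hδ : Algebra.trdeg k A = (δ + 1 : ℕ)) :
    δ + 1 ≤ Module.finrank k V ∧
    (∀ t : ℕ, Nat.choose (t+1+δ) δ + (Module.finrank k V - δ - 1) * Nat.choose (t+δ) δ ≤
        Module.finrank k (V^(t+1) : Submodule k A)) ∧
    ∃ C : ℕ, ∀ t : ℕ, Module.finrank k (V^t : Submodule k A) ≤ C * (t+1)^δ := by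
  have hinj : Function.Injective (algebraMap A F) := IsFractionRing.injective A F
  obtain ⟨w, hw, hw0'⟩ : ∃ w ∈ V, w ≠ 0 := by
    apply Submodule.exists_mem_ne_zero_of_ne_bot
    intro h
    have : Algebra.trdeg k A = 0 := by
      haveI := FaithfulSMul.algebraMap_injective k A
      rw [trdeg_eq_zero_iff]
      refine ⟨fun x => ?_⟩
      have hx : x ∈ Algebra.adjoin k (V : Set A) := by rw [hadj]; trivial
      rw [h, ← Algebra.adjoin_span] at hx
      simp only [Submodule.bot_coe, Submodule.span_zero_singleton, Algebra.adjoin_singleton_zero] at hx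
      obtain ⟨c, rfl⟩ := Algebra.mem_bot.1 hx
      exact isAlgebraic_algebraMap c
    rw [hδ] at this
    exact_mod_cast this
  set W := algebraMap A F w with hW
  have hw0 : W ≠ 0 := fun h => hw0' (hinj (by rw [← hW, h, map_zero]))
  let VF := V.map (IsScalarTower.toAlgHom k A F).toLinearMap
  let U : Submodule k F := VF.map (LinearMap.mulLeft k W⁻¹)
  have htr := cone_transcendental V hgr w hw hw0 U rfl
  have h1 : (1:F) ∈ U := ⟨W, ⟨w, hw, rfl⟩, by simp [hw0]⟩
  haveI : FiniteDimensional k VF := inferInstanceAs (FiniteDimensional k (V.map _))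
  haveI hUfd : FiniteDimensional k U := inferInstanceAs (FiniteDimensional k (VF.map _))
  have hpow : ∀ n, Module.finrank k (U^n : Submodule k F) = Module.finrank k (V^n : Submodule k A) := by
    intro n
    rw [finrank_scale VF _ (inv_ne_zero hw0), ← Submodule.map_pow]
    exact (Submodule.equivMapOfInjective _ hinj _).finrank_eq.symm
  have hd : Module.finrank k U = Module.finrank k V := by
    have := hpow 1; rwa [pow_one, pow_one] at this
  have htop : IntermediateField.adjoin (IntermediateField.adjoin k (U : Set F)) {W} = ⊤ := by
    rw [eq_top_iff]
    have hWm : W ∈ IntermediateField.adjoin (IntermediateField.adjoin k (U : Set F)) {W} :=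
      IntermediateField.mem_adjoin_simple_self _ _
    have hA : ∀ a : A, algebraMap A F a ∈ IntermediateField.adjoin (IntermediateField.adjoin k (U : Set F)) {W} := by
      intro a
      have ha : a ∈ Algebra.adjoin k (V : Set A) := by rw [hadj]; trivial
      induction ha using Algebra.adjoin_induction with
      | mem x hx =>
        have h2 : W⁻¹ * algebraMap A F x ∈ U := ⟨algebraMap A F x, ⟨x, hx, rfl⟩, rfl⟩
        have h3 : W⁻¹ * algebraMap A F x ∈ IntermediateField.adjoin (IntermediateField.adjoin k (U : Set F)) {W} :=
          IntermediateField.algebraMap_mem _ (⟨_, IntermediateField.subset_adjoin k _ h2⟩ : IntermediateField.adjoin k (U : Set F))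
        have h4 := mul_mem hWm h3
        rwa [mul_inv_cancel_left₀ hw0] at h4
      | algebraMap r =>
        rw [← IsScalarTower.algebraMap_apply k A F]
        exact IntermediateField.algebraMap_mem _ (algebraMap k (IntermediateField.adjoin k (U : Set F)) r)
      | add x y _ _ hx hy => rw [map_add]; exact add_mem hx hy
      | mul x y _ _ hx hy => rw [map_mul]; exact mul_mem hx hy
    intro x _
    obtain ⟨a, b, hb, rfl⟩ := IsFractionRing.div_surjective (A := A) x
    exact div_mem (hA a) (hA b)
  have htrF : Algebra.trdeg k F = Algebra.trdeg k A := by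
    haveI : Algebra.IsAlgebraic A F := IsLocalization.isAlgebraic _ (nonZeroDivisors A)
    exact trdeg_eq_of_isAlgebraic k A F
  have h5 := trdeg_simple_trans k _ F W htr
  rw [htop] at h5
  have h6 : Algebra.trdeg k (⊤ : IntermediateField (IntermediateField.adjoin k (U : Set F)) F) = Algebra.trdeg k F :=
    AlgEquiv.trdeg_eq ((IntermediateField.topEquiv (F := IntermediateField.adjoin k (U : Set F)) (E := F)).restrictScalars k)
  rw [h6, htrF, hδ] at h5
  have h7 : Algebra.trdeg k (IntermediateField.adjoin k (U : Set F)) = δ := by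
    push_cast at h5
    exact (Cardinal.add_one_inj.1 h5).symm
  obtain ⟨g1, g2⟩ := hf_lower k F _ U h1 hd δ h7
  refine ⟨g1, fun t => ?_, ?_⟩
  · rw [← hpow]; exact g2 t
  · let R := Algebra.adjoin k (U : Set F)
    have hRδ : Algebra.trdeg k R = δ := by rw [← trdeg_adjoin_field]; exact h7
    have hRft : Algebra.FiniteType k R := by
      rw [← Subalgebra.fg_iff_finiteType]
      obtain ⟨s, hs⟩ := (Submodule.fg_iff_finiteDimensional U).2 hUfd
      refine ⟨s, ?_⟩
      rw [← Algebra.adjoin_span, hs]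
    let V' : Submodule k R := U.comap R.val.toLinearMap
    have hinj' : Function.Injective R.val.toLinearMap := Subtype.val_injective
    have hVU : V'.map R.val.toLinearMap = U := by
      rw [Submodule.map_comap_eq, inf_eq_right]
      intro x hx
      exact ⟨⟨x, Algebra.subset_adjoin hx⟩, rfl⟩
    let eV : V' ≃ₗ[k] U := (Submodule.equivMapOfInjective _ hinj' V').trans (LinearEquiv.ofEq _ _ hVU)
    haveI hVfd : FiniteDimensional k V' := LinearEquiv.finiteDimensional eV.symm
    obtain ⟨C, hC⟩ := hf_upper k R V' δ hRδ
    refine ⟨C, fun t => ?_⟩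
    rw [← hpow, ← hVU, ← Submodule.map_pow, ← (Submodule.equivMapOfInjective _ hinj' _).finrank_eq]
    exact hC t
end Cone

section HomPrime
open MvPolynomial
/-- elementary homogeneity -/
def Hom {k : Type u} [Field k] {N : ℕ} (J : Ideal (MvPolynomial (Fin N) k)) : Prop :=
  ∀ f ∈ J, ∀ d, homogeneousComponent d f ∈ J

theorem hilb_eq_pow {k : Type u} [Field k] {N : ℕ} (J : Ideal (MvPolynomial (Fin N) k)) (d : ℕ) :
    hilbertFunction k J d = Module.finrank k (((homogeneousSubmodule (Fin N) k 1).map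
      (Ideal.Quotient.mkₐ k J).toLinearMap)^d : Submodule k _) := by
  unfold hilbertFunction
  rw [← homogeneousSubmodule_one_pow, Submodule.map_pow]

theorem hom_sum_mem {k : Type u} [Field k] {N : ℕ} (J : Ideal (MvPolynomial (Fin N) k)) (hJ : Hom J)
    (s : Finset ℕ) (D : ℕ) (b : ℕ → MvPolynomial (Fin N) k) (hb : ∀ j, (b j).IsHomogeneous (D + j))
    (h : ∑ j ∈ s, b j ∈ J) : ∀ j ∈ s, b j ∈ J := by
  intro j hj
  have h2 := hJ _ h (D + j)
  rw [map_sum, Finset.sum_eq_single j] at h2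
  · rwa [homogeneousComponent_of_mem (hb j), if_pos rfl] at h2
  · intro i _ hij
    rw [homogeneousComponent_of_mem (hb i), if_neg]
    omega
  · intro h; exact absurd hj h

theorem hf_prime {k : Type u} [Field k] [IsAlgClosed k] {N : ℕ} (P : Ideal (MvPolynomial (Fin N) k)) [P.IsPrime]
    (hP : Hom P) (δ : ℕ) (hδ : Algebra.trdeg k (MvPolynomial (Fin N) k ⧸ P) = (δ + 1 : ℕ)) :
    δ + 1 ≤ hilbertFunction k P 1 ∧
    (∀ t : ℕ, Nat.choose (t+1+δ) δ + (hilbertFunction k P 1 - δ - 1) * Nat.choose (t+δ) δ ≤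
        hilbertFunction k P (t+1)) ∧
    ∃ C : ℕ, ∀ t : ℕ, hilbertFunction k P t ≤ C * (t+1)^δ := by
  let V := (homogeneousSubmodule (Fin N) k 1).map (Ideal.Quotient.mkₐ k P).toLinearMap
  haveI : FiniteDimensional k V := inferInstanceAs (FiniteDimensional k (Submodule.map _ _))
  have hV1 : hilbertFunction k P 1 = Module.finrank k V := rfl
  have hVt : ∀ t, hilbertFunction k P t = Module.finrank k (V^t : Submodule k _) := hilb_eq_pow P
  have hadj : Algebra.adjoin k (V : Set (MvPolynomial (Fin N) k ⧸ P)) = ⊤ := by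
    rw [eq_top_iff]
    rintro x -
    obtain ⟨x, rfl⟩ := Ideal.Quotient.mk_surjective x
    induction x using MvPolynomial.induction_on with
    | C a => exact Subalgebra.algebraMap_mem _ a
    | add p q hp hq => rw [map_add]; exact add_mem hp hq
    | mul_X p i hp =>
      rw [map_mul]
      refine mul_mem hp (Algebra.subset_adjoin ⟨X i, isHomogeneous_X _ _, rfl⟩)
  have hgr : ∀ (s : Finset ℕ) (D : ℕ) (b : ℕ → MvPolynomial (Fin N) k ⧸ P), (∀ j, b j ∈ V^(D+j)) →
      ∑ j ∈ s, b j = 0 → ∀ j ∈ s, b j = 0 := by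
    intro s D b hb hs
    have hb' : ∀ j, ∃ c : MvPolynomial (Fin N) k, c.IsHomogeneous (D+j) ∧ Ideal.Quotient.mk P c = b j := by
      intro j
      have := hb j
      rw [← Submodule.map_pow, homogeneousSubmodule_one_pow] at this
      obtain ⟨c, hc, hc2⟩ := this
      exact ⟨c, hc, hc2⟩
    choose c hc hc2 using hb'
    simp only [← hc2, ← map_sum, Ideal.Quotient.eq_zero_iff_mem] at hs ⊢
    exact hom_sum_mem P hP s D c hc hs
  have := hf_cone (F := FractionRing (MvPolynomial (Fin N) k ⧸ P)) V hadj hgr δ hδ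
  rw [hV1]
  simp only [hVt]
  exact this
end HomPrime
end PD3


namespace PD3
section Height
open Polynomial

attribute [local instance] Polynomial.algebra Polynomial.isLocalization in
theorem height_one_of_fiber {B : Type u} [CommRing B] [IsDomain B] (Q : Ideal B[X]) [hQ : Q.IsPrime]
    (hQB : ∀ b : B, C b ∈ Q → b = 0) (hQ0 : Q ≠ ⊥) : Q.height = 1 := by
  let K := FractionRing B
  have disj : Disjoint ((nonZeroDivisors B).map C : Set B[X]) Q := by
    refine Set.disjoint_left.mpr ?_
    rintro a ⟨b, hb, rfl⟩ ha
    exact nonZeroDivisors.ne_zero hb (hQB b ha)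
  have h1 := IsLocalization.height_map_of_disjoint (S := K[X]) ((nonZeroDivisors B).map C) Q disj
  haveI hp : (Q.map (algebraMap B[X] K[X])).IsPrime :=
    IsLocalization.isPrime_of_isPrime_disjoint ((nonZeroDivisors B).map C) _ _ hQ disj
  have hne : Q.map (algebraMap B[X] K[X]) ≠ ⊥ := by
    intro h
    apply hQ0
    rw [eq_bot_iff]
    intro f hf
    have h2 : algebraMap B[X] K[X] f ∈ Q.map (algebraMap B[X] K[X]) := Ideal.mem_map_of_mem _ hf
    rw [h, Ideal.mem_bot] at h2
    exact Polynomial.map_injective _ (IsFractionRing.injective B K) (by rw [Polynomial.map_zero]; exact h2)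
  haveI : (Q.map (algebraMap B[X] K[X])).IsMaximal := IsPrime.to_maximal_ideal hne
  rw [← h1]
  exact IsPrincipalIdealRing.height_eq_one_of_isMaximal _ (Polynomial.not_isField K)

theorem trdeg_fiber {k B : Type u} [Field k] [CommRing B] [IsDomain B] [Algebra k B] (Q : Ideal B[X]) [hQ : Q.IsPrime]
    (hQB : ∀ b : B, C b ∈ Q → b = 0) (hQ0 : Q ≠ ⊥) : Algebra.trdeg k (B[X] ⧸ Q) = Algebra.trdeg k B := by
  haveI : FaithfulSMul B (B[X] ⧸ Q) := by
    refine (faithfulSMul_iff_algebraMap_injective B (B[X] ⧸ Q)).2 ((injective_iff_map_eq_zero (algebraMap B (B[X] ⧸ Q))).2 ?_)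
    intro b hb
    exact hQB b (Ideal.Quotient.eq_zero_iff_mem.1 hb)
  have hX : IsAlgebraic B (Ideal.Quotient.mk Q X) := by
    obtain ⟨g, hg, hg0⟩ := Submodule.exists_mem_ne_zero_of_ne_bot hQ0
    refine ⟨g, hg0, ?_⟩
    have : aeval (Ideal.Quotient.mk Q X) g = Ideal.Quotient.mkₐ B Q (aeval X g) := by
      rw [← Polynomial.aeval_algHom_apply]; rfl
    rw [this, Polynomial.aeval_X_left_apply]
    exact Ideal.Quotient.eq_zero_iff_mem.2 hg
  haveI : Algebra.IsAlgebraic B (B[X] ⧸ Q) := by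
    refine ⟨fun x => ?_⟩
    obtain ⟨f, rfl⟩ := Ideal.Quotient.mk_surjective x
    induction f using Polynomial.induction_on' with
    | add p q hp hq => rw [map_add]; exact hp.add hq
    | monomial n a =>
      rw [← C_mul_X_pow_eq_monomial, map_mul, map_pow]
      exact (isAlgebraic_algebraMap a).mul (hX.pow n)
  exact trdeg_eq_of_isAlgebraic k B _

def DimF (k : Type u) [Field k] (R : Type u) [CommRing R] [Algebra k R] (N : ℕ) : Prop :=
  ∀ P : Ideal R, P.IsPrime → ∃ h τ : ℕ, P.height = h ∧ Algebra.trdeg k (R ⧸ P) = τ ∧ h + τ = N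

theorem DimF.equiv {k : Type u} [Field k] {R R' : Type u} [CommRing R] [Algebra k R] [CommRing R'] [Algebra k R']
    (e : R ≃ₐ[k] R') {N : ℕ} (h : DimF k R N) : DimF k R' N := by
  intro P hP
  obtain ⟨a, b, h1, h2, h3⟩ := h (P.comap e) inferInstance
  refine ⟨a, b, ?_, ?_, h3⟩
  · rw [← h1]; exact (e.toRingEquiv.height_comap P).symm
  · rw [← h2]
    refine (AlgEquiv.trdeg_eq (Ideal.quotientEquivAlg (P.comap e) P e ?_)).symm
    exact (Ideal.map_comap_of_surjective _ e.surjective P).symm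

theorem height_aux {R : Type u} [CommRing R] (p : Ideal R) (P : Ideal R[X]) :
    (P.map (Ideal.Quotient.mk <| p.map (algebraMap R R[X]))).height =
      (P.map (Polynomial.mapRingHom (Ideal.Quotient.mk p))).height := by
  have h := (Ideal.polynomialQuotientEquivQuotientPolynomial p).symm.height_map
    (P.map (Ideal.Quotient.mk <| p.map C))
  have h2 : Ideal.map (Ideal.polynomialQuotientEquivQuotientPolynomial p).symm (P.map (Ideal.Quotient.mk <| p.map C))
    = P.map (Polynomial.mapRingHom (Ideal.Quotient.mk p)) := by
    have h3 : ((Ideal.polynomialQuotientEquivQuotientPolynomial p).symm : _ →+* _).comp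
      (Ideal.Quotient.mk <| p.map C) = Polynomial.mapRingHom (Ideal.Quotient.mk p) := by
      ext x <;> simp
    rw [← h3, ← Ideal.map_map]
    rfl
  rw [h2] at h
  exact h.symm

theorem DimF.poly {k : Type u} [Field k] {R : Type u} [CommRing R] [IsNoetherianRing R] [Algebra k R] {N : ℕ}
    (h : DimF k R N) : DimF k R[X] (N+1) := by
  intro P hP
  let p : Ideal R := P.under R
  haveI hp : p.IsPrime := inferInstance
  haveI : P.LiesOver p := ⟨rfl⟩
  obtain ⟨a, b, h1, h2, h3⟩ := h p hp
  let φ : R[X] →ₐ[k] (R ⧸ p)[X] := Polynomial.mapAlgHom (Ideal.Quotient.mkₐ k p)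
  have hφ : Function.Surjective φ := Polynomial.map_surjective _ Ideal.Quotient.mk_surjective
  have hker : RingHom.ker φ = p.map C := by
    change RingHom.ker (Polynomial.mapRingHom (Ideal.Quotient.mk p)) = _
    rw [Polynomial.ker_mapRingHom, Ideal.mk_ker]
  have hpP : p.map C ≤ P := Ideal.map_le_iff_le_comap.2 le_rfl
  let Q := P.map φ
  have hQc : Q.comap φ = P := by
    rw [Ideal.comap_map_of_surjective _ hφ, sup_eq_left]
    rw [← RingHom.ker_eq_comap_bot, hker]; exact hpP
  haveI hQ : Q.IsPrime := Ideal.map_isPrime_of_surjective hφ (by rw [hker]; exact hpP)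
  have hQB : ∀ b : R ⧸ p, C b ∈ Q → b = 0 := by
    intro b hb
    obtain ⟨b, rfl⟩ := Ideal.Quotient.mk_surjective b
    have h5 : C b ∈ Q.comap φ := by
      rw [Ideal.mem_comap]
      change Polynomial.map _ _ ∈ Q
      rw [Polynomial.map_C]; exact hb
    rw [hQc] at h5
    exact Ideal.Quotient.eq_zero_iff_mem.2 h5
  have hheight : P.height = p.height + Q.height := by
    rw [Ideal.height_eq_height_add_of_liesOver_of_hasGoingDown p P]
    rw [height_aux p P]
    rfl
  have htr : Algebra.trdeg k (R[X] ⧸ P) = Algebra.trdeg k ((R ⧸ p)[X] ⧸ Q) := by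
    refine AlgEquiv.trdeg_eq (AlgEquiv.ofBijective (Ideal.quotientMapₐ Q φ hQc.ge) ⟨?_, ?_⟩)
    · exact Ideal.quotientMap_injective' (H := hQc.ge) hQc.le
    · exact Ideal.quotientMap_surjective (H := hQc.ge) hφ
  by_cases hQ0 : Q = ⊥
  · refine ⟨a, b + 1, ?_, ?_, by omega⟩
    · rw [hheight, hQ0, Ideal.height_bot, h1, add_zero]
    · rw [htr, hQ0, AlgEquiv.trdeg_eq ((AlgEquiv.quotientBot k (R ⧸ p)[X])),
        ← trdeg_add_eq k (R ⧸ p), h2, Polynomial.trdeg_of_isDomain]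
      push_cast; rfl
  · refine ⟨a + 1, b, ?_, ?_, by omega⟩
    · rw [hheight, height_one_of_fiber Q hQB hQ0, h1]; push_cast; rfl
    · rw [htr, trdeg_fiber Q hQB hQ0, h2]

theorem dimF_mv (k : Type u) [Field k] (N : ℕ) : DimF k (MvPolynomial (Fin N) k) N := by
  induction N with
  | zero =>
    refine DimF.equiv (MvPolynomial.isEmptyAlgEquiv k (Fin 0)).symm ?_
    intro P hP
    obtain rfl : P = ⊥ := (Ideal.eq_bot_or_top P).resolve_right hP.ne_top
    refine ⟨0, 0, by simp, ?_, rfl⟩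
    rw [AlgEquiv.trdeg_eq (AlgEquiv.quotientBot k k)]
    rw [Nat.cast_zero, trdeg_eq_zero_iff]
    infer_instance
  | succ n ih => exact DimF.equiv (MvPolynomial.finSuccEquiv k n).symm ih.poly
end Height
end PD3


namespace PD3
section Height2
open MvPolynomial

theorem heightENat_le {R : Type u} [CommRing R] {I P : Ideal R} [hP : P.IsPrime] (h : I ≤ P) : I.heightENat ≤ P.height := by
  have h1 := PrimeSpectrum.height_eq_orderHeight (⟨P, hP⟩ : PrimeSpectrum R)
  have : P.height = Order.height (⟨P, hP⟩ : PrimeSpectrum R) := h1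
  rw [this]
  exact iInf₂_le (⟨P, hP⟩ : PrimeSpectrum R) h

theorem heightENat_prime {R : Type u} [CommRing R] (P : Ideal R) [hP : P.IsPrime] : P.heightENat = P.height := by
  refine le_antisymm (heightENat_le le_rfl) ?_
  refine le_iInf₂ fun q hq => ?_
  have h1 := PrimeSpectrum.height_eq_orderHeight q
  rw [← h1]
  exact Ideal.height_mono hq

theorem not_le_span {R : Type u} [CommRing R] [IsNoetherianRing R] {I : Ideal R} (hI : I.heightENat = 3) (a b : R)
    (h : I ≤ Ideal.span {a, b}) : Ideal.span {a, b} = ⊤ := by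
  classical
  by_contra hne
  obtain ⟨P, hP⟩ := Ideal.nonempty_minimalPrimes hne
  haveI := hP.1.1
  have h1 : P.height ≤ 2 := by
    have h2 := Ideal.height_le_card_of_mem_minimalPrimes_span_finset (p := P) (s := {a, b}) (by simpa using hP)
    refine h2.trans ?_
    exact_mod_cast Finset.card_le_two
  have h3 := heightENat_le (h.trans hP.1.2)
  rw [hI] at h3
  have := h3.trans h1
  exact absurd this (by decide)

attribute [local instance] MvPolynomial.gradedAlgebra

theorem decompose_eq {k : Type u} [Field k] {N : ℕ} (f : MvPolynomial (Fin N) k) (d : ℕ) :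
    (DirectSum.decompose (homogeneousSubmodule (Fin N) k) f d : MvPolynomial (Fin N) k) = homogeneousComponent d f := by
  rw [← MvPolynomial.decomposition.decompose'_apply]
  rfl

theorem hom_iff {k : Type u} [Field k] {N : ℕ} (J : Ideal (MvPolynomial (Fin N) k)) :
    Hom J ↔ J.IsHomogeneous (homogeneousSubmodule (Fin N) k) := by
  constructor
  · intro h d f hf
    rw [decompose_eq]; exact h f hf d
  · intro h f hf d
    rw [← decompose_eq]; exact h d hf

theorem hom_span {k : Type u} [Field k] {N : ℕ} (s : Set (MvPolynomial (Fin N) k)) (hs : ∀ f ∈ s, ∃ d, f.IsHomogeneous d) :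
    Hom (Ideal.span s) := by
  rw [hom_iff]
  exact Ideal.homogeneous_span _ _ fun f hf => hs f hf

theorem hom_of_height {k : Type u} [Field k] {N : ℕ} {I p : Ideal (MvPolynomial (Fin N) k)} [hp : p.IsPrime]
    (hI : Hom I) (hIp : I ≤ p) (h3 : I.heightENat = 3) (hp3 : p.heightENat = 3) : Hom p := by
  let c := (p.homogeneousCore (homogeneousSubmodule (Fin N) k)).toIdeal
  have hc : c.IsPrime := Ideal.IsPrime.homogeneousCore hp
  have hcp : c ≤ p := Ideal.toIdeal_homogeneousCore_le _ _
  have hIc : I ≤ c := by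
    have := Ideal.homogeneousCore_mono (homogeneousSubmodule (Fin N) k) hIp
    have h2 := ((hom_iff I).1 hI).toIdeal_homogeneousCore_eq_self
    rw [← h2]
    exact this
  have h4 := heightENat_le hIc
  rw [h3] at h4
  rw [heightENat_prime] at hp3
  have hpc : c = p := by
    by_contra hne
    have hlt : c < p := lt_of_le_of_ne hcp hne
    have := Ideal.height_add_one_le_of_lt_of_isPrime hlt
    rw [hp3] at this
    have h5 : (3 : ℕ∞) + 1 ≤ 3 := (add_le_add_left h4 1).trans this
    exact absurd h5 (by decide)
  rw [hom_iff, ← hpc]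
  exact (p.homogeneousCore (homogeneousSubmodule (Fin N) k)).isHomogeneous
end Height2
end PD3


namespace PD3
section HF
open MvPolynomial

theorem finrank_map_ker {k V V' : Type u} [Field k] [AddCommGroup V] [Module k V] [AddCommGroup V'] [Module k V']
    (φ : V →ₗ[k] V') (W : Submodule k V) [FiniteDimensional k W] :
    Module.finrank k (W.map φ) + Module.finrank k (W ⊓ LinearMap.ker φ : Submodule k V) = Module.finrank k W := by
  have h := LinearMap.finrank_range_add_finrank_ker (φ.domRestrict W)
  rw [LinearMap.range_domRestrict] at h
  have hk : LinearMap.ker (φ.domRestrict W) = (W ⊓ LinearMap.ker φ).comap W.subtype := by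
    ext x
    simp
  rw [hk, (Submodule.comapSubtypeEquivOfLe inf_le_left).finrank_eq] at h
  exact h

variable {k : Type u} [Field k] {N : ℕ}

/-- the degree d part of J -/
noncomputable def part (J : Ideal (MvPolynomial (Fin N) k)) (d : ℕ) : Submodule k (MvPolynomial (Fin N) k) :=
  homogeneousSubmodule (Fin N) k d ⊓ J.restrictScalars k

theorem mem_part (J : Ideal (MvPolynomial (Fin N) k)) (d : ℕ) (f : MvPolynomial (Fin N) k) :
    f ∈ part J d ↔ f.IsHomogeneous d ∧ f ∈ J := Iff.rfl

instance part_fd (J : Ideal (MvPolynomial (Fin N) k)) (d : ℕ) : FiniteDimensional k (part J d) :=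
  Submodule.finiteDimensional_of_le (S₂ := homogeneousSubmodule (Fin N) k d) inf_le_left

theorem finrank_S (d : ℕ) : Module.finrank k (homogeneousSubmodule (Fin N) k d) = (N + d - 1).choose d := by
  rw [finrank_homog]; simp

/-- a linear map with kernel J computes the Hilbert function -/
theorem hilb_of_ker {V' : Type u} [AddCommGroup V'] [Module k V'] (J : Ideal (MvPolynomial (Fin N) k)) (d : ℕ)
    (φ : MvPolynomial (Fin N) k →ₗ[k] V') (hφ : ∀ f, φ f = 0 ↔ f ∈ J) :
    Module.finrank k ((homogeneousSubmodule (Fin N) k d).map φ) + Module.finrank k (part J d) = (N + d - 1).choose d := by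
  rw [← finrank_S (k := k), ← finrank_map_ker φ (homogeneousSubmodule (Fin N) k d)]
  have : LinearMap.ker φ = J.restrictScalars k := by
    ext f
    rw [LinearMap.mem_ker, hφ]; rfl
  rw [this]; rfl

theorem hilb_add (J : Ideal (MvPolynomial (Fin N) k)) (d : ℕ) :
    hilbertFunction k J d + Module.finrank k (part J d) = (N + d - 1).choose d :=
  hilb_of_ker J d _ fun f => Ideal.Quotient.eq_zero_iff_mem

theorem hilb_mono {J J' : Ideal (MvPolynomial (Fin N) k)} (h : J ≤ J') (d : ℕ) :
    hilbertFunction k J' d ≤ hilbertFunction k J d := by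
  have h1 := hilb_add J d
  have h2 := hilb_add J' d
  have h3 : Module.finrank k (part J d) ≤ Module.finrank k (part J' d) :=
    Submodule.finrank_mono fun f hf => ⟨hf.1, h hf.2⟩
  omega

theorem hilb_kill {M : ℕ} (π : MvPolynomial (Fin N) k →ₐ[k] MvPolynomial (Fin M) k)
    (hhom : ∀ d f, f.IsHomogeneous d → (π f).IsHomogeneous d)
    (hlift : ∀ d, ∀ g : MvPolynomial (Fin M) k, g.IsHomogeneous d → ∃ f, f.IsHomogeneous d ∧ π f = g)
    (J : Ideal (MvPolynomial (Fin M) k)) (d : ℕ) :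
    hilbertFunction k (J.comap π) d = hilbertFunction k J d := by
  have h1 := hilb_add (J.comap π) d
  have h2 := hilb_of_ker (J.comap π) d ((Ideal.Quotient.mkₐ k J).toLinearMap ∘ₗ π.toLinearMap) (by
    intro f
    exact Ideal.Quotient.eq_zero_iff_mem)
  rw [Submodule.map_comp] at h2
  have h3 : (homogeneousSubmodule (Fin N) k d).map π.toLinearMap = homogeneousSubmodule (Fin M) k d := by
    apply le_antisymm
    · rintro _ ⟨f, hf, rfl⟩; exact hhom d f hf
    · intro g hg
      obtain ⟨f, hf, rfl⟩ := hlift d g hg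
      exact ⟨f, hf, rfl⟩
  rw [h3] at h2
  change hilbertFunction k J d + _ = _ at h2
  omega

theorem comp_mul {e t : ℕ} (g : MvPolynomial (Fin N) k) (hg : g.IsHomogeneous e) (het : e ≤ t)
    (h : MvPolynomial (Fin N) k) : homogeneousComponent t (g * h) = g * homogeneousComponent (t - e) h := by
  classical
  conv_lhs => rw [← sum_homogeneousComponent h, Finset.mul_sum, map_sum]
  have h1 : ∀ i, homogeneousComponent t (g * homogeneousComponent i h) =
      if i = t - e then g * homogeneousComponent i h else 0 := by
    intro i
    rw [homogeneousComponent_of_mem (hg.mul (homogeneousComponent_isHomogeneous i h))]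
    by_cases hi : i = t - e
    · rw [if_pos hi, if_pos (by omega)]
    · rw [if_neg hi, if_neg (by omega)]
  simp only [h1]
  rw [Finset.sum_ite_eq']
  split_ifs with hm
  · rfl
  · rw [homogeneousComponent_eq_zero _ _ (by rw [Finset.mem_range] at hm; omega), mul_zero]

theorem hilb_colon (J K : Ideal (MvPolynomial (Fin N) k)) (hJ : Hom J) (e t : ℕ) (het : e ≤ t)
    (g : MvPolynomial (Fin N) k) (hg : g.IsHomogeneous e) (hK : ∀ f, f ∈ K ↔ g * f ∈ J) :
    hilbertFunction k J t = hilbertFunction k (J ⊔ Ideal.span {g}) t + hilbertFunction k K (t - e) := by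
  let φ := (Ideal.Quotient.mkₐ k J).toLinearMap
  have h1 := hilb_add J t
  have h2 := hilb_add (J ⊔ Ideal.span {g}) t
  have h3 := hilb_add K (t - e)
  have h4 := hilb_of_ker K (t - e) (φ ∘ₗ LinearMap.mulLeft k g) (by
    intro f
    rw [hK]
    exact Ideal.Quotient.eq_zero_iff_mem)
  have h5 := finrank_map_ker φ (part (J ⊔ Ideal.span {g}) t)
  have h6 : part (J ⊔ Ideal.span {g}) t ⊓ LinearMap.ker φ = part J t := by
    ext f
    have : f ∈ LinearMap.ker φ ↔ f ∈ J := Ideal.Quotient.eq_zero_iff_mem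
    rw [Submodule.mem_inf, this, mem_part, mem_part]
    constructor
    · rintro ⟨⟨a, _⟩, b⟩; exact ⟨a, b⟩
    · rintro ⟨a, b⟩; exact ⟨⟨a, Ideal.mem_sup_left b⟩, b⟩
  have h7 : (part (J ⊔ Ideal.span {g}) t).map φ =
      (homogeneousSubmodule (Fin N) k (t-e)).map (φ ∘ₗ LinearMap.mulLeft k g) := by
    apply le_antisymm
    · rintro _ ⟨f, ⟨hf1, hf2⟩, rfl⟩
      obtain ⟨j, hj, x, hx, hjx⟩ := Submodule.mem_sup.1 hf2
      obtain ⟨h, rfl⟩ := Ideal.mem_span_singleton'.1 hx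
      refine ⟨homogeneousComponent (t-e) h, homogeneousComponent_isHomogeneous _ _, ?_⟩
      have h8 : f = homogeneousComponent t j + g * homogeneousComponent (t - e) h := by
        rw [← comp_mul g hg het, ← map_add, mul_comm g, hjx, homogeneousComponent_of_mem hf1, if_pos rfl]
      have h9 : φ (homogeneousComponent t j) = 0 := Ideal.Quotient.eq_zero_iff_mem.2 (hJ j hj t)
      conv_rhs => rw [h8, map_add, h9, zero_add]
      rfl
    · rintro _ ⟨f, hf, rfl⟩
      refine ⟨g * f, ⟨?_, ?_⟩, rfl⟩
      · have := hg.mul hf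
        rw [show e + (t - e) = t by omega] at this
        exact this
      · exact Ideal.mem_sup_right (Ideal.mul_mem_right _ _ (Ideal.mem_span_singleton_self g))
  rw [h6, h7] at h5
  omega
end HF
end PD3


namespace PD3
section Ind
open MvPolynomial

def Small (δ : ℕ) (f : ℕ → ℕ) : Prop := ∃ C : ℕ, ∀ t, f t * (t+1) ≤ C * (t+1)^δ

variable {k : Type u} [Field k] {N : ℕ}

theorem hf_zero [IsAlgClosed k] (P : Ideal (MvPolynomial (Fin N) k)) [P.IsPrime]
    (hP : Hom P) (h0 : Algebra.trdeg k (MvPolynomial (Fin N) k ⧸ P) = 0) (t : ℕ) : hilbertFunction k P (t+1) = 0 := by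
  haveI : FaithfulSMul k (MvPolynomial (Fin N) k ⧸ P) := inferInstance
  rw [trdeg_eq_zero_iff] at h0
  have hb := IsAlgClosed.algebraMap_bijective_of_isIntegral (k := k) (K := MvPolynomial (Fin N) k ⧸ P)
  have hX : ∀ i, (X i : MvPolynomial (Fin N) k) ∈ P := by
    intro i
    obtain ⟨c, hc⟩ := hb.2 (Ideal.Quotient.mk P (X i))
    have h1 : (X i : MvPolynomial (Fin N) k) - C c ∈ P := by
      rw [← Ideal.Quotient.eq]; exact hc.symm
    have h2 := hP _ h1 1
    rw [map_sub, homogeneousComponent_of_mem (isHomogeneous_X k i), if_pos rfl,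
      homogeneousComponent_of_mem (isHomogeneous_C _ c), if_neg (by norm_num), sub_zero] at h2
    exact h2
  have hV : (homogeneousSubmodule (Fin N) k 1).map (Ideal.Quotient.mkₐ k P).toLinearMap = ⊥ := by
    rw [homogeneousSubmodule_one_eq_span_X, Submodule.map_span, Submodule.span_eq_bot]
    rintro _ ⟨_, ⟨i, rfl⟩, rfl⟩
    exact Ideal.Quotient.eq_zero_iff_mem.2 (hX i)
  rw [hilb_eq_pow, hV, pow_succ, Submodule.mul_bot, finrank_bot]

theorem hf_small [IsAlgClosed k] (P : Ideal (MvPolynomial (Fin N) k)) [P.IsPrime]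
    (hP : Hom P) (τ δ : ℕ) (hτ : Algebra.trdeg k (MvPolynomial (Fin N) k ⧸ P) = τ) (h : τ ≤ δ) :
    Small δ (hilbertFunction k P) := by
  rcases τ with _ | ρ
  · refine ⟨hilbertFunction k P 0, fun t => ?_⟩
    rcases t with _ | t
    · simp
    · rw [hf_zero P hP (by simpa using hτ)]; simp
  · obtain ⟨-, -, C, hC⟩ := hf_prime P hP ρ hτ
    refine ⟨C, fun t => ?_⟩
    calc _ ≤ C * (t+1)^ρ * (t+1) := Nat.mul_le_mul_right _ (hC t)
      _ = C * (t+1)^(ρ+1) := by ring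
      _ ≤ _ := Nat.mul_le_mul_left _ (Nat.pow_le_pow_right (by omega) h)

/-- the colon ideal -/
noncomputable def colonIdeal (J : Ideal (MvPolynomial (Fin N) k)) (g : MvPolynomial (Fin N) k) : Ideal (MvPolynomial (Fin N) k) :=
  Submodule.comap (LinearMap.mulLeft (MvPolynomial (Fin N) k) g) J

theorem mem_colonIdeal (J : Ideal (MvPolynomial (Fin N) k)) (g f : MvPolynomial (Fin N) k) :
    f ∈ colonIdeal J g ↔ g * f ∈ J := Iff.rfl

theorem hom_colon (J : Ideal (MvPolynomial (Fin N) k)) (hJ : Hom J) (e : ℕ) (g : MvPolynomial (Fin N) k)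
    (hg : g.IsHomogeneous e) : Hom (colonIdeal J g) := by
  intro f hf d
  rw [mem_colonIdeal] at hf ⊢
  have := hJ _ hf (d + e)
  rwa [comp_mul g hg (by omega), Nat.add_sub_cancel] at this

theorem hom_sup {J K : Ideal (MvPolynomial (Fin N) k)} (hJ : Hom J) (hK : Hom K) : Hom (J ⊔ K) := by
  intro f hf d
  obtain ⟨a, ha, b, hb, rfl⟩ := Submodule.mem_sup.1 hf
  rw [map_add]
  exact Ideal.add_mem _ (Ideal.mem_sup_left (hJ a ha d)) (Ideal.mem_sup_right (hK b hb d))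

attribute [local instance] MvPolynomial.gradedAlgebra in
theorem prime_of_hom (K : Ideal (MvPolynomial (Fin N) k)) (hK : Hom K) (hne : K ≠ ⊤)
    (h : ∀ (a b : MvPolynomial (Fin N) k) (i j : ℕ), a.IsHomogeneous i → b.IsHomogeneous j → a * b ∈ K → a ∈ K ∨ b ∈ K) : K.IsPrime := by
  refine Ideal.IsHomogeneous.isPrime_of_homogeneous_mem_or_mem ((hom_iff K).1 hK) hne ?_
  rintro x y ⟨i, hi⟩ ⟨j, hj⟩ hxy
  exact h x y i j hi hj hxy

theorem dichotomy [IsAlgClosed k] (p : Ideal (MvPolynomial (Fin N) k)) (hp : Hom p) (δ : ℕ)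
    (J : Ideal (MvPolynomial (Fin N) k)) : Hom J → J ≤ p →
    Small δ (fun t => hilbertFunction k J t - hilbertFunction k p t) ∨
    ∃ (P : Ideal (MvPolynomial (Fin N) k)) (e τ : ℕ), P.IsPrime ∧ Hom P ∧ J ≤ P ∧
      Algebra.trdeg k (MvPolynomial (Fin N) k ⧸ P) = τ ∧ δ + 1 ≤ τ ∧
      ∀ t, e ≤ t → hilbertFunction k P (t - e) ≤ hilbertFunction k J t - hilbertFunction k p t := by
  induction J using WellFoundedGT.induction with
  | ind J ih =>
  intro hJ hJp
  by_cases hne : p ≤ J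
  · left
    obtain rfl : J = p := le_antisymm hJp hne
    exact ⟨0, fun t => by simp⟩
  · let Ω : Set (Ideal (MvPolynomial (Fin N) k)) := {K | ∃ (e : ℕ) (g : MvPolynomial (Fin N) k), g.IsHomogeneous e ∧
      g ∈ p ∧ g ∉ J ∧ K = colonIdeal J g}
    have hΩ : Ω.Nonempty := by
      by_contra hcon
      rw [Set.not_nonempty_iff_eq_empty] at hcon
      apply hne
      intro f hf
      rw [← sum_homogeneousComponent f]
      refine Ideal.sum_mem _ fun d _ => ?_
      by_contra hd
      have : colonIdeal J (homogeneousComponent d f) ∈ Ω :=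
        ⟨d, _, homogeneousComponent_isHomogeneous d f, hp f hf d, hd, rfl⟩
      rw [hcon] at this
      exact this
    obtain ⟨K, ⟨e, g, hg, hgp, hgJ, rfl⟩, hmax⟩ := WellFounded.has_min (wellFounded_gt (α := Ideal (MvPolynomial (Fin N) k))) Ω hΩ
    have hKh := hom_colon J hJ e g hg
    have hKp : (colonIdeal J g).IsPrime := by
      refine prime_of_hom _ hKh ?_ ?_
      · intro h
        apply hgJ
        have : (1 : MvPolynomial (Fin N) k) ∈ colonIdeal J g := by rw [h]; trivial
        rw [mem_colonIdeal, mul_one] at this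
        exact this
      · intro a b i j ha hb hab
        by_contra hcon
        push Not at hcon
        have h1 : colonIdeal J (g * b) ∈ Ω := ⟨e + j, g * b, hg.mul hb, Ideal.mul_mem_right _ _ hgp, hcon.2, rfl⟩
        apply hmax _ h1
        refine lt_of_le_of_ne ?_ ?_
        · intro f hf
          rw [mem_colonIdeal] at hf ⊢
          rw [mul_right_comm]
          exact Ideal.mul_mem_right _ _ hf
        · intro heq
          apply hcon.1
          rw [heq, mem_colonIdeal, mul_assoc, mul_comm b]
          exact hab
    have hJg : Hom (J ⊔ Ideal.span {g}) := hom_sup hJ (hom_span _ (by rintro f rfl; exact ⟨e, hg⟩))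
    have hle : J ⊔ Ideal.span {g} ≤ p := sup_le hJp ((Ideal.span_singleton_le_iff_mem _).2 hgp)
    have hlt : J < J ⊔ Ideal.span {g} := by
      refine lt_of_le_of_ne le_sup_left fun h => hgJ ?_
      rw [h]; exact Ideal.mem_sup_right (Ideal.mem_span_singleton_self g)
    have hcol := fun t ht => hilb_colon J (colonIdeal J g) hJ e t ht g hg (fun f => Iff.rfl)
    have hm1 := fun t => hilb_mono (k := k) hle t
    have hm2 := fun t => hilb_mono (k := k) hlt.le t
    obtain ⟨_, τ, -, hτ, -⟩ := dimF_mv k N _ hKp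
    by_cases hτδ : δ + 1 ≤ τ
    · right
      refine ⟨colonIdeal J g, e, τ, hKp, hKh, ?_, hτ, hτδ, fun t ht => ?_⟩
      · intro f hf
        rw [mem_colonIdeal]
        exact Ideal.mul_mem_left _ _ hf
      · have := hcol t ht
        have := hm1 t
        omega
    · obtain ⟨C1, hC1⟩ := hf_small _ hKh τ δ hτ (by omega)
      rcases ih _ hlt hJg hle with ⟨C2, hC2⟩ | ⟨P, e', τ', a1, a2, a3, a4, a5, a6⟩
      · left
        refine ⟨C1 * (e+1) + C2 + ∑ t ∈ Finset.range e, hilbertFunction k J t * (t+1), fun t => ?_⟩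
        have hpos : 1 ≤ (t+1)^δ := Nat.one_le_pow _ _ (by omega)
        by_cases ht : e ≤ t
        · have b1 := hcol t ht
          have b2 := hm1 t
          have b3 : hilbertFunction k J t - hilbertFunction k p t =
            (hilbertFunction k (J ⊔ Ideal.span {g}) t - hilbertFunction k p t) + hilbertFunction k (colonIdeal J g) (t - e) := by omega
          show (hilbertFunction k J t - hilbertFunction k p t) * (t+1) ≤ _
          rw [b3]
          have b4 := hC2 t
          have b5 := hC1 (t - e)
          have b6 : hilbertFunction k (colonIdeal J g) (t - e) * (t + 1) ≤ C1 * (e+1) * (t+1)^δ := by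
            calc _ ≤ hilbertFunction k (colonIdeal J g) (t - e) * ((t - e + 1) * (e + 1)) := by
                  refine Nat.mul_le_mul_left _ ?_
                  obtain ⟨s, rfl⟩ := Nat.exists_eq_add_of_le ht
                  rw [Nat.add_sub_cancel_left]; nlinarith
              _ = (hilbertFunction k (colonIdeal J g) (t - e) * (t - e + 1)) * (e + 1) := by ring
              _ ≤ (C1 * (t - e + 1)^δ) * (e+1) := Nat.mul_le_mul_right _ b5
              _ ≤ (C1 * (t + 1)^δ) * (e+1) := by
                  refine Nat.mul_le_mul_right _ (Nat.mul_le_mul_left _ (Nat.pow_le_pow_left (by omega) _))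
              _ = _ := by ring
          rw [add_mul, add_mul, add_mul]
          simp only at b4
          have := Nat.zero_le ((∑ t ∈ Finset.range e, hilbertFunction k J t * (t+1)) * (t+1)^δ)
          omega
        · have b1 : hilbertFunction k J t * (t+1) ≤ ∑ t ∈ Finset.range e, hilbertFunction k J t * (t+1) :=
            Finset.single_le_sum (f := fun t => hilbertFunction k J t * (t+1)) (fun _ _ => Nat.zero_le _) (Finset.mem_range.2 (by omega))
          calc _ ≤ hilbertFunction k J t * (t+1) := Nat.mul_le_mul_right _ (Nat.sub_le _ _)
            _ ≤ _ := b1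
            _ ≤ C1 * (e+1) + C2 + ∑ t ∈ Finset.range e, hilbertFunction k J t * (t+1) := Nat.le_add_left _ _
            _ ≤ _ := Nat.le_mul_of_pos_right _ hpos
      · right
        refine ⟨P, e', τ', a1, a2, hlt.le.trans a3, a4, a5, fun t ht => (a6 t ht).trans ?_⟩
        exact Nat.sub_le_sub_right (hm2 t) _
end Ind
end PD3


namespace PD3
section Asym
open Filter Topology

def As (δ : ℕ) (f : ℕ → ℕ) (c : ℝ) : Prop :=
  Tendsto (fun t : ℕ => (δ.factorial : ℝ) * (f t : ℝ) / (t:ℝ)^δ) atTop (𝓝 c)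

theorem lin_tendsto (a b : ℕ) : Tendsto (fun t : ℕ => ((t + a - b : ℕ) : ℝ) / (t:ℝ)) atTop (𝓝 1) := by
  have h1 : Tendsto (fun t : ℕ => 1 + ((a:ℝ) - b) / (t:ℝ)) atTop (𝓝 (1 + 0)) :=
    tendsto_const_nhds.add (tendsto_const_div_atTop_nhds_zero_nat _)
  rw [add_zero] at h1
  refine h1.congr' ?_
  filter_upwards [eventually_ge_atTop (b+1)] with t ht
  have : (t:ℝ) ≠ 0 := by
    have : 0 < t := by omega
    positivity
  rw [Nat.cast_sub (by omega)]
  push_cast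
  field_simp
  ring

theorem pow_tendsto (δ a b : ℕ) : Tendsto (fun t : ℕ => ((t + a - b : ℕ) : ℝ)^δ / (t:ℝ)^δ) atTop (𝓝 1) := by
  have := (lin_tendsto a b).pow δ
  simpa [div_pow] using this

theorem as_choose (δ a b : ℕ) : As δ (fun t => (t + a - b).choose δ) 1 := by
  refine tendsto_of_tendsto_of_tendsto_of_le_of_le' (pow_tendsto δ (a+1) (b+δ)) (pow_tendsto δ a b) ?_ ?_
  · filter_upwards [eventually_ge_atTop (b+δ+1)] with t ht
    have h1 := Nat.pow_sub_le_descFactorial (t+a-b) δ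
    rw [Nat.descFactorial_eq_factorial_mul_choose] at h1
    rw [show t + a - b + 1 - δ = t + (a+1) - (b+δ) by omega] at h1
    have h2 : ((t + (a+1) - (b+δ) : ℕ) : ℝ)^δ ≤ (δ.factorial : ℝ) * ((t+a-b).choose δ : ℕ) := by exact_mod_cast h1
    gcongr
  · filter_upwards with t
    have h1 := Nat.descFactorial_le_pow (t+a-b) δ
    rw [Nat.descFactorial_eq_factorial_mul_choose] at h1
    have h2 : (δ.factorial : ℝ) * ((t+a-b).choose δ : ℕ) ≤ ((t + a - b : ℕ) : ℝ)^δ := by exact_mod_cast h1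
    gcongr

theorem as_shift {δ : ℕ} {f : ℕ → ℕ} {c : ℝ} (h : As δ f c) (b : ℕ) : As δ (fun t => f (t - b)) c := by
  have h1 : Tendsto (fun t : ℕ => t - b) atTop atTop := tendsto_sub_atTop_nat b
  have h2 := (h.comp h1).mul (pow_tendsto δ 0 b)
  rw [mul_one] at h2
  refine h2.congr' ?_
  filter_upwards [eventually_ge_atTop (b+1)] with t ht
  have : ((t - b : ℕ) : ℝ) ≠ 0 := by
    have : 0 < t - b := by omega
    positivity
  have : (t : ℝ) ≠ 0 := by
    have : 0 < t := by omega
    positivity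
  simp only [Function.comp, add_zero]
  field_simp

theorem as_le {δ : ℕ} {f g : ℕ → ℕ} {c d : ℝ} (hf : As δ f c) (hg : As δ g d) (h : ∀ᶠ t in atTop, f t ≤ g t) : c ≤ d := by
  refine le_of_tendsto_of_tendsto hf hg ?_
  filter_upwards [h] with t ht
  have : (f t : ℝ) ≤ g t := by exact_mod_cast ht
  gcongr

theorem as_add {δ : ℕ} {f g : ℕ → ℕ} {c d : ℝ} (hf : As δ f c) (hg : As δ g d) : As δ (fun t => f t + g t) (c + d) := by
  refine (Tendsto.add hf hg).congr fun t => ?_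
  push_cast
  ring

theorem as_mul {δ : ℕ} {f : ℕ → ℕ} {c : ℝ} (hf : As δ f c) (a : ℕ) : As δ (fun t => a * f t) (a * c) := by
  refine (Tendsto.const_mul (a:ℝ) hf).congr fun t => ?_
  push_cast
  ring

theorem as_congr {δ : ℕ} {f g : ℕ → ℕ} {c : ℝ} (hf : As δ f c) (h : ∀ᶠ t in atTop, f t = g t) : As δ g c := by
  refine hf.congr' ?_
  filter_upwards [h] with t ht
  rw [ht]

theorem as_lt {D δ : ℕ} {f : ℕ → ℕ} {c : ℝ} (hf : As D f c) (h : D < δ) : As δ f 0 := by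
  obtain ⟨e, rfl⟩ := Nat.exists_eq_add_of_lt h
  have h1 : Tendsto (fun t : ℕ => ((D+e+1).factorial : ℝ) / D.factorial * ((1:ℝ)/ (t:ℝ))^(e+1)) atTop (𝓝 (((D+e+1).factorial : ℝ) / D.factorial * 0^(e+1))) :=
    ((tendsto_const_div_atTop_nhds_zero_nat (1:ℝ)).pow (e+1)).const_mul _
  have h2 := h1.mul hf
  simp only [ne_eq, Nat.add_eq_zero_iff, one_ne_zero, and_false, not_false_eq_true, zero_pow, mul_zero, zero_mul] at h2
  refine h2.congr' ?_
  filter_upwards [eventually_ge_atTop 1] with t ht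
  have : (t : ℝ) ≠ 0 := by positivity
  have : (D.factorial : ℝ) ≠ 0 := by positivity
  rw [div_pow, one_pow]
  field_simp
  ring

theorem as_small {δ : ℕ} {f : ℕ → ℕ} (h : Small δ f) : As δ f 0 := by
  obtain ⟨C, hC⟩ := h
  have h1 : Tendsto (fun t : ℕ => (δ.factorial : ℝ) * C * ((1:ℝ)/((t:ℝ)+1)) * ((((t + 1 - 0 : ℕ) : ℝ)^δ / (t:ℝ)^δ))) atTop (𝓝 ((δ.factorial : ℝ) * C * 0 * 1)) :=
    (tendsto_one_div_add_atTop_nhds_zero_nat.const_mul _).mul (pow_tendsto δ 1 0)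
  rw [mul_zero, zero_mul] at h1
  refine squeeze_zero (fun t => by positivity) (fun t => ?_) h1
  have h2 : (f t : ℝ) * (t+1) ≤ C * ((t:ℝ)+1)^δ := by exact_mod_cast hC t
  have h3 : (f t : ℝ) ≤ C * ((t:ℝ)+1)^δ / (t+1) := by
    rw [le_div_iff₀ (by positivity)]; exact h2
  calc _ ≤ (δ.factorial : ℝ) * (C * ((t:ℝ)+1)^δ / (t+1)) / (t:ℝ)^δ := by gcongr
    _ = _ := by
      simp only [Nat.sub_zero]; push_cast; ring

theorem as_succ_pow (δ : ℕ) : As δ (fun t => (t+1)^δ) δ.factorial := by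
  have := (pow_tendsto δ 1 0).const_mul (δ.factorial : ℝ)
  rw [mul_one] at this
  refine this.congr fun t => ?_
  simp only [Nat.sub_zero]; push_cast; ring

theorem as_poly (P : Polynomial ℚ) (f : ℕ → ℕ) (h : ∀ᶠ t : ℕ in atTop, (f t : ℚ) = P.eval (t:ℚ)) :
    As P.natDegree f ((P.natDegree.factorial * P.leadingCoeff : ℚ) : ℝ) := by
  rcases eq_or_ne P 0 with rfl | hP
  · refine (tendsto_const_nhds (x := (0:ℝ))).congr' ?_ |>.trans (by simp)
    filter_upwards [h] with t ht
    have : f t = 0 := by simpa using ht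
    simp [this]
  · have h1 := Polynomial.div_tendsto_leadingCoeff_div_of_degree_eq (P.map (algebraMap ℚ ℝ)) (Polynomial.X ^ P.natDegree)
      (by rw [Polynomial.degree_map, Polynomial.degree_X_pow, Polynomial.degree_eq_natDegree hP])
    have h2 := (h1.comp tendsto_natCast_atTop_atTop).const_mul (P.natDegree.factorial : ℝ)
    simp only [Polynomial.leadingCoeff_map, Polynomial.leadingCoeff_X_pow, div_one] at h2
    have h3 : As P.natDegree f ((P.natDegree.factorial : ℝ) * (algebraMap ℚ ℝ) P.leadingCoeff) := by
      refine h2.congr' ?_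
      filter_upwards [h] with t ht
      simp only [Function.comp, Polynomial.eval_pow, Polynomial.eval_X]
      have : (f t : ℝ) = (Polynomial.map (algebraMap ℚ ℝ) P).eval (t:ℝ) := by
        have h4 : ((t:ℚ) : ℝ) = (t:ℝ) := by norm_num
        have h5 : ((f t : ℚ) : ℝ) = (f t:ℝ) := by norm_num
        rw [← h5, ht, Polynomial.eval_map]
        rw [← h4]
        exact (Polynomial.eval₂_at_apply (algebraMap ℚ ℝ) (t:ℚ)).symm
      rw [this]; ring
    simpa using h3

theorem as_mult {k : Type u} [Field k] {N : ℕ} (J : Ideal (MvPolynomial (Fin N) k))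
    (h : hilbertSamuelMultiplicity k J = 3) : ∃ D, As D (hilbertFunction k J) 3 := by
  unfold hilbertSamuelMultiplicity at h
  split_ifs at h with hP
  · refine ⟨hP.choose.natDegree, ?_⟩
    have := as_poly hP.choose _ hP.choose_spec
    rw [h] at this
    simpa using this
  · norm_num at h

theorem as_unique_deg {D δ C : ℕ} {f : ℕ → ℕ} (h : As D f 3) (h1 : ∀ t, (t+1+δ).choose δ ≤ f (t+1)) (h2 : ∀ t, f t ≤ C*(t+1)^δ) : As δ f 3 := by
  rcases lt_trichotomy D δ with hl | rfl | hl
  · have := as_le (as_choose δ δ 0) (as_lt h hl) (by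
      filter_upwards [eventually_ge_atTop 1] with t ht
      obtain ⟨s, rfl⟩ := Nat.exists_eq_add_of_le ht
      have := h1 s
      rw [Nat.sub_zero, add_comm 1 s]; exact this)
    norm_num at this
  · exact h
  · have := as_le h (as_mul (as_lt (as_succ_pow δ) hl) C) (Eventually.of_forall h2)
    norm_num at this

theorem main_as {k : Type u} [Field k] [IsAlgClosed k] {N : ℕ} (p : Ideal (MvPolynomial (Fin N) k)) [p.IsPrime] (hp : Hom p)
    (h : hilbertSamuelMultiplicity k p = 3) (τ : ℕ) (hτ : Algebra.trdeg k (MvPolynomial (Fin N) k ⧸ p) = τ) :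
    ∃ δ, τ = δ + 1 ∧ As δ (hilbertFunction k p) 3 := by
  obtain ⟨D, hD⟩ := as_mult p h
  rcases τ with _ | δ
  · exfalso
    have h0 : Tendsto (fun t : ℕ => (D.factorial : ℝ) * ((hilbertFunction k p t:ℕ) : ℝ) / (t:ℝ)^D) atTop (𝓝 0) := by
      refine tendsto_const_nhds.congr' ?_
      filter_upwards [eventually_ge_atTop 1] with t ht
      obtain ⟨s, rfl⟩ := Nat.exists_eq_add_of_le ht
      rw [add_comm 1 s, hf_zero p hp (by simpa using hτ)]; simp
    have := tendsto_nhds_unique hD h0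
    norm_num at this
  · obtain ⟨a1, a2, C, a3⟩ := hf_prime p hp δ hτ
    exact ⟨δ, rfl, as_unique_deg hD (fun t => (Nat.le_add_right _ _).trans (a2 t)) a3⟩
end Asym
end PD3


namespace PD3
section Core
open MvPolynomial

variable {k : Type u} [Field k] {N : ℕ}

theorem unit_of_deg_zero {y : MvPolynomial (Fin N) k} (hy : y ≠ 0) (h : y.totalDegree = 0) : IsUnit y := by
  rw [totalDegree_eq_zero_iff_eq_C] at h
  rw [h]
  refine IsUnit.map C (isUnit_iff_ne_zero.2 fun h0 => hy ?_)
  rw [h, h0, map_zero]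

theorem eq_zero_of_mem {p : Ideal (MvPolynomial (Fin N) k)} (hp : Hom p) (hne : p ≠ ⊤) (h1 : part p 1 = ⊥)
    {x : MvPolynomial (Fin N) k} (hx : x ∈ p) (hd : x.totalDegree ≤ 1) : x = 0 := by
  have hc0 : homogeneousComponent 0 x = 0 := by
    by_contra h
    apply hne
    have hm := hp x hx 0
    refine Ideal.eq_top_of_isUnit_mem _ hm (unit_of_deg_zero h ?_)
    rw [homogeneousComponent_zero, totalDegree_C]
  have hc1 : homogeneousComponent 1 x = 0 := by
    have : homogeneousComponent 1 x ∈ part p 1 := (mem_part _ _ _).2 ⟨homogeneousComponent_isHomogeneous 1 x, hp x hx 1⟩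
    rw [h1] at this
    exact (Submodule.mem_bot k).1 this
  rw [← sum_homogeneousComponent x]
  refine Finset.sum_eq_zero fun i hi => ?_
  have hi' : i = 0 ∨ i = 1 := by
    have := Finset.mem_range.1 hi
    omega
  rcases hi' with rfl | rfl
  · exact hc0
  · exact hc1

theorem lin_zero {p : Ideal (MvPolynomial (Fin N) k)} (h1 : part p 1 = ⊥)
    {x : MvPolynomial (Fin N) k} (hx : x ∈ p) (hd : x.IsHomogeneous 1) : x = 0 := by
  have : x ∈ part p 1 := (mem_part _ _ _).2 ⟨hd, hx⟩
  rw [h1] at this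
  exact (Submodule.mem_bot k).1 this

theorem quad_prime {p : Ideal (MvPolynomial (Fin N) k)} [hpp : p.IsPrime] (hp : Hom p) (h1 : part p 1 = ⊥)
    {q : MvPolynomial (Fin N) k} (hq : q ∈ p) (hq0 : q ≠ 0) (hd : q.IsHomogeneous 2) : Prime q := by
  rw [← UniqueFactorizationMonoid.irreducible_iff_prime]
  have key : ∀ x y : MvPolynomial (Fin N) k, q = x * y → x ∈ p → IsUnit y := by
    intro x y hxy hx
    have hx0 : x ≠ 0 := by rintro rfl; simp at hxy; exact hq0 hxy
    have hy0 : y ≠ 0 := by rintro rfl; simp at hxy; exact hq0 hxy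
    have := hd.totalDegree hq0
    rw [hxy, totalDegree_mul_of_isDomain hx0 hy0] at this
    refine unit_of_deg_zero hy0 ?_
    by_contra hy
    exact hx0 (eq_zero_of_mem hp hpp.ne_top h1 hx (by omega))
  refine ⟨fun hu => hpp.ne_top (Ideal.eq_top_of_isUnit_mem _ hq hu), fun {x y} hxy => ?_⟩
  rcases hpp.mem_or_mem (hxy ▸ hq : x * y ∈ p) with hx | hy
  · exact Or.inr (key x y hxy hx)
  · exact Or.inl (key y x (by rw [hxy, mul_comm]) hy)

theorem lin_prime {a : MvPolynomial (Fin N) k} (ha0 : a ≠ 0) (hd : a.IsHomogeneous 1) : Prime a := by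
  rw [← UniqueFactorizationMonoid.irreducible_iff_prime]
  have hda := hd.totalDegree ha0
  refine ⟨fun hu => ?_, fun {x y} hxy => ?_⟩
  · obtain ⟨b, hb⟩ := hu.exists_right_inv
    have hb0 : b ≠ 0 := by rintro rfl; simp at hb
    have := totalDegree_mul_of_isDomain ha0 hb0
    rw [hb, totalDegree_one] at this
    omega
  · have hx0 : x ≠ 0 := by rintro rfl; simp at hxy; exact ha0 hxy
    have hy0 : y ≠ 0 := by rintro rfl; simp at hxy; exact ha0 hxy
    rw [hxy, totalDegree_mul_of_isDomain hx0 hy0] at hda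
    by_cases h : x.totalDegree = 0
    · exact Or.inl (unit_of_deg_zero hx0 h)
    · exact Or.inr (unit_of_deg_zero hy0 (by omega))

theorem dvd_same {e : ℕ} {a b : MvPolynomial (Fin N) k} (ha : a.IsHomogeneous e) (hb : b.IsHomogeneous e) (h : a ∣ b) :
    ∃ κ : k, b = κ • a := by
  obtain ⟨c, hc⟩ := h
  have h1 := comp_mul a ha le_rfl c
  rw [← hc, homogeneousComponent_of_mem hb, if_pos rfl, Nat.sub_self, homogeneousComponent_zero] at h1
  exact ⟨_, by rw [h1, smul_eq_C_mul, mul_comm]⟩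

theorem lin_rep {q u v : MvPolynomial (Fin N) k} (hq : q.IsHomogeneous 2) (hu : u.IsHomogeneous 1) (hv : v.IsHomogeneous 1)
    (h : q ∈ Ideal.span {u, v}) : ∃ a b, a.IsHomogeneous 1 ∧ b.IsHomogeneous 1 ∧ q = a * u + b * v := by
  obtain ⟨a, b, hab⟩ := Ideal.mem_span_pair.1 h
  refine ⟨homogeneousComponent 1 a, homogeneousComponent 1 b, homogeneousComponent_isHomogeneous _ _, homogeneousComponent_isHomogeneous _ _, ?_⟩
  have h1 := comp_mul u hu (show 1 ≤ 2 by omega) a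
  have h2 := comp_mul v hv (show 1 ≤ 2 by omega) b
  have h3 : homogeneousComponent 2 q = q := by rw [homogeneousComponent_of_mem hq, if_pos rfl]
  rw [← h3, ← hab, map_add, mul_comm a, mul_comm b, h1, h2]
  ring

theorem no_delta {p : Ideal (MvPolynomial (Fin N) k)} [hpp : p.IsPrime] (h1 : part p 1 = ⊥)
    {a b c d u v : MvPolynomial (Fin N) k} (ha : a.IsHomogeneous 1) (hb : b.IsHomogeneous 1) (hc : c.IsHomogeneous 1)
    (hd : d.IsHomogeneous 1) (hu : u.IsHomogeneous 1) (hv : v.IsHomogeneous 1)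
    (huv : ∀ κ : k, u + κ • v ≠ 0) (hq1 : a * u + b * v ∈ p) (hq10 : a * u + b * v ≠ 0)
    (hq : ∀ κ : k, c * u + d * v ≠ κ • (a * u + b * v)) : a * d - b * c ≠ 0 := by
  intro h
  rw [sub_eq_zero] at h
  by_cases ha0 : a = 0
  · subst ha0
    have hbv : b * v ∈ p := by simpa using hq1
    rcases hpp.mem_or_mem hbv with hm | hm
    · exact hq10 (by rw [lin_zero h1 hm hb]; ring)
    · exact hq10 (by rw [lin_zero h1 hm hv]; ring)
  · rcases (lin_prime ha0 ha).dvd_or_dvd (⟨d, h.symm⟩ : a ∣ b * c) with hdv | hdv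
    · obtain ⟨κ, rfl⟩ := dvd_same ha hb hdv
      have hm : a * (u + κ • v) ∈ p := by
        convert hq1 using 1
        rw [smul_eq_C_mul, smul_eq_C_mul]; ring
      rcases hpp.mem_or_mem hm with hm | hm
      · exact ha0 (lin_zero h1 hm ha)
      · exact huv κ (lin_zero h1 hm (hu.add (by rw [smul_eq_C_mul]; exact hv.C_mul κ)))
    · obtain ⟨κ, rfl⟩ := dvd_same ha hc hdv
      refine hq κ ?_
      have : d = κ • b := by
        apply mul_left_cancel₀ ha0
        rw [h, smul_eq_C_mul, smul_eq_C_mul]; ring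
      rw [this]; simp only [smul_eq_C_mul]; ring

theorem delta_indep {p : Ideal (MvPolynomial (Fin N) k)} [hpp : p.IsPrime] (h1 : part p 1 = ⊥)
    {a b c d u v : MvPolynomial (Fin N) k} (ha : a.IsHomogeneous 1) (hb : b.IsHomogeneous 1) (hc : c.IsHomogeneous 1)
    (hd : d.IsHomogeneous 1) (hu : u.IsHomogeneous 1) (hv : v.IsHomogeneous 1)
    (huv : ∀ κ : k, u + κ • v ≠ 0) (hq1 : a * u + b * v ∈ p) (hq10 : a * u + b * v ≠ 0)
    (hq : ∀ κ : k, c * u + d * v ≠ κ • (a * u + b * v)) (s t : k) :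
    s • (a * u + b * v) + t • (c * u + d * v) ≠ a * d - b * c := by
  intro h
  have e1 : (a - C t * v) * u + (b + C t * u) * v = a * u + b * v := by ring
  have e2 : (c - C (-s) * v) * u + (d + C (-s) * u) * v = c * u + d * v := by ring
  refine no_delta (p := p) h1 (a := a - C t * v) (b := b + C t * u) (c := c - C (-s) * v) (d := d + C (-s) * u)
    (ha.sub (hv.C_mul _)) (hb.add (hu.C_mul _)) (hc.sub (hv.C_mul _)) (hd.add (hu.C_mul _)) hu hv huv
    (by rw [e1]; exact hq1) (by rw [e1]; exact hq10) (by rw [e1, e2]; exact hq) ?_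
  simp only [smul_eq_C_mul, map_neg] at h ⊢
  linear_combination -h

theorem hilb_bot (t : ℕ) : hilbertFunction k (⊥ : Ideal (MvPolynomial (Fin N) k)) t = (N + t - 1).choose t := by
  have h := hilb_add (⊥ : Ideal (MvPolynomial (Fin N) k)) t
  have h2 : part (⊥ : Ideal (MvPolynomial (Fin N) k)) t = ⊥ := by
    rw [eq_bot_iff]
    intro f hf
    exact ((mem_part _ _ _).1 hf).2
  rw [h2, finrank_bot] at h
  exact h

theorem hom_bot : Hom (⊥ : Ideal (MvPolynomial (Fin N) k)) := by
  intro f hf d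
  rw [Ideal.mem_bot] at hf
  rw [hf, map_zero]; exact Ideal.zero_mem _

theorem hilb_one {g : MvPolynomial (Fin N) k} (hg0 : g ≠ 0) {e : ℕ} (hg : g.IsHomogeneous e) (t : ℕ) (het : e ≤ t) :
    (N + t - 1).choose t = hilbertFunction k (Ideal.span {g}) t + (N + (t - e) - 1).choose (t - e) := by
  have := hilb_colon (⊥ : Ideal (MvPolynomial (Fin N) k)) ⊥ hom_bot e t het g hg (by
    intro f
    simp [hg0])
  rwa [hilb_bot, hilb_bot, bot_sup_eq] at this

theorem hilb_two {q1 q2 : MvPolynomial (Fin N) k} (hp : Prime q1) (hq1 : q1.IsHomogeneous 2) (hq2 : q2.IsHomogeneous 2)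
    (hdv : ¬ q1 ∣ q2) (t : ℕ) (ht : 4 ≤ t) :
    hilbertFunction k (Ideal.span {q1, q2}) t + 2 * (N + (t - 2) - 1).choose (t - 2)
     = (N + t - 1).choose t + (N + (t - 4) - 1).choose (t - 4) := by
  have h1 := hilb_one hp.ne_zero hq1 t (by omega)
  have h2 := hilb_one hp.ne_zero hq1 (t-2) (by omega)
  have h3 := hilb_colon (Ideal.span {q1}) (Ideal.span {q1}) (hom_span _ (by rintro f rfl; exact ⟨2, hq1⟩)) 2 t (by omega) q2 hq2 (by
    intro f
    rw [Ideal.mem_span_singleton, Ideal.mem_span_singleton]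
    exact ⟨fun h => h.mul_left _, fun h => (hp.dvd_or_dvd h).resolve_left hdv⟩)
  rw [← Ideal.span_union, Set.singleton_union] at h3
  rw [show t - 2 - 2 = t - 4 by omega] at h2
  omega

theorem choose_id (x y : ℕ) : (x+4).choose (y+2) + x.choose (y+2) = 2 * (x+2).choose (y+2) + ((x+2).choose y + 2 * (x+1).choose y + x.choose y) := by
  have pa : ∀ x y, (x+1).choose (y+1) = x.choose y + x.choose (y+1) := fun x y => Nat.choose_succ_succ x y
  have e1 := pa (x+3) (y+1)
  have e2 := pa (x+2) (y+1)
  have e3 := pa (x+1) (y+1)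
  have e4 := pa x (y+1)
  have e5 := pa (x+2) y
  have e6 := pa (x+1) y
  have e7 := pa x y
  simp only [add_assoc, Nat.reduceAdd] at *
  omega

theorem hilb_ci {δ : ℕ} (hN : N = δ + 3) {q1 q2 : MvPolynomial (Fin N) k} (hp : Prime q1) (hq1 : q1.IsHomogeneous 2) (hq2 : q2.IsHomogeneous 2)
    (hdv : ¬ q1 ∣ q2) : As δ (hilbertFunction k (Ideal.span {q1, q2})) 4 := by
  have h := as_add (as_add (as_choose δ δ 0) (as_mul (as_choose δ δ 1) 2)) (as_choose δ δ 2)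
  norm_num at h
  refine as_congr h ?_
  filter_upwards [Filter.eventually_ge_atTop 4] with t ht
  have h1 := hilb_two hp hq1 hq2 hdv t ht
  have hs : ∀ s, (N + s - 1).choose s = (s + δ + 2).choose (δ+2) := by
    intro s
    rw [hN, show δ + 3 + s - 1 = s + (δ + 2) by omega, Nat.choose_symm_add, show s + (δ+2) = s + δ + 2 by omega]
  rw [hs, hs, hs] at h1
  obtain ⟨s, rfl⟩ := Nat.exists_eq_add_of_le' ht
  have := choose_id (s+δ+2) δ
  rw [show s + 4 - 2 + δ + 2 = s + δ + 2 + 2 by omega, show s + 4 - 4 + δ + 2 = s + δ + 2 by omega,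
    show s + 4 + δ + 2 = s + δ + 2 + 4 by omega] at h1
  rw [show s + 4 + δ = s + δ + 2 + 2 by omega, show s + δ + 2 + 2 - 1 = s + δ + 2 + 1 by omega,
     show s + δ + 2 + 2 - 2 = s + δ + 2 by omega]
  omega
end Core
end PD3


namespace PD3
section Core2
open MvPolynomial Filter

theorem as_sub {δ : ℕ} {f g : ℕ → ℕ} {c d : ℝ} (hf : As δ f c) (hg : As δ g d) (h : ∀ t, g t ≤ f t) : As δ (fun t => f t - g t) (c - d) := by
  refine (Tendsto.sub hf hg).congr fun t => ?_
  rw [Nat.cast_sub (h t)]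
  ring

variable {k : Type u} [Field k] [IsAlgClosed k] {N : ℕ}

theorem hf_lower_as (P : Ideal (MvPolynomial (Fin N) k)) [P.IsPrime] (hP : Hom P) (δ : ℕ)
    (hδ : Algebra.trdeg k (MvPolynomial (Fin N) k ⧸ P) = (δ+1:ℕ)) (e : ℕ) (f : ℕ → ℕ) (c : ℝ) (hf : As δ f c)
    (h : ∀ t, e ≤ t → hilbertFunction k P (t - e) ≤ f t) : 1 + ((hilbertFunction k P 1 - δ - 1 : ℕ) : ℝ) ≤ c := by
  obtain ⟨a1, a2, -⟩ := hf_prime P hP δ hδ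
  have h1 := as_add (as_choose δ δ 0) (as_mul (as_choose δ δ 1) (hilbertFunction k P 1 - δ - 1))
  rw [mul_one] at h1
  refine as_le (as_shift h1 e) hf ?_
  filter_upwards [eventually_ge_atTop (e+1)] with t ht
  refine le_trans ?_ (h t (by omega))
  obtain ⟨s, hs⟩ : ∃ s, t - e = s + 1 := ⟨t - e - 1, by omega⟩
  have := a2 s
  rw [hs, Nat.sub_zero, show s + 1 + δ - 1 = s + δ by omega]
  exact this

theorem find_P (p : Ideal (MvPolynomial (Fin N) k)) (hp : Hom p) (δ : ℕ) (J : Ideal (MvPolynomial (Fin N) k))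
    (hJ : Hom J) (hJp : J ≤ p) (h3 : As δ (hilbertFunction k p) 3) (h4 : As δ (hilbertFunction k J) 4) :
    ∃ P : Ideal (MvPolynomial (Fin N) k), P.IsPrime ∧ Hom P ∧ J ≤ P ∧ Algebra.trdeg k (MvPolynomial (Fin N) k ⧸ P) = (δ+1:ℕ)
      ∧ hilbertFunction k P 1 = δ + 1 := by
  have hs := as_sub h4 h3 (fun t => hilb_mono hJp t)
  norm_num at hs
  rcases dichotomy p hp δ J hJ hJp with h | ⟨P, e, τ, a1, a2, a3, a4, a5, a6⟩
  · exfalso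
    have := tendsto_nhds_unique hs (as_small h)
    norm_num at this
  · refine ⟨P, a1, a2, a3, ?_⟩
    obtain ⟨δ', rfl⟩ : ∃ δ', τ = δ' + 1 := ⟨τ - 1, by omega⟩
    rcases eq_or_lt_of_le (show δ ≤ δ' by omega) with rfl | hlt
    · refine ⟨a4, ?_⟩
      have := hf_lower_as P a2 δ a4 e _ _ hs a6
      have h5 : ((hilbertFunction k P 1 - δ - 1 : ℕ) : ℝ) ≤ 0 := by linarith
      have h6 : hilbertFunction k P 1 - δ - 1 = 0 := by exact_mod_cast le_antisymm h5 (by positivity)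
      have := (hf_prime P a2 δ a4).1
      omega
    · exfalso
      have := hf_lower_as P a2 δ' a4 e _ _ (as_lt hs hlt) a6
      have h5 : (0:ℝ) ≤ ((hilbertFunction k P 1 - δ' - 1 : ℕ) : ℝ) := by positivity
      linarith

theorem quad_of_P {δ : ℕ} (hN : N = δ + 3) (P : Ideal (MvPolynomial (Fin N) k)) [P.IsPrime] (hP : Hom P)
    (hδ : Algebra.trdeg k (MvPolynomial (Fin N) k ⧸ P) = (δ+1:ℕ)) (h1 : hilbertFunction k P 1 = δ + 1) :
    ∃ u v : MvPolynomial (Fin N) k, u.IsHomogeneous 1 ∧ v.IsHomogeneous 1 ∧ LinearIndependent k ![u, v] ∧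
      ∀ q ∈ P, q.IsHomogeneous 2 → q ∈ Ideal.span {u, v} := by
  have hfr : Module.finrank k (part P 1) = 2 := by
    have := hilb_add P 1
    rw [Nat.choose_one_right] at this
    omega
  let b := Module.finBasisOfFinrankEq k (part P 1) hfr
  have hli : LinearIndependent k ![(b 0 : MvPolynomial (Fin N) k), (b 1 : MvPolynomial (Fin N) k)] := by
    have h := b.linearIndependent.map' (part P 1).subtype (Submodule.ker_subtype _)
    have he : (part P 1).subtype ∘ b = ![(b 0 : MvPolynomial (Fin N) k), (b 1 : MvPolynomial (Fin N) k)] := by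
      funext i
      fin_cases i <;> rfl
    rw [he] at h
    exact h
  refine ⟨b 0, b 1, ((mem_part _ _ _).1 (b 0).2).1, ((mem_part _ _ _).1 (b 1).2).1, hli, ?_⟩
  obtain ⟨M, ρ, c1, c2, c3, c4, c5⟩ := kill_linear k N (part P 1) inf_le_left
  have hL : Ideal.span ((part P 1 : Submodule k _) : Set (MvPolynomial (Fin N) k)) ≤ Ideal.span {(b 0 : MvPolynomial (Fin N) k), (b 1 : MvPolynomial (Fin N) k)} := by
    rw [Ideal.span_le]
    intro x hx
    have := b.sum_repr ⟨x, hx⟩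
    have h2 := congrArg Subtype.val this
    rw [Fin.sum_univ_two] at h2
    simp only [Submodule.coe_add, Submodule.coe_smul] at h2
    rw [← h2]
    refine Ideal.add_mem _ ?_ ?_
    · rw [smul_eq_C_mul]; exact Ideal.mul_mem_left _ _ (Ideal.subset_span (by simp))
    · rw [smul_eq_C_mul]; exact Ideal.mul_mem_left _ _ (Ideal.subset_span (by simp))
  have hker : RingHom.ker ρ ≤ P := by
    rw [c3, Ideal.span_le]
    intro x hx
    exact ((mem_part _ _ _).1 hx).2
  have hcm : (P.map ρ).comap ρ = P := by
    rw [Ideal.comap_map_of_surjective' ρ c2]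
    exact sup_eq_left.2 hker
  have hk := hilb_kill ρ c4 c5 (P.map ρ) 2
  rw [hcm] at hk
  have h2 := hilb_add (P.map ρ) 2
  have h3 := (hf_prime P hP δ hδ).2.1 1
  have hM : M = δ + 1 := by omega
  have h4 : (M + 2 - 1).choose 2 = (1 + 1 + δ).choose δ := by
    rw [hM, show δ + 1 + 2 - 1 = δ + 2 by omega, show 1 + 1 + δ = δ + 2 by omega, Nat.choose_symm_add]
  rw [h4] at h2
  simp only [Nat.reduceAdd] at h2 h3
  have h5 : Module.finrank k (part (P.map ρ) 2) = 0 := by omega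
  rw [Submodule.finrank_eq_zero] at h5
  intro q hq hq2
  have : ρ q ∈ part (P.map ρ) 2 := (mem_part _ _ _).2 ⟨c4 _ _ hq2, Ideal.mem_map_of_mem _ hq⟩
  rw [h5, Submodule.mem_bot] at this
  exact hL (c3 ▸ (RingHom.mem_ker.2 this))

theorem core {δ : ℕ} (hN : N = δ + 3) (p : Ideal (MvPolynomial (Fin N) k)) [hpp : p.IsPrime] (hp : Hom p)
    (hδ : Algebra.trdeg k (MvPolynomial (Fin N) k ⧸ p) = (δ+1:ℕ)) (h3 : As δ (hilbertFunction k p) 3) (h1 : part p 1 = ⊥)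
    (q1 q2 : MvPolynomial (Fin N) k) (hq1 : q1 ∈ part p 2) (hq2 : q2 ∈ part p 2) (hli : LinearIndependent k ![q1, q2]) :
    ∃ ℓ : Fin 6 → MvPolynomial (Fin N) k, (∀ i, (ℓ i).IsHomogeneous 1) ∧ ∀ q ∈ part p 2, q ∈ Submodule.span k (Set.range fun z : Fin 6 × Fin 6 => ℓ z.1 * ℓ z.2) := by
  obtain ⟨hd1, hm1⟩ := (mem_part _ _ _).1 hq1
  obtain ⟨hd2, hm2⟩ := (mem_part _ _ _).1 hq2
  have hq10 : q1 ≠ 0 := hli.ne_zero 0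
  rw [LinearIndependent.pair_iff' hq10] at hli
  have hpr := quad_prime hp h1 hm1 hq10 hd1
  have hdv : ¬ q1 ∣ q2 := fun h => by
    obtain ⟨κ, hκ⟩ := dvd_same hd1 hd2 h
    exact hli κ hκ.symm
  have h4 := hilb_ci hN hpr hd1 hd2 hdv
  obtain ⟨P, e1, e2, e3, e4, e5⟩ := find_P p hp δ (Ideal.span {q1, q2}) (hom_span _ (by
    intro f hf
    rcases hf with rfl | hf
    · exact ⟨2, hd1⟩
    · rw [Set.mem_singleton_iff] at hf; subst hf; exact ⟨2, hd2⟩)) (by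
    rw [Ideal.span_le]
    intro f hf
    rcases hf with rfl | hf
    · exact hm1
    · rw [Set.mem_singleton_iff] at hf; subst hf; exact hm2) h3 h4
  obtain ⟨u, v, hu, hv, huv, hP⟩ := quad_of_P hN P e2 e4 e5
  have hv0 : v ≠ 0 := huv.ne_zero 1
  have hu0 : u ≠ 0 := huv.ne_zero 0
  have huv' : ∀ κ : k, u + κ • v ≠ 0 := by
    intro κ h
    have := LinearIndependent.pair_iff.1 huv 1 κ (by simpa using h)
    exact one_ne_zero this.1
  obtain ⟨a, b, ha, hb, rfl⟩ := lin_rep hd1 hu hv (hP _ (e3 (Ideal.subset_span (by simp))) hd1)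
  obtain ⟨c, d, hc, hd, rfl⟩ := lin_rep hd2 hu hv (hP _ (e3 (Ideal.subset_span (by simp))) hd2)
  have hΔp : a * d - b * c ∈ p := by
    have : (a * d - b * c) * u ∈ p := by
      have : (a * d - b * c) * u = d * (a * u + b * v) - b * (c * u + d * v) := by ring
      rw [this]
      exact Ideal.sub_mem _ (Ideal.mul_mem_left _ _ hm1) (Ideal.mul_mem_left _ _ hm2)
    exact (hpp.mem_or_mem this).resolve_right fun h => hu0 (lin_zero h1 h hu)
  have hΔ : a * d - b * c ∈ part p 2 := (mem_part _ _ _).2 ⟨(ha.mul hd).sub (hb.mul hc), hΔp⟩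
  have hind := delta_indep h1 ha hb hc hd hu hv huv' hm1 hq10 (fun κ h => hli κ h.symm)
  have hli3 : LinearIndependent k ![a * d - b * c, a * u + b * v, c * u + d * v] := by
    refine linearIndependent_finCons.2 ⟨(LinearIndependent.pair_iff' hq10).2 hli, ?_⟩
    rw [Matrix.range_cons, Matrix.range_cons, Matrix.range_empty, Set.union_empty, Set.singleton_union, Submodule.mem_span_pair]
    rintro ⟨s, t, hst⟩
    exact hind s t hst
  have hfr : Module.finrank k (part p 2) ≤ 3 := by
    have f1 := hilb_add p 1
    have f2 := hilb_add p 2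
    have f3 := (hf_prime p hp δ hδ).2.1 1
    rw [h1, finrank_bot, Nat.choose_one_right] at f1
    have f4 : hilbertFunction k p 1 - δ - 1 = 2 := by omega
    rw [f4] at f3
    have g1 : (1 + 1 + δ).choose δ = (δ + 2).choose 2 := by
      rw [show 1 + 1 + δ = δ + 2 by omega, Nat.choose_symm_add]
    have g2 : (1 + δ).choose δ = δ + 1 := by
      rw [add_comm, Nat.choose_symm_add, Nat.choose_one_right]
    rw [g1, g2] at f3
    have g3 : (N + 2 - 1).choose 2 = (δ + 2) + 1 + (δ+2) + (δ+2).choose 2 := by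
      rw [hN, show δ + 3 + 2 - 1 = δ + 2 + 1 + 1 by omega, Nat.choose_succ_succ' _ 1, Nat.choose_succ_succ' _ 1]
      simp; ring
    rw [g3] at f2
    simp only [Nat.reduceAdd] at f3
    omega
  have hspan : Submodule.span k (Set.range ![a * d - b * c, a * u + b * v, c * u + d * v]) = part p 2 := by
    refine Submodule.eq_of_le_of_finrank_le ?_ ?_
    · rw [Submodule.span_le]
      rintro _ ⟨i, rfl⟩
      fin_cases i
      · exact hΔ
      · exact hq1
      · exact hq2
    · rw [finrank_span_eq_card hli3]
      simpa using hfr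
  refine ⟨![a, b, c, d, u, v], ?_, ?_⟩
  · intro i
    fin_cases i <;> assumption
  · rw [← hspan]
    change _ ≤ (Submodule.span k _)
    rw [Submodule.span_le]
    have hmem : ∀ i j, ![a, b, c, d, u, v] i * ![a, b, c, d, u, v] j ∈ Submodule.span k (Set.range fun z : Fin 6 × Fin 6 => ![a, b, c, d, u, v] z.1 * ![a, b, c, d, u, v] z.2) :=
      fun i j => Submodule.subset_span ⟨(i, j), rfl⟩
    rintro _ ⟨i, rfl⟩
    fin_cases i
    · exact Submodule.sub_mem _ (hmem 0 3) (hmem 1 2)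
    · exact Submodule.add_mem _ (hmem 0 4) (hmem 1 5)
    · exact Submodule.add_mem _ (hmem 2 4) (hmem 3 5)
end Core2
end PD3


namespace PD3
section Main
open MvPolynomial Filter

variable {k : Type u} [Field k] {N : ℕ}

theorem span_basis {V : Type u} [AddCommGroup V] [Module k V] (L : Submodule k V) [FiniteDimensional k L] {m : ℕ}
    (h : Module.finrank k L = m) : ∃ w : Fin m → V, Submodule.span k (Set.range w) = L := by
  let b := Module.finBasisOfFinrankEq k L h
  refine ⟨fun i => b i, ?_⟩
  have h1 : Set.range (fun i => (b i : V)) = L.subtype '' (Set.range b) := by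
    rw [← Set.range_comp]; rfl
  rw [h1, ← Submodule.map_span, b.span_eq, Submodule.map_top, Submodule.range_subtype]

theorem ideal_span_le (L : Submodule k (MvPolynomial (Fin N) k)) {m : ℕ} (w : Fin m → MvPolynomial (Fin N) k)
    (h : Submodule.span k (Set.range w) = L) : Ideal.span (L : Set (MvPolynomial (Fin N) k)) ≤ Ideal.span (Set.range w) := by
  rw [Ideal.span_le]
  have : L ≤ (Ideal.span (Set.range w)).restrictScalars k := by
    rw [← h, Submodule.span_le]
    exact Ideal.subset_span
  exact this

theorem comp_map {M : ℕ} (π : MvPolynomial (Fin N) k →ₐ[k] MvPolynomial (Fin M) k)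
    (hhom : ∀ d f, f.IsHomogeneous d → (π f).IsHomogeneous d) (f : MvPolynomial (Fin N) k) (d : ℕ) :
    homogeneousComponent d (π f) = π (homogeneousComponent d f) := by
  classical
  conv_lhs => rw [← sum_homogeneousComponent f, map_sum, map_sum]
  have h1 : ∀ i, homogeneousComponent d (π (homogeneousComponent i f)) = if i = d then π (homogeneousComponent i f) else 0 := by
    intro i
    rw [homogeneousComponent_of_mem (hhom i _ (homogeneousComponent_isHomogeneous i f))]
    by_cases h : i = d
    · rw [if_pos h, if_pos (by omega)]
    · rw [if_neg h, if_neg (by omega)]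
  simp only [h1, Finset.sum_ite_eq', Finset.mem_range]
  split_ifs with h
  · rfl
  · rw [homogeneousComponent_eq_zero _ _ (by omega), map_zero]

variable [IsAlgClosed k]

theorem reduce (p : Ideal (MvPolynomial (Fin N) k)) [hpp : p.IsPrime] (hp : Hom p) {δ : ℕ}
    (hδ : Algebra.trdeg k (MvPolynomial (Fin N) k ⧸ p) = (δ+1:ℕ)) (h3 : As δ (hilbertFunction k p) 3) :
    ∃ (M : ℕ) (π : MvPolynomial (Fin N) k →ₐ[k] MvPolynomial (Fin M) k) (p' : Ideal (MvPolynomial (Fin M) k)),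
      Module.finrank k (part p 1) + M = N ∧ Function.Surjective π ∧ RingHom.ker π = Ideal.span (part p 1 : Set _) ∧
      (∀ d f, f.IsHomogeneous d → (π f).IsHomogeneous d) ∧
      (∀ d g, g.IsHomogeneous d → ∃ f, f.IsHomogeneous d ∧ π f = g) ∧ p'.IsPrime ∧ Hom p' ∧ p'.comap π = p ∧
      Algebra.trdeg k (MvPolynomial (Fin M) k ⧸ p') = (δ+1:ℕ) ∧ As δ (hilbertFunction k p') 3 ∧ part p' 1 = ⊥ := by
  obtain ⟨M, π, c1, c2, c3, c4, c5⟩ := kill_linear k N (part p 1) inf_le_left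
  have hker : RingHom.ker π ≤ p := by
    rw [c3, Ideal.span_le]
    intro x hx
    exact ((mem_part _ _ _).1 hx).2
  have hcm : (p.map π).comap π = p := by
    rw [Ideal.comap_map_of_surjective' π c2]
    exact sup_eq_left.2 hker
  have hprime : (p.map π).IsPrime := Ideal.map_isPrime_of_surjective c2 hker
  refine ⟨M, π, p.map π, c1, c2, c3, c4, c5, hprime, ?_, hcm, ?_, ?_, ?_⟩
  · intro g hg d
    obtain ⟨f, rfl⟩ := c2 g
    have hf : f ∈ (p.map π).comap π := hg
    rw [hcm] at hf
    rw [comp_map π c4]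
    exact Ideal.mem_map_of_mem _ (hp f hf d)
  · let φ := Ideal.quotientMapₐ (p.map π) π hcm.ge
    have hb : Function.Bijective φ := by
      constructor
      · exact Ideal.quotientMap_injective' (H := hcm.ge) (hcm.le)
      · exact Ideal.quotientMap_surjective (H := hcm.ge) c2
    rw [← hδ]
    exact (AlgEquiv.ofBijective φ hb).symm.trdeg_eq
  · refine as_congr h3 (Eventually.of_forall fun t => ?_)
    rw [← hilb_kill π c4 c5, hcm]
  · rw [eq_bot_iff]
    intro g hg
    obtain ⟨hg1, hg2⟩ := (mem_part _ _ _).1 hg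
    obtain ⟨f, hf, rfl⟩ := c5 1 g hg1
    have hfp : f ∈ (p.map π).comap π := hg2
    rw [hcm] at hfp
    have : f ∈ RingHom.ker π := by
      rw [c3]; exact Ideal.subset_span ((mem_part _ _ _).2 ⟨hf, hfp⟩)
    exact this

theorem excl_three {δ : ℕ} (hN : N = δ + 1) (p : Ideal (MvPolynomial (Fin N) k)) (h3 : As δ (hilbertFunction k p) 3) : False := by
  have := as_le h3 (as_choose δ δ 0) (Eventually.of_forall fun t => by
    have := hilb_add p t
    rw [show N + t - 1 = t + δ by omega, Nat.choose_symm_add] at this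
    simp only [Nat.sub_zero]
    omega)
  norm_num at this

theorem excl_two {δ : ℕ} (hN : N = δ + 2) (p : Ideal (MvPolynomial (Fin N) k)) (h3 : As δ (hilbertFunction k p) 3)
    (g : MvPolynomial (Fin N) k) (hg : g.IsHomogeneous 2) (hgp : g ∈ p) : g = 0 := by
  by_contra hg0
  have := as_le h3 (as_add (as_choose δ δ 0) (as_choose δ δ 1)) (by
    filter_upwards [eventually_ge_atTop 2] with t ht
    refine (hilb_mono ((Ideal.span_singleton_le_iff_mem _).2 hgp) t).trans ?_
    have h1 := hilb_one hg0 hg t ht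
    have hs : ∀ s, (N + s - 1).choose s = (s + δ + 1).choose (δ+1) := by
      intro s
      rw [hN, show δ + 2 + s - 1 = s + (δ + 1) by omega, Nat.choose_symm_add, show s + (δ+1) = s + δ + 1 by omega]
    rw [hs, hs] at h1
    obtain ⟨s, rfl⟩ := Nat.exists_eq_add_of_le' ht
    rw [show s + 2 + δ + 1 = (s + δ + 1 + 1) + 1 by omega, show s + 2 - 2 + δ + 1 = s + δ + 1 by omega,
      Nat.choose_succ_succ' (s + δ + 1 + 1) δ, Nat.choose_succ_succ' (s + δ + 1) δ] at h1
    rw [show s + 2 + δ - 0 = s + δ + 1 + 1 by omega, show s + 2 + δ - 1 = s + δ + 1 by omega]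
    omega)
  norm_num at this

theorem final {n : ℕ} (f : Fin n → MvPolynomial (Fin N) k) (hf : ∀ i, (f i).IsHomogeneous 2)
    (x : MvPolynomial (Fin N) k) (hx : x.IsHomogeneous 1) {M : ℕ} (π : MvPolynomial (Fin N) k →ₐ[k] MvPolynomial (Fin M) k)
    (hker : RingHom.ker π ≤ Ideal.span {x})
    (hlift : ∀ d, ∀ g : MvPolynomial (Fin M) k, g.IsHomogeneous d → ∃ f, f.IsHomogeneous d ∧ π f = g)
    (ℓ : Fin 6 → MvPolynomial (Fin M) k) (hℓ : ∀ i, (ℓ i).IsHomogeneous 1)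
    (h : ∀ i, π (f i) ∈ Submodule.span k (Set.range fun z : Fin 6 × Fin 6 => ℓ z.1 * ℓ z.2)) :
    projDim (MvPolynomial (Fin N) k) (MvPolynomial (Fin N) k ⧸ Ideal.span (Set.range f)) ≤ (n + 7 : ℕ) := by
  choose m hm1 hm2 using fun i => hlift 1 (ℓ i) (hℓ i)
  have key : ∀ i, ∃ l : MvPolynomial (Fin N) k, l.IsHomogeneous 1 ∧
      f i - x * l ∈ Submodule.span k (Set.range fun z : Fin 6 × Fin 6 => m z.1 * m z.2) := by
    intro i
    have h1 : (Set.range fun z : Fin 6 × Fin 6 => ℓ z.1 * ℓ z.2) = π.toLinearMap '' (Set.range fun z : Fin 6 × Fin 6 => m z.1 * m z.2) := by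
      rw [← Set.range_comp]
      congr 1
      funext z
      simp [hm2]
    have h2 := h i
    rw [h1, ← Submodule.map_span] at h2
    obtain ⟨G, hG, hGe⟩ := h2
    have hG2 : G.IsHomogeneous 2 := by
      have : Submodule.span k (Set.range fun z : Fin 6 × Fin 6 => m z.1 * m z.2) ≤ homogeneousSubmodule (Fin N) k 2 := by
        rw [Submodule.span_le]
        rintro _ ⟨z, rfl⟩
        exact (hm1 z.1).mul (hm1 z.2)
      exact this hG
    have h3 : f i - G ∈ RingHom.ker π := by
      rw [RingHom.mem_ker, map_sub, sub_eq_zero]; exact hGe.symm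
    obtain ⟨l, hl⟩ := Ideal.mem_span_singleton'.1 (hker h3)
    refine ⟨homogeneousComponent 1 l, homogeneousComponent_isHomogeneous _ _, ?_⟩
    have h4 := comp_mul x hx (show 1 ≤ 2 by omega) l
    rw [mul_comm, hl, homogeneousComponent_of_mem ((hf i).sub hG2), if_pos rfl] at h4
    have : f i - x * homogeneousComponent 1 l = G := by
      have h5 : f i - G = x * homogeneousComponent 1 l := h4
      rw [← h5]; ring
    rw [this]; exact hG
  choose l hl1 hl2 using key
  let g : Fin 1 ⊕ Fin 6 ⊕ Fin n → MvPolynomial (Fin N) k := Sum.elim (fun _ => x) (Sum.elim m l)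
  let V := Submodule.span k (Set.range g)
  have hV : V ≤ homogeneousSubmodule (Fin N) k 1 := by
    rw [Submodule.span_le]
    rintro _ ⟨(i | i | i), rfl⟩
    · exact hx
    · exact hm1 i
    · exact hl1 i
  have hc : Module.finrank k V ≤ n + 7 := by
    refine (finrank_range_le_card g).trans ?_
    simp; omega
  have hg : ∀ i, g i ∈ Algebra.adjoin k (V : Set (MvPolynomial (Fin N) k)) := fun i =>
    Algebra.subset_adjoin (Submodule.subset_span ⟨i, rfl⟩)
  refine (projDim_le_of_adjoin k N V hV f fun i => ?_).trans (by exact_mod_cast hc)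
  have h1 : Submodule.span k (Set.range fun z : Fin 6 × Fin 6 => m z.1 * m z.2) ≤ Subalgebra.toSubmodule (Algebra.adjoin k (V : Set (MvPolynomial (Fin N) k))) := by
    rw [Submodule.span_le]
    rintro _ ⟨z, rfl⟩
    exact Subalgebra.mul_mem _ (hg (Sum.inr (Sum.inl z.1))) (hg (Sum.inr (Sum.inl z.2)))
  have h2 := Subalgebra.add_mem _ (h1 (hl2 i)) (Subalgebra.mul_mem _ (hg (Sum.inl 0)) (hg (Sum.inr (Sum.inr i))))
  have h3 : f i = (f i - x * l i) + x * l i := by ring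
  rw [h3]
  exact h2

theorem main_thm (n : ℕ)
    (f : Fin n → MvPolynomial (Fin N) k)
    (hf : ∀ i, (f i).IsHomogeneous 2)
    (hht : (Ideal.span (Set.range f)).heightENat = 3)
    (p : Ideal (MvPolynomial (Fin N) k)) [hpp : p.IsPrime] (hIp : Ideal.span (Set.range f) ≤ p)
    (hpht : p.heightENat = 3)
    (hpe : hilbertSamuelMultiplicity k p = 3) :
    projDim (MvPolynomial (Fin N) k) (MvPolynomial (Fin N) k ⧸ Ideal.span (Set.range f)) ≤ (n + 7 : ℕ) := by
  have hp : Hom p := hom_of_height (hom_span _ (by rintro _ ⟨i, rfl⟩; exact ⟨2, hf i⟩)) hIp hht hpht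
  obtain ⟨h, τ, a1, a2, a3⟩ := dimF_mv k N p hpp
  have hh : h = 3 := by
    rw [heightENat_prime, a1] at hpht
    exact_mod_cast hpht
  subst hh
  obtain ⟨δ, rfl, h3⟩ := main_as p hp hpe τ a2
  have hlow := hf_lower_as p hp δ a2 0 _ _ h3 (fun t _ => le_rfl)
  have h1 := hilb_add p 1
  have h2 := (hf_prime p hp δ a2).1
  rw [Nat.choose_one_right] at h1
  have hlow' : hilbertFunction k p 1 - δ - 1 ≤ 2 := by
    have : ((hilbertFunction k p 1 - δ - 1 : ℕ) : ℝ) ≤ 2 := by linarith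
    exact_mod_cast this
  have hfp : ∀ i, f i ∈ p := fun i => hIp (Ideal.subset_span ⟨i, rfl⟩)
  have hno : ∀ a b, a ∈ p → b ∈ p → ¬ (∀ i, f i ∈ Ideal.span {a, b}) := by
    intro a b ha hb hall
    have := not_le_span hht a b (by rw [Ideal.span_le]; rintro _ ⟨i, rfl⟩; exact hall i)
    apply hpp.ne_top
    rw [eq_top_iff, ← this, Ideal.span_le]
    rintro y (rfl | hy)
    · exact ha
    · rw [Set.mem_singleton_iff] at hy; subst hy; exact hb
  obtain ⟨M, π, p', c1, c2, c3, c4, c5, c6, c7, c8, c9, c10, c11⟩ := reduce p hp a2 h3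
  have hfp' : ∀ i, π (f i) ∈ part p' 2 := fun i => by
    refine (mem_part _ _ _).2 ⟨c4 _ _ (hf i), ?_⟩
    have := hfp i
    rw [← c8] at this
    exact this
  obtain ⟨s, hs⟩ : ∃ s, Module.finrank k (part p 1) = s := ⟨_, rfl⟩
  obtain ⟨w, hw⟩ := span_basis (part p 1) hs
  have hwp : ∀ i, w i ∈ part p 1 := fun i => hw ▸ Submodule.subset_span ⟨i, rfl⟩
  have hker : RingHom.ker π ≤ Ideal.span (Set.range w) := by
    rw [c3]; exact ideal_span_le _ w hw
  have hcases : s = 1 ∨ s = 2 ∨ s = 3 := by omega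
  rcases hcases with rfl | rfl | rfl
  · have hr : Set.range w = {w 0} := by rw [Set.range_unique]; rfl
    rw [hr] at hker
    obtain ⟨hx1, hxp⟩ := (mem_part _ _ _).1 (hwp 0)
    have hM : M = δ + 3 := by omega
    obtain ⟨i, hi⟩ : ∃ i, π (f i) ≠ 0 := by
      by_contra hcon
      push Not at hcon
      refine hno (w 0) (w 0) hxp hxp fun i => ?_
      rw [Set.pair_eq_singleton]
      exact hker (hcon i)
    obtain ⟨j, hj⟩ : ∃ j, ∀ κ : k, κ • π (f i) ≠ π (f j) := by
      by_contra hcon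
      push Not at hcon
      refine hno (w 0) (f i) hxp (hfp i) fun j => ?_
      obtain ⟨κ, hκ⟩ := hcon j
      have hm : f j - κ • f i ∈ RingHom.ker π := by
        rw [RingHom.mem_ker, map_sub, map_smul, hκ, sub_self]
      have hm2 := hker hm
      have e : f j = (f j - κ • f i) + C κ * f i := by rw [smul_eq_C_mul]; ring
      rw [e]
      refine Ideal.add_mem _ (Ideal.span_mono (by simp) hm2) (Ideal.mul_mem_left _ _ (Ideal.subset_span (by simp)))
    obtain ⟨ℓ, hℓ, hq⟩ := core hM p' c7 c9 c10 c11 (π (f i)) (π (f j)) (hfp' i) (hfp' j)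
      ((LinearIndependent.pair_iff' hi).2 hj)
    exact final f hf (w 0) hx1 π hker c5 ℓ hℓ fun i => hq _ (hfp' i)
  · exfalso
    have hM : M = δ + 2 := by omega
    refine hno (w 0) (w 1) ((mem_part _ _ _).1 (hwp 0)).2 ((mem_part _ _ _).1 (hwp 1)).2 fun i => ?_
    have h0 : π (f i) = 0 := excl_two hM p' c10 _ ((mem_part _ _ _).1 (hfp' i)).1 ((mem_part _ _ _).1 (hfp' i)).2
    refine Ideal.span_mono ?_ (hker h0)
    rintro _ ⟨j, rfl⟩
    fin_cases j
    · exact Or.inl rfl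
    · exact Or.inr rfl
  · exact (excl_three (show M = δ + 1 by omega) p' c10).elim
end Main
end PD3


/-- If `I` is a homogeneous ideal generated by `n` quadrics in a polynomial ring over an
algebraically closed field, and `I` has an associated prime `p` with `height p = 3` and
Hilbert–Samuel multiplicity `e(S/p) = 3`, then the stated bound on `pd_S(S/I)` holds. -/
theorem pd_le_of_assoc_prime_mult_three (k : Type u) [Field k] [IsAlgClosed k] (N : ℕ) (n : ℕ)
    (f : Fin n → MvPolynomial (Fin N) k)
    (hf : ∀ i, (f i).IsHomogeneous 2)
    (I : Ideal (MvPolynomial (Fin N) k))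
    (hI : I = Ideal.span (Set.range f))
    (hht : I.heightENat = 3)
    (p : Ideal (MvPolynomial (Fin N) k))
    (hp : IsAssociatedPrime p (MvPolynomial (Fin N) k ⧸ I))
    (hpht : p.heightENat = 3)
    (hpe : hilbertSamuelMultiplicity k p = 3) :
    projDim (MvPolynomial (Fin N) k) (MvPolynomial (Fin N) k ⧸ I) ≤ (n + 7 : ℕ) := by
  haveI := hp.isPrime
  subst hI
  have hle : Ideal.span (Set.range f) ≤ p := by
    have := hp.annihilator_le
    rwa [Submodule.annihilator_top, Ideal.annihilator_quotient] at this
  exact PD3.main_thm n f hf hht p hle hpht hpe
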